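/- arXiv:2106.14353 — 5 statements merged into one kernel-verified Lean document; each statement's English description precedes it below -/
import Mathlib

section
/- Let d = 1, δ ∈ (1,2), λ > 0 with δλ ∈ (0,2). Then for every z > 0 the one-dimensional isotropic spectral density of the Dagum function satisfies (1/π) ∫₀^∞ cos(z t) D_{λ,δ}(t) dt = −(1/π) · Im ∫₀^∞ [ 1 − e^{iπδλ/2} r^{δλ} / (1 + e^{iπδ/2} r^{δ})^{λ} ] e^{−z r} dr, where both integrals converge (the left-hand integrand is absolutely integrable since δ > 1). -/
open MeasureTheory Set

/-- The Dagum function with parameters `lam > 0`, `δ > 0`: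
`D_{λ,δ}(r) = 1 - (r^δ/(1+r^δ))^λ`. -/
noncomputable def dagum (lam δ r : ℝ) : ℝ := 1 - (r ^ δ / (1 + r ^ δ)) ^ lam

/-- The Dagum integrand rotated to the positive imaginary axis:
`1 - e^{iπδλ/2} r^{δλ} / (1 + e^{iπδ/2} r^δ)^λ`, principal branch powers. -/
noncomputable def dagumRot (lam δ : ℝ) (r : ℝ) : ℂ :=
  1 - Complex.exp (Complex.I * Real.pi * (δ * lam) / 2) * (r : ℂ) ^ ((δ * lam : ℝ) : ℂ) /
      (1 + Complex.exp (Complex.I * Real.pi * δ / 2) * (r : ℂ) ^ ((δ : ℝ) : ℂ)) ^ ((lam : ℝ) : ℂ)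


lemma dg_normsq (δ : ℝ) (hδ1 : 1 < δ) (hδ2 : δ < 2) (u : ℂ) (h0 : 0 ≤ u.im) (h1 : u.im ≤ Real.pi / 2) :
    Real.sin (δ * (Real.pi/2)) ≤ ‖1 + Complex.exp (-(δ * u))‖ := by
  have hpi := Real.pi_pos
  have hc : Real.cos (δ * (Real.pi/2)) ≤ Real.cos (δ * u.im) := by
    apply Real.cos_le_cos_of_nonneg_of_le_pi <;> nlinarith
  apply le_of_sq_le_sq _ (norm_nonneg _)
  rw [← Complex.normSq_eq_norm_sq, Complex.normSq_apply]
  have hr : (Complex.exp (-(δ * u))).re = Real.exp (-(δ * u.re)) * Real.cos (δ * u.im) := by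
    rw [Complex.exp_re]; simp
  have hi : (Complex.exp (-(δ * u))).im = -(Real.exp (-(δ * u.re)) * Real.sin (δ * u.im)) := by
    rw [Complex.exp_im]; simp
  simp only [Complex.add_re, Complex.add_im, Complex.one_re, Complex.one_im, hr, hi]
  have hp := Real.exp_pos (-(δ * u.re))
  set ρ := Real.exp (-(δ * u.re))
  have e1 := Real.sin_sq_add_cos_sq (δ * u.im)
  have e2 := Real.sin_sq_add_cos_sq (δ * (Real.pi/2))
  have : ρ^2 * (Real.sin (δ * u.im))^2 = ρ^2 * (1 - (Real.cos (δ * u.im))^2) := by rw [← e1]; ring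
  nlinarith [sq_nonneg (ρ + Real.cos (δ * (Real.pi/2))), mul_le_mul_of_nonneg_left hc hp.le]

lemma dg_slit (δ : ℝ) (hδ1 : 1 < δ) (hδ2 : δ < 2) (u : ℂ) (h0 : 0 ≤ u.im) (h1 : u.im ≤ Real.pi / 2) :
    1 + Complex.exp (-(δ * u)) ∈ Complex.slitPlane := by
  have hpi := Real.pi_pos
  have hr : (Complex.exp (-(δ * u))).re = Real.exp (-(δ * u.re)) * Real.cos (δ * u.im) := by
    rw [Complex.exp_re]; simp
  have hi : (Complex.exp (-(δ * u))).im = -(Real.exp (-(δ * u.re)) * Real.sin (δ * u.im)) := by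
    rw [Complex.exp_im]; simp
  have hp := Real.exp_pos (-(δ * u.re))
  rw [Complex.mem_slitPlane_iff]
  rcases h0.eq_or_lt with h | h
  · left
    simp only [Complex.add_re, Complex.one_re, hr, ← h]
    simp; positivity
  · right
    simp only [Complex.add_im, Complex.one_im, hi]
    have : 0 < Real.sin (δ * u.im) := Real.sin_pos_of_pos_of_lt_pi (by positivity) (by nlinarith)
    have := mul_pos hp this
    linarith

noncomputable def dgK (lam δ : ℝ) (u : ℂ) : ℂ := 1 - (1 + Complex.exp (-(δ * u))) ^ (-(lam : ℂ))

lemma dg_K_bdd (δ lam : ℝ) (hδ1 : 1 < δ) (hδ2 : δ < 2) (hlam : 0 < lam) :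
    ∃ C, 0 < C ∧ ∀ u : ℂ, 0 ≤ u.im → u.im ≤ Real.pi / 2 → ‖dgK lam δ u‖ ≤ C := by
  have hpi := Real.pi_pos
  have hs : 0 < Real.sin (δ * (Real.pi/2)) := Real.sin_pos_of_pos_of_lt_pi (by positivity) (by nlinarith)
  refine ⟨1 + (Real.sin (δ * (Real.pi/2))) ^ (-lam), by positivity, fun u h0 h1 => ?_⟩
  unfold dgK
  refine (norm_sub_le _ _).trans ?_
  rw [norm_one]
  gcongr
  have : (-(lam : ℂ)) = ((-lam : ℝ) : ℂ) := by push_cast; rfl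
  rw [this, Complex.norm_cpow_real]
  exact Real.rpow_le_rpow_of_nonpos hs (dg_normsq δ hδ1 hδ2 u h0 h1) (by linarith)

lemma dg_K_decay (δ lam : ℝ) (hδ1 : 1 < δ) (hδ2 : δ < 2) (hlam : 0 < lam) :
    ∃ C, 0 < C ∧ ∀ u : ℂ, 0 ≤ u.im → u.im ≤ Real.pi / 2 → ‖dgK lam δ u‖ ≤ C * Real.exp (-(δ * u.re)) := by
  obtain ⟨C, hC, hb⟩ := dg_K_bdd δ lam hδ1 hδ2 hlam
  have hd : DifferentiableAt ℂ (fun v : ℂ => (1 + v) ^ (-(lam : ℂ))) 0 := by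
    apply DifferentiableAt.cpow_const
    · fun_prop
    · simp
  have hO := hd.isBigO_sub
  obtain ⟨M, hM, hO⟩ := hO.exists_pos
  rw [Asymptotics.isBigOWith_iff, Metric.eventually_nhds_iff] at hO
  obtain ⟨ε, hε, hO⟩ := hO
  refine ⟨M + C / ε, by positivity, fun u h0 h1 => ?_⟩
  have hn : ‖Complex.exp (-(δ * u))‖ = Real.exp (-(δ * u.re)) := by
    rw [Complex.norm_exp]; simp
  have hp := Real.exp_pos (-(δ * u.re))
  by_cases h : Real.exp (-(δ * u.re)) < ε
  · have := @hO (Complex.exp (-(δ * u))) (by simpa [hn] using h)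
    rw [sub_zero, hn, norm_sub_rev] at this
    simp only [add_zero, Complex.one_cpow] at this
    refine this.trans ?_
    gcongr
    have : 0 < C / ε := by positivity
    linarith
  · push Not at h
    refine (hb u h0 h1).trans ?_
    have : C = C / ε * ε := by field_simp
    rw [add_mul]
    have : C / ε * ε ≤ C / ε * Real.exp (-(δ * u.re)) := by gcongr
    have : 0 < M * Real.exp (-(δ * u.re)) := by positivity
    linarith

noncomputable def dgG (lam δ z : ℝ) (u : ℂ) : ℂ :=
  dgK lam δ u * Complex.exp (Complex.I * z * Complex.exp u) * Complex.exp u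

lemma dg_G_diff (δ lam z : ℝ) (hδ1 : 1 < δ) (hδ2 : δ < 2) (u : ℂ) (h0 : 0 ≤ u.im)
    (h1 : u.im ≤ Real.pi / 2) : DifferentiableAt ℂ (dgG lam δ z) u := by
  unfold dgG dgK
  have : DifferentiableAt ℂ (fun u : ℂ => (1 + Complex.exp (-(δ * u))) ^ (-(lam : ℂ))) u := by
    apply DifferentiableAt.cpow_const
    · fun_prop
    · exact dg_slit δ hδ1 hδ2 u h0 h1
  fun_prop

lemma dg_G_bound (δ lam z : ℝ) (hδ1 : 1 < δ) (hδ2 : δ < 2) (hlam : 0 < lam) (hz : 0 < z) :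
    ∃ C, 0 < C ∧ ∀ u : ℂ, 0 ≤ u.im → u.im ≤ Real.pi / 2 →
      ‖dgG lam δ z u‖ ≤ C * Real.exp (u.re) ∧ ‖dgG lam δ z u‖ ≤ C * Real.exp (-(δ - 1) * u.re) := by
  obtain ⟨C, hC, hb⟩ := dg_K_bdd δ lam hδ1 hδ2 hlam
  obtain ⟨D, hD, hd⟩ := dg_K_decay δ lam hδ1 hδ2 hlam
  refine ⟨C + D, by positivity, fun u h0 h1 => ?_⟩
  have hpi := Real.pi_pos
  have key : ‖dgG lam δ z u‖ ≤ ‖dgK lam δ u‖ * Real.exp u.re := by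
    unfold dgG
    rw [norm_mul, norm_mul, Complex.norm_exp u, Complex.norm_exp]
    have : Real.exp ((Complex.I * z * Complex.exp u).re) ≤ 1 := by
      rw [Real.exp_le_one_iff]
      simp [Complex.exp_im]
      have : 0 ≤ Real.sin u.im := Real.sin_nonneg_of_nonneg_of_le_pi h0 (by linarith)
      positivity
    gcongr
    exact mul_le_of_le_one_right (norm_nonneg _) this
  constructor
  · refine key.trans ?_
    gcongr
    linarith [hb u h0 h1]
  · refine key.trans ?_
    have : -(δ - 1) * u.re = -(δ * u.re) + u.re := by ring
    rw [this, Real.exp_add, ← mul_assoc]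
    gcongr
    refine (hd u h0 h1).trans ?_
    gcongr
    linarith

lemma dg_G_int (δ lam z : ℝ) (hδ1 : 1 < δ) (hδ2 : δ < 2) (hlam : 0 < lam) (hz : 0 < z)
    (θ : ℝ) (h0 : 0 ≤ θ) (h1 : θ ≤ Real.pi / 2) :
    Integrable (fun x : ℝ => dgG lam δ z (x + θ * Complex.I)) := by
  obtain ⟨C, hC, hb⟩ := dg_G_bound δ lam z hδ1 hδ2 hlam hz
  have hcont : Continuous (fun x : ℝ => dgG lam δ z (x + θ * Complex.I)) := by
    rw [continuous_iff_continuousAt]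
    intro x
    have : ContinuousAt (dgG lam δ z) (x + θ * Complex.I) :=
      (dg_G_diff δ lam z hδ1 hδ2 _ (by simpa using h0) (by simpa using h1)).continuousAt
    exact ContinuousAt.comp (f := fun x : ℝ => (x + θ * Complex.I : ℂ)) this (by fun_prop)
  rw [← integrableOn_univ, ← Iic_union_Ioi (a := (0:ℝ))]
  apply IntegrableOn.union
  · have : IntegrableOn (fun x : ℝ => C * Real.exp x) (Iic 0) :=
      (integrableOn_exp_Iic 0).const_mul C
    refine Integrable.mono' this hcont.aestronglyMeasurable (ae_of_all _ fun x => ?_)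
    simpa using (hb (x + θ * Complex.I) (by simpa using h0) (by simpa using h1)).1
  · have : IntegrableOn (fun x : ℝ => C * Real.exp (-(δ-1) * x)) (Ioi 0) :=
      (integrableOn_exp_mul_Ioi (by linarith) 0).const_mul C
    refine Integrable.mono' this hcont.aestronglyMeasurable (ae_of_all _ fun x => ?_)
    simpa using (hb (x + θ * Complex.I) (by simpa using h0) (by simpa using h1)).2

open Filter Topology in
lemma dg_shift (δ lam z : ℝ) (hδ1 : 1 < δ) (hδ2 : δ < 2) (hlam : 0 < lam) (hz : 0 < z) :
    ∫ x : ℝ, dgG lam δ z x = ∫ x : ℝ, dgG lam δ z (x + (Real.pi / 2 : ℝ) * Complex.I) := by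
  have hpi := Real.pi_pos
  obtain ⟨C, hC, hb⟩ := dg_G_bound δ lam z hδ1 hδ2 hlam hz
  have i0 := dg_G_int δ lam z hδ1 hδ2 hlam hz 0 le_rfl (by positivity)
  have i1 := dg_G_int δ lam z hδ1 hδ2 hlam hz (Real.pi/2) (by positivity) le_rfl
  have t0 := intervalIntegral_tendsto_integral i0 tendsto_neg_atTop_atBot tendsto_id
  have t1 := intervalIntegral_tendsto_integral i1 tendsto_neg_atTop_atBot tendsto_id
  have hexp : ∀ a : ℝ, 0 < a → Tendsto (fun T : ℝ => C * Real.exp (-a * T) * |Real.pi/2 - 0|) atTop (𝓝 0) := by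
    intro a ha
    have : Tendsto (fun T : ℝ => Real.exp (-a * T)) atTop (𝓝 0) := by
      apply Real.tendsto_exp_atBot.comp
      exact tendsto_id.const_mul_atTop_of_neg (by linarith)
    simpa using (this.const_mul C).mul_const (|Real.pi/2 - 0|)
  have v0 : Tendsto (fun T : ℝ => ∫ y : ℝ in (0:ℝ)..(Real.pi/2), dgG lam δ z ((T:ℝ) + y * Complex.I)) atTop (𝓝 0) := by
    refine squeeze_zero_norm (fun T => ?_) (hexp (δ - 1) (by linarith))
    apply intervalIntegral.norm_integral_le_of_norm_le_const
    intro y hy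
    rw [uIoc_of_le (by positivity)] at hy
    simpa using (hb (T + y * Complex.I) (by simpa using hy.1.le) (by simpa using hy.2)).2
  have v1 : Tendsto (fun T : ℝ => ∫ y : ℝ in (0:ℝ)..(Real.pi/2), dgG lam δ z ((-T:ℝ) + y * Complex.I)) atTop (𝓝 0) := by
    refine squeeze_zero_norm (fun T => ?_) (hexp 1 (by linarith))
    apply intervalIntegral.norm_integral_le_of_norm_le_const
    intro y hy
    rw [uIoc_of_le (by positivity)] at hy
    simpa using (hb ((-T:ℝ) + y * Complex.I) (by simpa using hy.1.le) (by simpa using hy.2)).1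
  have hrect : ∀ T : ℝ, (∫ x : ℝ in (-T)..T, dgG lam δ z (x + (0:ℝ) * Complex.I)) -
      (∫ x : ℝ in (-T)..T, dgG lam δ z (x + (Real.pi/2:ℝ) * Complex.I)) +
      Complex.I • (∫ y : ℝ in (0:ℝ)..(Real.pi/2), dgG lam δ z ((T:ℝ) + y * Complex.I)) -
      Complex.I • (∫ y : ℝ in (0:ℝ)..(Real.pi/2), dgG lam δ z ((-T:ℝ) + y * Complex.I)) = 0 := by
    intro T
    have := Complex.integral_boundary_rect_eq_zero_of_differentiableOn (dgG lam δ z)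
      ⟨-T, 0⟩ ⟨T, Real.pi/2⟩ ?_
    · exact this
    · intro u hu
      rw [Complex.mem_reProdIm] at hu
      have := hu.2
      simp only [uIcc_of_le (show (0:ℝ) ≤ Real.pi/2 by positivity)] at this
      exact (dg_G_diff δ lam z hδ1 hδ2 u this.1 this.2).differentiableWithinAt
  have lim := ((t0.sub t1).add (v0.const_smul Complex.I)).sub (v1.const_smul Complex.I)
  have := tendsto_nhds_unique (lim.congr hrect) tendsto_const_nhds
  simp only [smul_zero, add_zero, sub_zero] at this
  rw [sub_eq_zero] at this
  simpa using this

lemma dg_cov (f : ℝ → ℂ) : (IntegrableOn f (Ioi 0) ↔ Integrable (fun x : ℝ => f (Real.exp x) * Real.exp x))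
    ∧ ∫ r in Ioi 0, f r = ∫ x : ℝ, f (Real.exp x) * Real.exp x := by
  have e : Ioi (0:ℝ) = Real.exp '' univ := by rw [image_univ, Real.range_exp]
  have hd : ∀ x ∈ (univ : Set ℝ), HasDerivWithinAt Real.exp (Real.exp x) univ x :=
    fun x _ => (Real.hasDerivAt_exp x).hasDerivWithinAt
  constructor
  · rw [e, integrableOn_image_iff_integrableOn_abs_deriv_smul MeasurableSet.univ hd Real.exp_injective.injOn,
      integrableOn_univ]
    simp [mul_comm]
  · rw [e, integral_image_eq_integral_abs_deriv_smul MeasurableSet.univ hd Real.exp_injective.injOn]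
    simp [mul_comm]

lemma dg_id0 (δ lam x : ℝ) : ((dagum lam δ (Real.exp x) : ℝ) : ℂ) = dgK lam δ x := by
  unfold dagum dgK
  have hp : 0 < 1 + Real.exp (-(δ * x)) := by positivity
  have h1 : (Real.exp x) ^ δ = Real.exp (δ * x) := by rw [← Real.exp_mul, mul_comm]
  have h2 : Real.exp (δ * x) / (1 + Real.exp (δ * x)) = (1 + Real.exp (-(δ * x)))⁻¹ := by
    rw [Real.exp_neg]
    have := Real.exp_pos (δ * x)
    field_simp
    ring
  rw [h1, h2, Real.inv_rpow hp.le, ← Real.rpow_neg hp.le, Complex.ofReal_sub,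
    Complex.ofReal_cpow hp.le]
  push_cast
  rfl

lemma dg_exp_cpow (x a : ℝ) : ((Real.exp x : ℝ) : ℂ) ^ (a : ℂ) = Complex.exp (a * x) := by
  rw [← Complex.ofReal_cpow (Real.exp_pos x).le, ← Real.exp_mul]
  push_cast
  rw [mul_comm]

lemma dg_id1 (δ lam x : ℝ) (hδ1 : 1 < δ) (hδ2 : δ < 2) :
    dagumRot lam δ (Real.exp x) = dgK lam δ (x + (Real.pi / 2 : ℝ) * Complex.I) := by
  have hpi := Real.pi_pos
  unfold dagumRot dgK
  rw [dg_exp_cpow, dg_exp_cpow, ← Complex.exp_add, ← Complex.exp_add]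
  set u : ℂ := x + (Real.pi / 2 : ℝ) * Complex.I with hu
  have hure : u.re = x := by simp [hu]
  have huim : u.im = Real.pi / 2 := by simp [hu]
  have hslit := dg_slit δ hδ1 hδ2 u (by rw [huim]; positivity) huim.le
  have e1 : Complex.I * Real.pi * (δ * lam) / 2 + ((δ * lam : ℝ) : ℂ) * x = lam * (δ * u) := by
    rw [hu]; push_cast; ring
  have e2 : Complex.I * Real.pi * δ / 2 + (δ : ℂ) * x = δ * u := by
    rw [hu]; push_cast; ring
  rw [e1, e2]
  set v : ℂ := 1 + Complex.exp (-(δ * u)) with hv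
  have hv0 : v ≠ 0 := Complex.slitPlane_ne_zero hslit
  have e3 : 1 + Complex.exp (δ * u) = Complex.exp (δ * u) * v := by
    rw [hv, mul_add (Complex.exp _), ← Complex.exp_add, add_neg_cancel, Complex.exp_zero, mul_one, add_comm]
  have him : ((δ : ℂ) * u).im = δ * (Real.pi / 2) := by simp [huim]
  have hlogexp : Complex.log (Complex.exp (δ * u)) = δ * u := by
    apply Complex.log_exp <;> rw [him] <;> nlinarith
  have harg : (Complex.exp (δ * u)).arg = δ * (Real.pi / 2) := by
    rw [← Complex.log_im, hlogexp, him]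
  have hvim : v.im < 0 := by
    rw [hv, Complex.add_im, Complex.exp_im]
    simp only [Complex.neg_im, Complex.one_im, him, Real.sin_neg]
    have : 0 < Real.sin (δ * (Real.pi / 2)) :=
      Real.sin_pos_of_pos_of_lt_pi (by positivity) (by nlinarith)
    have := mul_pos (Real.exp_pos (-((δ : ℂ) * u)).re) this
    linarith
  have hvarg : v.arg < 0 := Complex.arg_neg_iff.2 hvim
  have hvarg2 := Complex.neg_pi_lt_arg v
  have hlog : Complex.log (Complex.exp (δ * u) * v) = δ * u + Complex.log v := by
    rw [Complex.log_mul (Complex.exp_ne_zero _) hv0, hlogexp]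
    rw [harg]
    constructor <;> nlinarith
  rw [e3, Complex.cpow_def_of_ne_zero (mul_ne_zero (Complex.exp_ne_zero _) hv0),
    Complex.cpow_def_of_ne_zero hv0, hlog, ← Complex.exp_sub]
  congr 2
  ring

/-- For `d = 1`, `δ ∈ (1,2)`, `λ > 0`, `δλ ∈ (0,2)` and `z > 0`, the one-dimensional
Dagum isotropic spectral density satisfies
`(1/π) ∫₀^∞ cos(zt) D_{λ,δ}(t) dt
  = -(1/π) Im ∫₀^∞ (1 - e^{iπδλ/2} r^{δλ}/(1+e^{iπδ/2} r^δ)^λ) e^{-zr} dr`,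
both integrals being convergent. -/
theorem dagum_spectral_density_dim_one (δ lam : ℝ) (hδ1 : 1 < δ) (hδ2 : δ < 2)
    (hlam : 0 < lam) (hdl0 : 0 < δ * lam) (hdl2 : δ * lam < 2) (z : ℝ) (hz : 0 < z) :
    IntegrableOn (fun t : ℝ => Real.cos (z * t) * dagum lam δ t) (Ioi 0) ∧
    IntegrableOn (fun r : ℝ => dagumRot lam δ r * Complex.exp (-(z * r))) (Ioi 0) ∧
    (1 / Real.pi) * ∫ t in Ioi (0 : ℝ), Real.cos (z * t) * dagum lam δ t
      = -(1 / Real.pi) *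
          (∫ r in Ioi (0 : ℝ), dagumRot lam δ r * Complex.exp (-(z * r))).im := by
  have hpi := Real.pi_pos
  have i0 := dg_G_int δ lam z hδ1 hδ2 hlam hz 0 le_rfl (by positivity)
  have i1 := dg_G_int δ lam z hδ1 hδ2 hlam hz (Real.pi/2) (by positivity) le_rfl
  have hs := dg_shift δ lam z hδ1 hδ2 hlam hz
  obtain ⟨c0, c0'⟩ := dg_cov (fun t : ℝ => (dagum lam δ t : ℂ) * Complex.exp (Complex.I * z * t))
  obtain ⟨c1, c1'⟩ := dg_cov (fun r : ℝ => dagumRot lam δ r * Complex.exp (-(z * r)))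
  have f0 : ∀ x : ℝ, (dagum lam δ (Real.exp x) : ℂ) * Complex.exp (Complex.I * z * (Real.exp x : ℝ))
      * (Real.exp x : ℝ) = dgG lam δ z x := by
    intro x
    rw [dg_id0, dgG, Complex.ofReal_exp]
  have f1 : ∀ x : ℝ, dagumRot lam δ (Real.exp x) * Complex.exp (-(z * (Real.exp x : ℝ)))
      * (Real.exp x : ℝ) = -Complex.I * dgG lam δ z (x + (Real.pi / 2 : ℝ) * Complex.I) := by
    intro x
    have he : Complex.exp (x + (Real.pi / 2 : ℝ) * Complex.I) = Complex.I * (Real.exp x : ℝ) := by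
      rw [Complex.exp_add, Complex.ofReal_exp]
      push_cast
      rw [Complex.exp_pi_div_two_mul_I, mul_comm]
    have h2 : Complex.I * z * (Complex.I * (Real.exp x : ℝ)) = -(z * (Real.exp x : ℝ)) := by
      linear_combination (z * (Real.exp x : ℝ) : ℂ) * Complex.I_mul_I
    rw [dg_id1 δ lam x hδ1 hδ2, dgG, he, h2]
    linear_combination ((dgK lam δ (x + (Real.pi / 2 : ℝ) * Complex.I) *
      Complex.exp (-(z * (Real.exp x : ℝ))) * (Real.exp x : ℝ)) : ℂ) * Complex.I_mul_I
  simp only [f0] at c0 c0'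
  simp only [f1] at c1 c1'
  have I0 := c0.2 (by simpa using i0)
  have I1 := c1.2 (i1.const_mul _)
  have hre : ∀ t : ℝ, RCLike.re ((dagum lam δ t : ℂ) * Complex.exp (Complex.I * z * t))
      = Real.cos (z * t) * dagum lam δ t := by
    intro t
    simp [Complex.exp_re, mul_comm]
  refine ⟨?_, I1, ?_⟩
  · have := I0.re
    simp only [hre] at this
    exact this
  · have hR := integral_re I0
    simp only [hre] at hR
    rw [hR, c0', c1', integral_const_mul, ← hs]
    simp
end

section
/- Let δ ∈ (0,2), λ > 0 with δλ ∈ (0,2), and let z > 0. Then the improper integral lim_{T→∞} ∫₀^T e^{i z t} (1 − t^{δλ}/(1+t^{δ})^{λ}) dt exists and equals i ∫₀^∞ e^{−z r} ( 1 − e^{iπδλ/2} r^{δλ} / (1 + e^{iπδ/2} r^{δ})^{λ} ) dr (rotation of the contour of integration from the positive real axis to the positive imaginary axis). -/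
open MeasureTheory Set Filter intervalIntegral

/-- The Dagum function continued to the closed first quadrant. -/
noncomputable def dagF (lam δ : ℝ) (w : ℂ) : ℂ :=
  1 - w ^ ((δ * lam : ℝ) : ℂ) / (1 + w ^ ((δ : ℝ) : ℂ)) ^ ((lam : ℝ) : ℂ)

/-- The closed first quadrant. -/
def quad : Set ℂ := {w | 0 ≤ w.re ∧ 0 ≤ w.im}

lemma quad_log {δ : ℝ} (hδ0 : 0 < δ) (hδ2 : δ < 2) {w : ℂ} (hw : w ∈ quad) :
    0 ≤ (Complex.log w * (δ : ℂ)).im ∧ (Complex.log w * (δ : ℂ)).im < Real.pi := by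
  have h1 : 0 ≤ w.arg := Complex.arg_nonneg_iff.2 hw.2
  have h2 : w.arg ≤ Real.pi / 2 := Complex.arg_le_pi_div_two_iff.2 (Or.inl hw.1)
  have h3 : (Complex.log w * (δ : ℂ)).im = w.arg * δ := by
    simp [Complex.mul_im, Complex.log_im]
  rw [h3]
  refine ⟨by positivity, ?_⟩
  have := Real.pi_pos
  nlinarith

lemma one_add_exp_slit {s : ℂ} (h0 : 0 ≤ s.im) (h1 : s.im < Real.pi) :
    1 + Complex.exp s ∈ Complex.slitPlane := by
  rw [Complex.mem_slitPlane_iff]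
  rcases h0.eq_or_lt with h | h
  · left
    simp only [Complex.add_re, Complex.one_re, Complex.exp_re, ← h, Real.cos_zero]
    positivity
  · right
    simp only [Complex.add_im, Complex.one_im, Complex.exp_im]
    have := Real.sin_pos_of_pos_of_lt_pi h h1
    have := Real.exp_pos s.re
    positivity

lemma log_one_add_exp {s : ℂ} (h0 : 0 ≤ s.im) (h1 : s.im < Real.pi) :
    Complex.log (1 + Complex.exp s) = s + Complex.log (1 + Complex.exp (-s)) := by
  have hne : 1 + Complex.exp s ≠ 0 := Complex.slitPlane_ne_zero (one_add_exp_slit h0 h1)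
  have hmul : 1 + Complex.exp s = Complex.exp s * (1 + Complex.exp (-s)) := by
    rw [mul_add, ← Complex.exp_add]; simp [add_comm]
  have hne2 : 1 + Complex.exp (-s) ≠ 0 := by
    intro h; apply hne; rw [hmul, h, mul_zero]
  have hlog : Complex.log (Complex.exp s) = s :=
    Complex.log_exp (by linarith [Real.pi_pos]) h1.le
  have harg : (Complex.exp s).arg = s.im := by
    rw [← Complex.log_im, hlog]
  have harg2 : (1 + Complex.exp (-s)).arg ≤ 0 := by
    rcases h0.eq_or_lt with h | h
    · refine le_of_eq (Complex.arg_eq_zero_iff.2 ⟨?_, ?_⟩)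
      · simp only [Complex.add_re, Complex.one_re, Complex.exp_re, Complex.neg_im, ← h, neg_zero, Real.cos_zero]
        positivity
      · simp [Complex.exp_im, ← h]
    · refine (Complex.arg_neg_iff.2 ?_).le
      simp only [Complex.add_im, Complex.one_im, Complex.exp_im, Complex.neg_im, Real.sin_neg]
      have := mul_pos (Real.exp_pos (-s).re) (Real.sin_pos_of_pos_of_lt_pi h h1)
      linarith
  rw [hmul, Complex.log_mul (Complex.exp_ne_zero _) hne2, hlog]
  rw [harg]
  constructor
  · linarith [Complex.neg_pi_lt_arg (1 + Complex.exp (-s))]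
  · linarith

lemma base_slit {δ : ℝ} (hδ0 : 0 < δ) (hδ2 : δ < 2) {w : ℂ} (hw : w ∈ quad) :
    1 + w ^ (δ : ℂ) ∈ Complex.slitPlane := by
  by_cases h : w = 0
  · subst h
    rw [Complex.zero_cpow (by exact_mod_cast hδ0.ne')]
    simp
  · rw [Complex.cpow_def_of_ne_zero h]
    exact one_add_exp_slit (quad_log hδ0 hδ2 hw).1 (quad_log hδ0 hδ2 hw).2

lemma dagF_cont {δ lam : ℝ} (hδ0 : 0 < δ) (hδ2 : δ < 2) (hlam : 0 < lam) :
    ContinuousOn (dagF lam δ) quad := by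
  intro w hw
  apply ContinuousAt.continuousWithinAt
  have hs := base_slit hδ0 hδ2 hw
  have c1 : ContinuousAt (fun w : ℂ => w ^ ((δ * lam : ℝ) : ℂ)) w :=
    Complex.continuousAt_cpow_const_of_re_pos (Or.inl hw.1) (by simpa using mul_pos hδ0 hlam)
  have c2 : ContinuousAt (fun w : ℂ => w ^ ((δ : ℝ) : ℂ)) w :=
    Complex.continuousAt_cpow_const_of_re_pos (Or.inl hw.1) (by simpa using hδ0)
  refine continuousAt_const.sub (c1.div ((continuousAt_const.add c2).cpow continuousAt_const hs) ?_)
  rw [Complex.cpow_def_of_ne_zero (Complex.slitPlane_ne_zero hs)]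
  exact Complex.exp_ne_zero _

lemma dagF_diff {δ lam : ℝ} (hδ0 : 0 < δ) (hδ2 : δ < 2) {w : ℂ} (hw : w ∈ quad) (hre : 0 < w.re) :
    DifferentiableAt ℂ (dagF lam δ) w := by
  have hs := base_slit hδ0 hδ2 hw
  have hw' : w ∈ Complex.slitPlane := Or.inl hre
  have c1 : DifferentiableAt ℂ (fun w : ℂ => w ^ ((δ * lam : ℝ) : ℂ)) w :=
    differentiableAt_id.cpow (differentiableAt_const _) hw'
  have c2 : DifferentiableAt ℂ (fun w : ℂ => w ^ ((δ : ℝ) : ℂ)) w :=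
    differentiableAt_id.cpow (differentiableAt_const _) hw'
  refine (differentiableAt_const _).sub (c1.div
    (((differentiableAt_const _).add c2).cpow (differentiableAt_const _) hs) ?_)
  rw [Complex.cpow_def_of_ne_zero (Complex.slitPlane_ne_zero hs)]
  exact Complex.exp_ne_zero _

lemma dagF_eq {δ lam : ℝ} (hδ0 : 0 < δ) (hδ2 : δ < 2) {w : ℂ} (hw : w ∈ quad) (h0 : w ≠ 0) :
    dagF lam δ w = 1 - (1 + w ^ (-(δ : ℂ))) ^ (-(lam : ℂ)) := by
  obtain ⟨h1, h2⟩ := quad_log hδ0 hδ2 hw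
  have hs := one_add_exp_slit h1 h2
  have hl := log_one_add_exp h1 h2
  have hne : 1 + Complex.exp (-(Complex.log w * (δ : ℂ))) ≠ 0 := by
    intro h
    apply Complex.slitPlane_ne_zero hs
    have : Complex.exp (Complex.log w * δ) * (1 + Complex.exp (-(Complex.log w * (δ : ℂ)))) = 0 := by
      rw [h, mul_zero]
    rw [mul_add, ← Complex.exp_add] at this
    simpa [add_comm] using this
  unfold dagF
  rw [Complex.cpow_def_of_ne_zero h0, Complex.cpow_def_of_ne_zero h0 (δ : ℂ),
    Complex.cpow_def_of_ne_zero h0 (-(δ : ℂ)), Complex.cpow_def_of_ne_zero (Complex.slitPlane_ne_zero hs),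
    mul_neg, Complex.cpow_def_of_ne_zero hne, hl, ← Complex.exp_sub]
  congr 2
  push_cast
  ring

lemma dagF_small {δ lam : ℝ} (hδ0 : 0 < δ) (hδ2 : δ < 2) {ε : ℝ} (hε : 0 < ε) :
    ∃ R : ℝ, 0 < R ∧ ∀ w ∈ quad, R ≤ ‖w‖ → ‖dagF lam δ w‖ ≤ ε := by
  have hc : ContinuousAt (fun v : ℂ => 1 - (1 + v) ^ (-(lam : ℂ))) 0 := by
    refine continuousAt_const.sub ((continuousAt_const.add continuousAt_id).cpow continuousAt_const ?_)
    simp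
  obtain ⟨η, hη, hη'⟩ := Metric.continuousAt_iff.1 hc ε hε
  have ht : Tendsto (fun x : ℝ => x ^ (-δ)) atTop (nhds 0) := tendsto_rpow_neg_atTop hδ0
  obtain ⟨R, hR⟩ := eventually_atTop.1 (ht.eventually (gt_mem_nhds hη))
  refine ⟨max R 1, by positivity, fun w hw hRw => ?_⟩
  have hpos : 0 < ‖w‖ := lt_of_lt_of_le one_pos ((le_max_right _ _).trans hRw)
  rw [dagF_eq hδ0 hδ2 hw (norm_pos_iff.1 hpos)]
  have h1 : ‖w ^ (-(δ : ℂ))‖ = ‖w‖ ^ (-δ) := by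
    have := Complex.norm_cpow_real w (-δ)
    rwa [Complex.ofReal_neg] at this
  have h2 := hη' (x := w ^ (-(δ : ℂ))) (by
    rw [dist_zero_right, h1]; exact hR _ ((le_max_left _ _).trans hRw))
  simp only [add_zero, Complex.one_cpow, sub_self, dist_zero_right] at h2
  exact h2.le

lemma dagF_real {δ lam t : ℝ} (ht : 0 ≤ t) : dagF lam δ (t : ℂ) = (dagum lam δ t : ℂ) := by
  have h := Real.rpow_nonneg ht δ
  unfold dagF dagum
  rw [Real.div_rpow h (by positivity), ← Real.rpow_mul ht]
  rw [← Complex.ofReal_cpow ht, ← Complex.ofReal_cpow ht, Complex.ofReal_sub, Complex.ofReal_div,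
    Complex.ofReal_cpow (x := 1 + t ^ δ) (by positivity)]
  simp

lemma I_cpow {a r : ℝ} (ha : 0 < a) (hr : 0 ≤ r) :
    ((r : ℂ) * Complex.I) ^ (a : ℂ) = Complex.exp (Complex.I * Real.pi * a / 2) * (r : ℂ) ^ (a : ℂ) := by
  have ha' : (a : ℂ) ≠ 0 := by exact_mod_cast ha.ne'
  rcases hr.eq_or_lt with h | h
  · subst h; simp [Complex.zero_cpow ha']
  · have hr' : (r : ℂ) ≠ 0 := by exact_mod_cast h.ne'
    rw [Complex.cpow_def_of_ne_zero (mul_ne_zero hr' Complex.I_ne_zero),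
      Complex.cpow_def_of_ne_zero hr', Complex.log_ofReal_mul h Complex.I_ne_zero, Complex.log_I,
      ← Complex.exp_add, Complex.ofReal_log hr]
    congr 1
    ring

lemma dagF_imag {δ lam r : ℝ} (hδ0 : 0 < δ) (hlam : 0 < lam) (hr : 0 ≤ r) :
    dagF lam δ ((r : ℂ) * Complex.I) = dagumRot lam δ r := by
  unfold dagF dagumRot
  rw [I_cpow (mul_pos hδ0 hlam) hr, I_cpow hδ0 hr]
  push_cast
  rfl

lemma norm_expz (z x y : ℝ) :
    ‖Complex.exp (Complex.I * z * (x + y * Complex.I))‖ = Real.exp (-z * y) := by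
  rw [Complex.norm_exp]
  congr 1
  simp [Complex.mul_re, Complex.mul_im]

lemma quad_mk {x y : ℝ} (hx : 0 ≤ x) (hy : 0 ≤ y) : (x : ℂ) + y * Complex.I ∈ quad := by
  constructor <;> simpa

/-- Rotation of the contour from the positive real axis to the positive imaginary axis:
for `δ ∈ (0,2)`, `λ > 0` with `δλ ∈ (0,2)` and `z > 0`, the improper integral
`lim_{T→∞} ∫₀^T e^{izt} (1 - t^{δλ}/(1+t^δ)^λ) dt` exists and equals
`i ∫₀^∞ e^{-zr} (1 - e^{iπδλ/2} r^{δλ}/(1+e^{iπδ/2} r^δ)^λ) dr`. -/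
theorem dagum_contour_rotation (δ lam : ℝ) (hδ0 : 0 < δ) (hδ2 : δ < 2)
    (hlam : 0 < lam) (hdl0 : 0 < δ * lam) (hdl2 : δ * lam < 2) (z : ℝ) (hz : 0 < z) :
    IntegrableOn (fun r : ℝ => Complex.exp (-(z * r)) * dagumRot lam δ r) (Ioi 0) ∧
    Tendsto (fun T : ℝ =>
        ∫ t in (0 : ℝ)..T, Complex.exp (Complex.I * z * t) * (dagum lam δ t : ℂ))
      atTop
      (nhds (Complex.I * ∫ r in Ioi (0 : ℝ), Complex.exp (-(z * r)) * dagumRot lam δ r)) := by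
  have hcontF := dagF_cont hδ0 hδ2 hlam
  have hnormexp : ∀ r : ℝ, ‖Complex.exp (-(z * r))‖ = Real.exp (-z * r) := by
    intro r
    rw [Complex.norm_exp]; simp
  have hint : IntegrableOn (fun r : ℝ => Complex.exp (-(z * r)) * dagumRot lam δ r) (Ioi 0) := by
    refine IntegrableOn.mono_set ?_ Ioi_subset_Ici_self
    refine LocallyIntegrableOn.integrableOn_of_isBigO_atTop (g := fun r => Real.exp (-z * r))
      (ContinuousOn.locallyIntegrableOn ?_ measurableSet_Ici) ?_
      ⟨Ioi 0, Ioi_mem_atTop 0, exp_neg_integrableOn_Ioi 0 hz⟩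
    · have h1 : ContinuousOn (fun r : ℝ => dagF lam δ ((r : ℂ) * Complex.I)) (Ici 0) := by
        refine hcontF.comp (by fun_prop) ?_
        intro r hr
        have := quad_mk le_rfl (mem_Ici.1 hr)
        simpa using this
      have h2 : ContinuousOn (dagumRot lam δ) (Ici 0) :=
        h1.congr fun r hr => (dagF_imag hδ0 hlam hr).symm
      exact ContinuousOn.mul (by fun_prop) h2
    · obtain ⟨R, hR0, hR⟩ := dagF_small (lam := lam) hδ0 hδ2 one_pos
      refine Asymptotics.IsBigO.of_bound 1 ?_
      filter_upwards [eventually_ge_atTop R] with r hr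
      have hr0 : 0 ≤ r := hR0.le.trans hr
      rw [norm_mul, hnormexp, ← dagF_imag hδ0 hlam hr0, Real.norm_eq_abs, abs_of_pos (Real.exp_pos _),
        one_mul]
      refine mul_le_of_le_one_right (Real.exp_pos _).le (hR _ ?_ ?_)
      · simpa using quad_mk le_rfl hr0
      · simpa [abs_of_nonneg hr0] using hr
  refine ⟨hint, ?_⟩
  set f : ℂ → ℂ := fun w => Complex.exp (Complex.I * z * w) * dagF lam δ w with hf
  have hfcont : ContinuousOn f quad := ContinuousOn.mul (by fun_prop) hcontF
  -- Cauchy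
  have cauchy : ∀ T : ℝ, 0 < T →
      (∫ t in (0 : ℝ)..T, Complex.exp (Complex.I * z * t) * (dagum lam δ t : ℂ)) =
      Complex.I * (∫ r in (0 : ℝ)..T, Complex.exp (-(z * r)) * dagumRot lam δ r)
      + ((∫ x in (0 : ℝ)..T, f (x + T * Complex.I))
        - Complex.I * ∫ y in (0 : ℝ)..T, f (T + y * Complex.I)) := by
    intro T hT
    have key := Complex.integral_boundary_rect_eq_zero_of_continuousOn_of_differentiableOn f 0
      (T + T * Complex.I) (hfcont.mono ?_) ?_
    · simp at key
      have e1 : (∫ t in (0 : ℝ)..T, Complex.exp (Complex.I * z * t) * (dagum lam δ t : ℂ))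
          = ∫ x in (0 : ℝ)..T, f x := by
        apply intervalIntegral.integral_congr
        intro t ht
        rw [uIcc_of_le hT.le] at ht
        simp only [hf, dagF_real ht.1]
      have e2 : (∫ r in (0 : ℝ)..T, Complex.exp (-(z * r)) * dagumRot lam δ r)
          = ∫ x in (0 : ℝ)..T, f (x * Complex.I) := by
        apply intervalIntegral.integral_congr
        intro t ht
        rw [uIcc_of_le hT.le] at ht
        simp only [hf, dagF_imag hδ0 hlam ht.1]
        congr 2
        linear_combination -(z * t : ℂ) * Complex.I_mul_I
      rw [e1, e2]
      linear_combination key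
    · intro w hw
      rw [Complex.mem_reProdIm] at hw
      simp [uIcc_of_le hT.le] at hw
      exact ⟨hw.1.1, hw.2.1⟩
    · intro w hw
      rw [Complex.mem_reProdIm] at hw
      simp [hT.le] at hw
      apply DifferentiableAt.differentiableWithinAt
      exact DifferentiableAt.mul (by fun_prop) (dagF_diff hδ0 hδ2 ⟨hw.1.1.le, hw.2.1.le⟩ hw.1.1)
  have top : Tendsto (fun T : ℝ => ∫ x in (0 : ℝ)..T, f (x + T * Complex.I)) atTop (nhds 0) := by
    have hlim : Tendsto (fun T : ℝ => T * Real.exp (-z * T)) atTop (nhds 0) := by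
      have := tendsto_rpow_mul_exp_neg_mul_atTop_nhds_zero 1 z hz
      simpa using this
    refine squeeze_zero_norm' ?_ hlim
    obtain ⟨R, hR0, hR⟩ := dagF_small (lam := lam) hδ0 hδ2 one_pos
    filter_upwards [eventually_ge_atTop R] with T hT
    have hT0 : 0 ≤ T := hR0.le.trans hT
    have := intervalIntegral.norm_integral_le_of_norm_le_const (a := 0) (b := T)
      (f := fun x : ℝ => f (x + T * Complex.I)) (C := Real.exp (-z * T)) ?_
    · rw [sub_zero, abs_of_nonneg hT0, mul_comm (Real.exp _)] at this
      exact this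
    · intro x hx
      rw [uIoc_of_le hT0] at hx
      simp only [hf]
      rw [norm_mul, norm_expz]
      refine mul_le_of_le_one_right (Real.exp_pos _).le (hR _ (quad_mk hx.1.le hT0) ?_)
      refine hT.trans ?_
      have := Complex.abs_im_le_norm ((x : ℂ) + T * Complex.I)
      simp [abs_of_nonneg hT0] at this
      exact this
  have right : Tendsto (fun T : ℝ => ∫ y in (0 : ℝ)..T, f (T + y * Complex.I)) atTop (nhds 0) := by
    rw [Metric.tendsto_nhds]
    intro ε hε
    obtain ⟨R, hR0, hR⟩ := dagF_small (lam := lam) hδ0 hδ2 (ε := ε * z / 2) (by positivity)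
    filter_upwards [eventually_ge_atTop R] with T hT
    have hT0 : 0 ≤ T := hR0.le.trans hT
    rw [dist_zero_right]
    have hb := intervalIntegral.norm_integral_le_of_norm_le (μ := volume) (a := 0) (b := T) hT0
      (f := fun y : ℝ => f (T + y * Complex.I)) (g := fun y => Real.exp (-z * y) * (ε * z / 2)) ?_ ?_
    · refine hb.trans_lt ?_
      have hd : ∫ y in (0 : ℝ)..T, Real.exp (-z * y) * (ε * z / 2)
          = (-(ε / 2) * Real.exp (-z * T)) - (-(ε / 2) * Real.exp (-z * 0)) := by
        refine intervalIntegral.integral_eq_sub_of_hasDerivAt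
          (f := fun y => -(ε / 2) * Real.exp (-z * y)) (fun y _ => ?_)
          (Continuous.intervalIntegrable (by fun_prop) _ _)
        have := (((hasDerivAt_id y).const_mul (-z)).exp).const_mul (-(ε / 2))
        refine this.congr_deriv ?_
        simp only [id]
        ring
      rw [hd]
      have := Real.exp_pos (-z * T)
      simp only [mul_zero, Real.exp_zero]
      nlinarith
    · refine ae_of_all _ fun y hy => ?_
      simp only [hf]
      rw [norm_mul, norm_expz]
      refine mul_le_mul_of_nonneg_left (hR _ (quad_mk hT0 hy.1.le) ?_) (Real.exp_pos _).le
      refine hT.trans ?_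
      have := Complex.abs_re_le_norm ((T : ℂ) + y * Complex.I)
      simp [abs_of_nonneg hT0] at this
      exact this
    · exact Continuous.intervalIntegrable (by fun_prop) _ _
  have main := ((intervalIntegral_tendsto_integral_Ioi 0 hint tendsto_id).const_mul Complex.I).add
    (top.sub (right.const_mul Complex.I))
  simp only [mul_zero, sub_zero, add_zero] at main
  refine main.congr' ?_
  filter_upwards [eventually_gt_atTop 0] with T hT
  exact (cauchy T hT).symm
end

section
/- Let d = 1, δ ∈ (1,2), λ > 0 with δλ ∈ (0,2). Assume there exist C > 0 and τ > 0 such that for every nonnegative integer m the distance from (1+2m)/δ to the nearest integer is at least C(1+m)^{−τ} (in particular (1+2m)/δ is never an integer, so no Gamma factor below is evaluated at a pole). Then for every z > 0 both series below converge absolutely and (1/π) ∫₀^∞ cos(z t) D_{λ,δ}(t) dt = −( z^{−1} / (√π Γ(λ)) ) Σ_{n=1}^{∞} (−1)^n Γ(λ+n) Γ((1−nδ)/2) / ( n! Γ(nδ/2) ) (z/2)^{nδ} − ( 1/(√π Γ(λ) δ) ) Σ_{n=0}^{∞} (−1)^n Γ(λ+(1+2n)/δ) Γ(−(1+2n)/δ)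 / ( n! Γ(n+1/2) ) (z/2)^{2n}. -/
open MeasureTheory Set

/-- The general term of the first series in the Fox–Wright expansion of the
one-dimensional Dagum spectral density. -/
noncomputable def dagumTermA (lam δ z : ℝ) (n : ℕ) : ℝ :=
  (-1) ^ n * Real.Gamma (lam + n) * Real.Gamma ((1 - n * δ) / 2) /
    (n.factorial * Real.Gamma (n * δ / 2)) * (z / 2) ^ ((n : ℝ) * δ)

/-- The general term of the second series in the Fox–Wright expansion of the
one-dimensional Dagum spectral density. -/
noncomputable def dagumTermB (lam δ z : ℝ) (n : ℕ) : ℝ :=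
  (-1) ^ n * Real.Gamma (lam + (1 + 2 * n) / δ) * Real.Gamma (-((1 + 2 * n) / δ)) /
    (n.factorial * Real.Gamma (n + 1 / 2)) * (z / 2) ^ (2 * n)

/-- Coefficients of the binomial series of `(1+w)^(-λ)`. -/
noncomputable def dc (lam : ℝ) (n : ℕ) : ℝ :=
  (-1) ^ n * Real.Gamma (lam + n) / (Real.Gamma lam * n.factorial)

lemma dc_zero {lam : ℝ} (hlam : 0 < lam) : dc lam 0 = 1 := by
  have := (Real.Gamma_pos_of_pos hlam).ne'
  simp [dc, this]

lemma dc_succ {lam : ℝ} (hlam : 0 < lam) (n : ℕ) :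
    ((n : ℝ) + 1) * dc lam (n + 1) = -(lam + n) * dc lam n := by
  have h1 := (Real.Gamma_pos_of_pos hlam).ne'
  have h2 : (lam + n) ≠ 0 := by positivity
  have h3 : (n.factorial : ℝ) ≠ 0 := by positivity
  have h4 : (n : ℝ) + 1 ≠ 0 := by positivity
  unfold dc
  rw [Nat.factorial_succ]
  push_cast
  rw [← add_assoc, Real.Gamma_add_one h2]
  field_simp
  ring

lemma choose_eq_dc {lam : ℝ} (hlam : 0 < lam) (n : ℕ) : Ring.choose (-lam) n = dc lam n := by
  have key : ∀ n : ℕ, ((n : ℝ) + 1) * Ring.choose (-lam) (n + 1)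
      = -(lam + n) * Ring.choose (-lam) n := by
    intro n
    have h1 := Ring.descPochhammer_eq_factorial_smul_choose (-lam) n
    have h2 := Ring.descPochhammer_eq_factorial_smul_choose (-lam) (n + 1)
    rw [descPochhammer_succ_right] at h2
    simp only [Polynomial.smeval_mul, Polynomial.smeval_sub, Polynomial.smeval_X,
      Polynomial.smeval_natCast, h1, nsmul_eq_mul, Nat.factorial_succ, pow_one, pow_zero,
      mul_one] at h2
    push_cast at h2
    have h3 : (n.factorial : ℝ) ≠ 0 := by positivity
    apply mul_left_cancel₀ h3
    linarith
  induction n with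
  | zero => simp [dc_zero hlam]
  | succ n ih =>
    have h4 : (n : ℝ) + 1 ≠ 0 := by positivity
    apply mul_left_cancel₀ h4
    rw [key, dc_succ hlam, ih]

lemma hasSum_dc {lam : ℝ} (hlam : 0 < lam) {w : ℝ} (hw0 : 0 ≤ w) (hw : w < 1) :
    HasSum (fun n => dc lam n * w ^ n) ((1 + w) ^ (-lam)) := by
  have h := (Real.one_add_rpow_hasFPowerSeriesOnBall_zero (a := -lam)).hasSum (y := w) (by
    rw [← ENNReal.ofReal_one, Metric.eball_ofReal]
    simpa [abs_of_nonneg hw0] using hw)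
  simpa [binomialSeries, choose_eq_dc hlam, mul_comm] using h

lemma integral_betaPrime {p q : ℝ} (hp : 0 < p) (hq : 0 < q) :
    ∫ u in Ioi (0 : ℝ), u ^ (p - 1) * (1 + u) ^ (-(p + q))
      = Real.Gamma p * Real.Gamma q / Real.Gamma (p + q) := by
  have h1 : ∫ v in Ioo (0 : ℝ) 1, v ^ (p - 1) * (1 - v) ^ (q - 1)
      = Real.Gamma p * Real.Gamma q / Real.Gamma (p + q) := by
    have := ProbabilityTheory.beta_eq_betaIntegralReal p q hp hq
    rw [ProbabilityTheory.beta] at this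
    rw [this, Complex.betaIntegral, intervalIntegral.integral_of_le (by norm_num),
      ← integral_Ioc_eq_integral_Ioo, ← RCLike.re_to_complex, ← integral_re]
    · refine setIntegral_congr_fun measurableSet_Ioc fun x ⟨hx1, hx₂⟩ ↦ ?_
      norm_cast
      rw [← Complex.ofReal_cpow, ← Complex.ofReal_cpow, RCLike.re_to_complex,
        Complex.re_mul_ofReal, Complex.ofReal_re]
      all_goals linarith
    convert! Complex.betaIntegral_convergent (u := p) (v := q) (by simpa) (by simpa)
    rw [intervalIntegrable_iff_integrableOn_Ioc_of_le (by simp), IntegrableOn]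
  rw [← h1]
  have himg : Set.image (fun u : ℝ => u / (1 + u)) (Ioi 0) = Ioo 0 1 := by
    ext v
    simp only [mem_image, mem_Ioi, mem_Ioo]
    constructor
    · rintro ⟨u, hu, rfl⟩
      exact ⟨by positivity, by rw [div_lt_one (by positivity)]; linarith⟩
    · rintro ⟨h0, h1⟩
      refine ⟨v / (1 - v), div_pos h0 (by linarith), ?_⟩
      have : 1 - v ≠ 0 := by linarith
      field_simp
      ring
  have hder : ∀ u ∈ Ioi (0 : ℝ),
      HasDerivWithinAt (fun u : ℝ => u / (1 + u)) (1 / (1 + u) ^ 2) (Ioi 0) u := by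
    intro u hu
    have hu' : (1 : ℝ) + u ≠ 0 := by have : (0 : ℝ) < u := hu; positivity
    have := ((hasDerivAt_id u).div ((hasDerivAt_id u).const_add 1) hu')
    refine (this.congr_deriv ?_).hasDerivWithinAt
    simp
  have hinj : InjOn (fun u : ℝ => u / (1 + u)) (Ioi 0) := by
    intro u hu v hv h
    have h1 : (0 : ℝ) < u := hu
    have h2 : (0 : ℝ) < v := hv
    simp only at h
    rw [div_eq_div_iff (by positivity) (by positivity)] at h
    linarith
  rw [← himg, integral_image_eq_integral_abs_deriv_smul measurableSet_Ioi hder hinj]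
  refine setIntegral_congr_fun measurableSet_Ioi fun u hu => ?_
  have hu0 : (0 : ℝ) < u := hu
  have hu1 : (0 : ℝ) < 1 + u := by positivity
  have e1 : 1 - u / (1 + u) = (1 + u)⁻¹ := by field_simp; ring
  simp only [smul_eq_mul]
  rw [e1, abs_of_pos (by positivity), Real.div_rpow hu0.le hu1.le, Real.inv_rpow hu1.le,
    Real.rpow_neg hu1.le]
  have e2 : (1 + u) ^ (p + q) = (1 + u) ^ (p - 1) * (1 + u) ^ (q - 1) * (1 + u) ^ 2 := by
    rw [← Real.rpow_natCast, ← Real.rpow_add hu1, ← Real.rpow_add hu1]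
    congr 1; push_cast; ring
  rw [e2]
  field_simp

lemma integrableOn_betaPrime {p q : ℝ} (hp : 0 < p) (hq : 0 < q) :
    IntegrableOn (fun u : ℝ => u ^ (p - 1) * (1 + u) ^ (-(p + q))) (Ioi 0) := by
  by_contra h
  have h1 := integral_betaPrime hp hq
  rw [integral_undef h] at h1
  have := div_pos (mul_pos (Real.Gamma_pos_of_pos hp) (Real.Gamma_pos_of_pos hq))
    (Real.Gamma_pos_of_pos (add_pos hp hq))
  linarith

lemma dagum_eq (lam δ : ℝ) {t : ℝ} (ht : 0 < t) :
    dagum lam δ t = 1 - (1 + t ^ (-δ)) ^ (-lam) := by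
  have h : 0 < t ^ δ := Real.rpow_pos_of_pos ht δ
  have e : t ^ δ / (1 + t ^ δ) = (1 + t ^ (-δ))⁻¹ := by
    rw [Real.rpow_neg ht.le]
    field_simp
    ring
  have h2 : 0 < t ^ (-δ) := Real.rpow_pos_of_pos ht _
  rw [dagum, e, Real.inv_rpow (by positivity), Real.rpow_neg (x := 1 + t ^ (-δ)) (by positivity)]

lemma dagum_nonneg {lam δ : ℝ} (hlam : 0 < lam) {t : ℝ} (ht : 0 < t) : 0 ≤ dagum lam δ t := by
  rw [dagum_eq lam δ ht]
  have h : 0 < t ^ (-δ) := Real.rpow_pos_of_pos ht _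
  have := Real.rpow_le_one_of_one_le_of_nonpos (x := 1 + t ^ (-δ)) (z := -lam)
    (by linarith) (by linarith)
  linarith

lemma dagum_le_one {lam δ : ℝ} {t : ℝ} (ht : 0 < t) : dagum lam δ t ≤ 1 := by
  rw [dagum_eq lam δ ht]
  have h : 0 < t ^ (-δ) := Real.rpow_pos_of_pos ht _
  have := Real.rpow_pos_of_pos (show 0 < 1 + t ^ (-δ) by linarith) (-lam)
  linarith

lemma dagum_le {lam δ : ℝ} (hlam : 0 < lam) {t : ℝ} (ht : 0 < t) :
    dagum lam δ t ≤ lam * t ^ (-δ) := by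
  rw [dagum_eq lam δ ht]
  have h : 0 < t ^ (-δ) := Real.rpow_pos_of_pos ht _
  rw [Real.rpow_def_of_pos (by linarith)]
  have h1 := Real.add_one_le_exp (Real.log (1 + t ^ (-δ)) * (-lam))
  have h2 := Real.log_le_sub_one_of_pos (show 0 < 1 + t ^ (-δ) by linarith)
  nlinarith

lemma measurable_dagum (lam δ : ℝ) : Measurable (dagum lam δ) := by
  unfold dagum
  fun_prop

lemma integrableOn_rpow_mul_dagum {lam δ s : ℝ} (hlam : 0 < lam) (hs : 0 < s) (hsδ : s < δ) :
    IntegrableOn (fun t => t ^ (s - 1) * dagum lam δ t) (Ioi 0) := by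
  rw [← Ioc_union_Ioi_eq_Ioi (zero_le_one (α := ℝ))]
  have hm : Measurable (fun t => t ^ (s - 1) * dagum lam δ t) :=
    (by fun_prop : Measurable fun t : ℝ => t ^ (s - 1)).mul (measurable_dagum lam δ)
  apply IntegrableOn.union
  · have h1 : IntegrableOn (fun t : ℝ => t ^ (s - 1)) (Ioc 0 1) := by
      rw [← intervalIntegrable_iff_integrableOn_Ioc_of_le zero_le_one]
      exact intervalIntegral.intervalIntegrable_rpow' (by linarith)
    refine Integrable.mono' h1 hm.aestronglyMeasurable ?_
    refine ae_restrict_of_forall_mem measurableSet_Ioc fun t ht => ?_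
    have h0 := dagum_nonneg (δ := δ) hlam ht.1
    have h2 := dagum_le_one (lam := lam) (δ := δ) ht.1
    have h3 := Real.rpow_pos_of_pos ht.1 (s - 1)
    rw [Real.norm_eq_abs, abs_of_nonneg (by positivity)]
    nlinarith
  · have h1 : IntegrableOn (fun t : ℝ => lam * t ^ (s - 1 - δ)) (Ioi 1) :=
      (integrableOn_Ioi_rpow_of_lt (by linarith) one_pos).const_mul lam
    refine Integrable.mono' h1 hm.aestronglyMeasurable ?_
    refine ae_restrict_of_forall_mem measurableSet_Ioi fun t ht => ?_
    have ht0 : (0 : ℝ) < t := lt_trans one_pos ht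
    have h0 := dagum_nonneg (δ := δ) hlam ht0
    have h2 := dagum_le (δ := δ) hlam ht0
    have h3 := Real.rpow_pos_of_pos ht0 (s - 1)
    rw [Real.norm_eq_abs, abs_of_nonneg (by positivity), sub_eq_add_neg (s - 1),
      Real.rpow_add ht0]
    nlinarith

lemma rpow_neg_mul_nat {t : ℝ} (ht : 0 < t) (δ : ℝ) (n : ℕ) :
    t ^ (-(((n : ℝ) + 1) * δ)) = (t ^ (-δ)) ^ (n + 1) := by
  rw [← Real.rpow_natCast, ← Real.rpow_mul ht.le]
  congr 1; push_cast; ring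

lemma rpow_neg_lt_one {a δ : ℝ} (ha : 1 < a) (hδ : 0 < δ) : a ^ (-δ) < 1 :=
  Real.rpow_lt_one_of_one_lt_of_neg ha (by linarith)

lemma summable_dc_succ {lam : ℝ} (hlam : 0 < lam) {w : ℝ} (hw0 : 0 ≤ w) (hw : w < 1) :
    Summable (fun n => |dc lam (n + 1)| * w ^ (n + 1)) := by
  have h := (summable_nat_add_iff 1).2 (hasSum_dc hlam hw0 hw).summable.abs
  refine h.congr fun n => ?_
  rw [abs_mul, abs_of_nonneg (pow_nonneg hw0 _)]

lemma hasSum_dc_dagum {lam : ℝ} (hlam : 0 < lam) {δ : ℝ} (hδ : 0 < δ) {t : ℝ} (ht : 1 < t) :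
    HasSum (fun n : ℕ => dc lam (n + 1) * t ^ (-(((n : ℝ) + 1) * δ))) (-dagum lam δ t) := by
  have ht0 : 0 < t := by linarith
  have h := (hasSum_nat_add_iff' 1).2 (hasSum_dc hlam (Real.rpow_pos_of_pos ht0 (-δ)).le
    (rpow_neg_lt_one ht hδ))
  simp only [Finset.sum_range_one, dc_zero hlam, pow_zero, mul_one] at h
  rw [dagum_eq lam δ ht0, neg_sub]
  refine h.congr_fun ?_
  intro n
  rw [rpow_neg_mul_nat ht0]

lemma tail_bound {δ s a : ℝ} (ha : 1 < a) (hsδ : s < δ) (n : ℕ) (hδ : 0 < δ) {w : ℝ → ℝ}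
    (hw : Measurable w) (hwb : ∀ t, 0 < t → |w t| ≤ t ^ (s - 1)) :
    IntegrableOn (fun t => w t * t ^ (-(((n : ℝ) + 1) * δ))) (Ioi a) ∧
    ∫ t in Ioi a, |w t * t ^ (-(((n : ℝ) + 1) * δ))| ≤ a ^ s / (δ - s) * (a ^ (-δ)) ^ (n + 1) := by
  have ha0 : 0 < a := by linarith
  have hnδ : δ ≤ ((n : ℝ) + 1) * δ := by nlinarith [Nat.cast_nonneg (α := ℝ) n]
  have hlt : s - 1 + -(((n : ℝ) + 1) * δ) < -1 := by linarith
  have hI : IntegrableOn (fun t : ℝ => t ^ (s - 1 + -(((n : ℝ) + 1) * δ))) (Ioi a) :=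
    integrableOn_Ioi_rpow_of_lt hlt ha0
  have hb : ∀ t ∈ Ioi a, |w t * t ^ (-(((n : ℝ) + 1) * δ))|
      ≤ t ^ (s - 1 + -(((n : ℝ) + 1) * δ)) := by
    intro t ht
    have ht0 : 0 < t := lt_trans ha0 ht
    rw [Real.rpow_add ht0, abs_mul, abs_of_pos (Real.rpow_pos_of_pos ht0 (-(((n : ℝ) + 1) * δ)))]
    gcongr
    exact hwb t ht0
  have hintg : IntegrableOn (fun t => w t * t ^ (-(((n : ℝ) + 1) * δ))) (Ioi a) := by
    refine Integrable.mono' hI (hw.mul (by fun_prop)).aestronglyMeasurable ?_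
    exact ae_restrict_of_forall_mem measurableSet_Ioi hb
  refine ⟨hintg, ?_⟩
  calc _ ≤ ∫ t in Ioi a, t ^ (s - 1 + -(((n : ℝ) + 1) * δ)) :=
        setIntegral_mono_on hintg.abs hI measurableSet_Ioi hb
    _ = a ^ s * (a ^ (-δ)) ^ (n + 1) / (((n : ℝ) + 1) * δ - s) := by
        rw [integral_Ioi_rpow_of_lt hlt ha0, ← rpow_neg_mul_nat ha0, ← Real.rpow_add ha0,
          show s - 1 + -(((n : ℝ) + 1) * δ) + 1 = s + -(((n : ℝ) + 1) * δ) by ring,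
          ← neg_div_neg_eq, neg_neg]
        congr 1; ring
    _ ≤ a ^ s * (a ^ (-δ)) ^ (n + 1) / (δ - s) := by
        apply div_le_div_of_nonneg_left (by positivity) (by linarith) (by linarith)
    _ = _ := by ring

lemma summable_tail {lam δ s a : ℝ} (hlam : 0 < lam) (ha : 1 < a) (hsδ : s < δ) (hδ : 0 < δ)
    {w : ℝ → ℝ} (hw : Measurable w) (hwb : ∀ t, 0 < t → |w t| ≤ t ^ (s - 1)) :
    Summable (fun n : ℕ => |dc lam (n + 1)| * ∫ t in Ioi a, |w t * t ^ (-(((n : ℝ) + 1) * δ))|) := by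
  have ha0 : 0 < a := by linarith
  have h1 := (summable_dc_succ hlam (Real.rpow_pos_of_pos ha0 (-δ)).le
    (rpow_neg_lt_one ha hδ)).mul_left (a ^ s / (δ - s))
  refine Summable.of_nonneg_of_le (fun n => ?_) (fun n => ?_) h1
  · exact mul_nonneg (abs_nonneg _) (integral_nonneg fun t => abs_nonneg _)
  · have := (tail_bound ha hsδ n hδ hw hwb).2
    calc _ ≤ |dc lam (n + 1)| * (a ^ s / (δ - s) * (a ^ (-δ)) ^ (n + 1)) := by gcongr
      _ = _ := by ring

lemma hasSum_tail {lam δ s a : ℝ} (hlam : 0 < lam) (ha : 1 < a) (hsδ : s < δ) (hδ : 0 < δ)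
    {w : ℝ → ℝ} (hw : Measurable w) (hwb : ∀ t, 0 < t → |w t| ≤ t ^ (s - 1)) :
    HasSum (fun n : ℕ => dc lam (n + 1) * ∫ t in Ioi a, w t * t ^ (-(((n : ℝ) + 1) * δ)))
      (-∫ t in Ioi a, w t * dagum lam δ t) := by
  have h := hasSum_integral_of_summable_integral_norm (μ := volume.restrict (Ioi a))
    (F := fun (n : ℕ) t => dc lam (n + 1) * (w t * t ^ (-(((n : ℝ) + 1) * δ))))
    (fun n => (tail_bound ha hsδ n hδ hw hwb).1.const_mul _) (by
      refine (summable_tail hlam ha hsδ hδ hw hwb).congr fun n => ?_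
      rw [← integral_const_mul]
      simp [abs_mul])
  simp only [integral_const_mul] at h
  have e : -∫ t in Ioi a, w t * dagum lam δ t
      = ∫ t in Ioi a, ∑' i : ℕ, dc lam (i + 1) * (w t * t ^ (-(((i : ℝ) + 1) * δ))) := by
    rw [← integral_neg]
    refine setIntegral_congr_fun measurableSet_Ioi fun t ht => ?_
    have := (hasSum_dc_dagum hlam hδ (lt_trans ha ht)).mul_left (w t)
    rw [← mul_neg, ← this.tsum_eq]
    congr 1; ext n; ring
  rw [e]
  exact h

lemma integral_one_sub_cos_exp {y : ℝ} (hy : 0 < y) :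
    IntegrableOn (fun t => (1 - Real.cos t) * Real.exp (-(y * t))) (Ioi 0) ∧
    ∫ t in Ioi (0 : ℝ), (1 - Real.cos t) * Real.exp (-(y * t)) = 1 / (y * (1 + y ^ 2)) := by
  set F : ℝ → ℝ := fun t =>
    Real.exp (-(y * t)) * (-(1 / y) + (y * Real.cos t - Real.sin t) / (1 + y ^ 2)) with hF
  have hd : ∀ t ∈ Ici (0 : ℝ), HasDerivAt F ((1 - Real.cos t) * Real.exp (-(y * t))) t := by
    intro t _
    have h1 : HasDerivAt (fun t => Real.exp (-(y * t))) (Real.exp (-(y * t)) * (-(y * 1))) t :=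
      (((hasDerivAt_id t).const_mul y).neg).exp
    have h2 : HasDerivAt (fun t => -(1 / y) + (y * Real.cos t - Real.sin t) / (1 + y ^ 2))
        ((y * (-Real.sin t) - Real.cos t) / (1 + y ^ 2)) t :=
      ((((Real.hasDerivAt_cos t).const_mul y).sub (Real.hasDerivAt_sin t)).div_const _).const_add _
    refine (h1.mul h2).congr_deriv ?_
    have : 1 + y ^ 2 ≠ 0 := by positivity
    field_simp
    ring
  have hn : ∀ t ∈ Ioi (0 : ℝ), 0 ≤ (1 - Real.cos t) * Real.exp (-(y * t)) := by
    intro t _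
    exact mul_nonneg (by linarith [Real.cos_le_one t]) (Real.exp_pos _).le
  have hl : Filter.Tendsto F Filter.atTop (nhds 0) := by
    have h1 : Filter.Tendsto (fun t : ℝ => Real.exp (-(y * t))) Filter.atTop (nhds 0) :=
      Real.tendsto_exp_neg_atTop_nhds_zero.comp (Filter.tendsto_id.const_mul_atTop hy)
    refine h1.zero_mul_isBoundedUnder_le ?_
    refine Filter.isBoundedUnder_of ⟨1 / y + (y + 1) / (1 + y ^ 2), fun t => ?_⟩
    simp only [Function.comp, Real.norm_eq_abs]
    refine (abs_add_le _ _).trans ?_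
    rw [abs_neg, abs_of_pos (by positivity : 0 < 1 / y), abs_div,
      abs_of_pos (by positivity : 0 < 1 + y ^ 2)]
    gcongr
    refine (abs_sub _ _).trans ?_
    rw [abs_mul, abs_of_pos hy]
    have := Real.abs_cos_le_one t
    have := Real.abs_sin_le_one t
    nlinarith
  refine ⟨integrableOn_Ioi_deriv_of_nonneg' hd hn hl, ?_⟩
  rw [integral_Ioi_of_hasDerivAt_of_nonneg' hd hn hl]
  simp only [hF]
  have : 1 + y ^ 2 ≠ 0 := by positivity
  simp
  field_simp
  ring

lemma integral_rpow_div_one_add_sq {s : ℝ} (hs1 : 1 < s) (hs3 : s < 3) :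
    ∫ y in Ioi (0 : ℝ), y ^ (s - 1) * (1 / (y * (1 + y ^ 2)))
      = Real.Gamma ((s - 1) / 2) * Real.Gamma ((3 - s) / 2) / 2 := by
  have h := integral_betaPrime (p := (s - 1) / 2) (q := (3 - s) / 2) (by linarith) (by linarith)
  rw [show (s - 1) / 2 + (3 - s) / 2 = 1 by ring, Real.Gamma_one, div_one] at h
  have h' := integral_comp_rpow_Ioi (fun u : ℝ => u ^ ((s - 1) / 2 - 1) * (1 + u) ^ (-1 : ℝ))
    (two_ne_zero (α := ℝ))
  rw [← h, ← h', ← integral_div]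
  refine setIntegral_congr_fun measurableSet_Ioi fun y hy => ?_
  have hy0 : (0 : ℝ) < y := hy
  have e : y ^ (s - 1) = y ^ (2 * ((s - 1) / 2 - 1)) * y ^ 2 := by
    rw [← Real.rpow_natCast, ← Real.rpow_add hy0]
    congr 1; push_cast; ring
  simp only [smul_eq_mul]
  rw [← Real.rpow_mul hy0.le, Real.rpow_neg_one, show (2 : ℝ) - 1 = 1 by norm_num, Real.rpow_one,
    Real.rpow_two, abs_of_pos two_pos, e]
  have : 1 + y ^ 2 ≠ 0 := by positivity
  field_simp

lemma cos_mellin_one {s : ℝ} (hs1 : 1 < s) (hs3 : s < 3) :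
    ∫ t in Ioi (0 : ℝ), (1 - Real.cos t) * t ^ (-s)
      = Real.Gamma ((s - 1) / 2) * Real.Gamma ((3 - s) / 2) / (2 * Real.Gamma s) := by
  have hs0 : 0 < s := by linarith
  have hΓ := Real.Gamma_pos_of_pos hs0
  have hval := integral_rpow_div_one_add_sq hs1 hs3
  have hpos : 0 < Real.Gamma ((s - 1) / 2) * Real.Gamma ((3 - s) / 2) / 2 := by
    have := Real.Gamma_pos_of_pos (show 0 < (s - 1) / 2 by linarith)
    have := Real.Gamma_pos_of_pos (show 0 < (3 - s) / 2 by linarith)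
    positivity
  set f : ℝ → ℝ → ℝ := fun t y => (1 - Real.cos t) * (y ^ (s - 1) * Real.exp (-(t * y))) with hf
  have hfn : ∀ t y, 0 < y → 0 ≤ f t y := fun t y hy =>
    mul_nonneg (by linarith [Real.cos_le_one t]) (by positivity)
  have hfy : ∀ y, (fun t => f t y)
      = fun t => y ^ (s - 1) * ((1 - Real.cos t) * Real.exp (-(y * t))) := by
    intro y; ext t; simp only [hf]; rw [mul_comm t y]; ring
  have hinner : ∀ y, 0 < y → ∫ t in Ioi (0 : ℝ), f t y = y ^ (s - 1) * (1 / (y * (1 + y ^ 2))) := by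
    intro y hy
    rw [hfy, integral_const_mul, (integral_one_sub_cos_exp hy).2]
  have hintg : Integrable (Function.uncurry f)
      ((volume.restrict (Ioi (0 : ℝ))).prod (volume.restrict (Ioi (0 : ℝ)))) := by
    have hm : Measurable (Function.uncurry f) := by
      simp only [hf, Function.uncurry_def]; fun_prop
    rw [integrable_prod_iff' hm.aestronglyMeasurable]
    constructor
    · refine ae_restrict_of_forall_mem measurableSet_Ioi fun y hy => ?_
      have := (integral_one_sub_cos_exp hy).1.const_mul (y ^ (s - 1))
      rw [← hfy] at this
      exact this
    · have h1 : IntegrableOn (fun y : ℝ => y ^ (s - 1) * (1 / (y * (1 + y ^ 2)))) (Ioi 0) := by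
        by_contra h
        rw [integral_undef h] at hval
        linarith
      refine h1.congr_fun ?_ measurableSet_Ioi
      intro y hy
      simp only
      rw [← hinner y hy]
      refine setIntegral_congr_fun measurableSet_Ioi fun t ht => ?_
      simp only [Function.uncurry, Real.norm_eq_abs]
      rw [abs_of_nonneg (hfn t y hy)]
  have hswap := integral_integral_swap hintg
  have hR : ∫ y in Ioi (0 : ℝ), ∫ t in Ioi (0 : ℝ), f t y
      = Real.Gamma ((s - 1) / 2) * Real.Gamma ((3 - s) / 2) / 2 := by
    rw [← hval]
    exact setIntegral_congr_fun measurableSet_Ioi fun y hy => hinner y hy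
  have hL : ∫ t in Ioi (0 : ℝ), ∫ y in Ioi (0 : ℝ), f t y
      = (∫ t in Ioi (0 : ℝ), (1 - Real.cos t) * t ^ (-s)) * Real.Gamma s := by
    rw [← integral_mul_const]
    refine setIntegral_congr_fun measurableSet_Ioi fun t ht => ?_
    have ht0 : (0 : ℝ) < t := ht
    simp only [hf]
    rw [integral_const_mul, Real.integral_rpow_mul_exp_neg_mul_Ioi hs0 ht0, one_div,
      Real.inv_rpow ht0.le, ← Real.rpow_neg ht0.le]
    ring
  rw [hL, hR] at hswap
  rw [eq_div_iff (by positivity)]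
  linarith

/-- The Mellin-type constant `√π 2^{-s} Γ((1-s)/2)/Γ(s/2)`. -/
noncomputable def cH (s : ℝ) : ℝ :=
  Real.sqrt Real.pi * 2 ^ (-s) * Real.Gamma ((1 - s) / 2) / Real.Gamma (s / 2)

lemma cH_add_two {s : ℝ} (hs : 0 < s) : (s + 1) * cH (s + 2) = -cH s / s := by
  have h1 : Real.Gamma ((s + 2) / 2) = s / 2 * Real.Gamma (s / 2) := by
    rw [← Real.Gamma_add_one (by positivity)]; congr 1; ring
  have h2 : Real.Gamma ((1 - s) / 2) = (-1 - s) / 2 * Real.Gamma ((1 - (s + 2)) / 2) := by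
    rw [show (1 - (s + 2)) / 2 = (-1 - s) / 2 by ring, ← Real.Gamma_add_one (by linarith)]
    congr 1; ring
  have h3 : (2 : ℝ) ^ (-(s + 2)) = 2 ^ (-s) / 4 := by
    rw [neg_add, Real.rpow_add two_pos, Real.rpow_neg two_pos.le 2]; norm_num; ring
  have h4 := (Real.Gamma_pos_of_pos (show 0 < s / 2 by positivity)).ne'
  unfold cH
  rw [h1, h2, h3]
  field_simp
  ring

lemma cH_eq {s : ℝ} (hs1 : 1 < s) :
    Real.Gamma ((s - 1) / 2) * Real.Gamma ((3 - s) / 2) / (2 * Real.Gamma s) = -cH s := by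
  have h1 : Real.Gamma ((3 - s) / 2) = (1 - s) / 2 * Real.Gamma ((1 - s) / 2) := by
    rw [← Real.Gamma_add_one (by linarith)]; congr 1; ring
  have h2 : Real.Gamma (s / 2 + 1 / 2) = (s - 1) / 2 * Real.Gamma ((s - 1) / 2) := by
    rw [← Real.Gamma_add_one (by linarith)]; congr 1; ring
  have h3 := Real.Gamma_mul_Gamma_add_half (s / 2)
  rw [h2, show 2 * (s / 2) = s by ring] at h3
  have h4 := (Real.Gamma_pos_of_pos (show 0 < s / 2 by linarith)).ne'
  have h5 := (Real.Gamma_pos_of_pos (show 0 < s by linarith)).ne'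
  have h6 : (2 : ℝ) ^ (1 - s) = 2 * 2 ^ (-s) := by
    rw [sub_eq_add_neg, Real.rpow_add two_pos, Real.rpow_one]
  rw [h6] at h3
  unfold cH
  rw [h1, div_eq_iff (by positivity), ← mul_left_inj' h4]
  field_simp
  linear_combination (-2 * Real.Gamma ((1 - s) / 2)) * h3

lemma cos_mellin {s z : ℝ} (hs1 : 1 < s) (hs3 : s < 3) (hz : 0 < z) :
    IntegrableOn (fun t => (1 - Real.cos (z * t)) * t ^ (-s)) (Ioi 0) ∧
    ∫ t in Ioi (0 : ℝ), (1 - Real.cos (z * t)) * t ^ (-s) = -cH s * z ^ (s - 1) := by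
  have hval : ∫ t in Ioi (0 : ℝ), (1 - Real.cos (z * t)) * t ^ (-s) = -cH s * z ^ (s - 1) := by
    have h := integral_comp_mul_left_Ioi (fun t => (1 - Real.cos t) * t ^ (-s)) 0 hz
    rw [mul_zero, cos_mellin_one hs1 hs3, cH_eq hs1, smul_eq_mul] at h
    have h2 : ∫ t in Ioi (0 : ℝ), (1 - Real.cos (z * t)) * (z * t) ^ (-s)
        = (∫ t in Ioi (0 : ℝ), (1 - Real.cos (z * t)) * t ^ (-s)) * z ^ (-s) := by
      rw [← integral_mul_const]
      refine setIntegral_congr_fun measurableSet_Ioi fun t ht => ?_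
      have ht0 : (0 : ℝ) < t := ht
      rw [Real.mul_rpow hz.le ht0.le]; ring
    rw [h2, Real.rpow_neg hz.le] at h
    have hzs := Real.rpow_pos_of_pos hz s
    rw [Real.rpow_sub_one hz.ne']
    field_simp at h ⊢
    linarith
  refine ⟨?_, hval⟩
  by_contra h
  rw [integral_undef h, ← cH_eq hs1] at hval
  have := Real.Gamma_pos_of_pos (show 0 < (s - 1) / 2 by linarith)
  have := Real.Gamma_pos_of_pos (show 0 < (3 - s) / 2 by linarith)
  have := Real.Gamma_pos_of_pos (show 0 < s by linarith)
  have : 0 < Real.Gamma ((s - 1) / 2) * Real.Gamma ((3 - s) / 2) / (2 * Real.Gamma s)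
    * z ^ (s - 1) := by positivity
  linarith

lemma hasSum_val {f : ℕ → ℝ} {x y : ℝ} (h : HasSum f y) (e : x = y) : HasSum f x := e ▸ h

/-- Terms of the expansion of the truncated cosine integral. -/
noncomputable def kap (a z s : ℝ) (k : ℕ) : ℝ :=
  (-1) ^ k * z ^ (2 * k) / ((2 * k).factorial : ℝ) * (a ^ (2 * (k : ℝ) + 1 - s) / (2 * (k : ℝ) + 1 - s))

/-- Truncated cosine integral. -/
noncomputable def cJ (a z s : ℝ) : ℝ := ∫ t in Ioi a, Real.cos (z * t) * t ^ (-s)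

lemma integrableOn_cJ {a s : ℝ} (z : ℝ) (ha : 0 < a) (hs : 1 < s) :
    IntegrableOn (fun t => Real.cos (z * t) * t ^ (-s)) (Ioi a) := by
  refine Integrable.mono' (integrableOn_Ioi_rpow_of_lt (show -s < -1 by linarith) ha)
    (Measurable.aestronglyMeasurable (by fun_prop)) ?_
  refine ae_restrict_of_forall_mem measurableSet_Ioi fun t ht => ?_
  have ht0 : 0 < t := lt_trans ha ht
  rw [Real.norm_eq_abs, abs_mul, abs_of_pos (Real.rpow_pos_of_pos ht0 _)]
  have := Real.abs_cos_le_one (z * t)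
  have := Real.rpow_pos_of_pos ht0 (-s)
  nlinarith

lemma summable_even_pow_div (x : ℝ) : Summable (fun k : ℕ => x ^ (2 * k) / ((2 * k).factorial : ℝ)) :=
  (Real.summable_pow_div_factorial x).comp_injective
    (i := fun k : ℕ => 2 * k) (fun a b h => by simpa using h)

lemma setIntegral_rpow_Ioc {a r : ℝ} (ha : 0 < a) (hr : -1 < r) :
    IntegrableOn (fun t : ℝ => t ^ r) (Ioc 0 a) ∧
    ∫ t in Ioc 0 a, t ^ r = a ^ (r + 1) / (r + 1) := by
  constructor
  · rw [← intervalIntegrable_iff_integrableOn_Ioc_of_le ha.le]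
    exact intervalIntegral.intervalIntegrable_rpow' hr
  · rw [← intervalIntegral.integral_of_le ha.le, integral_rpow (Or.inl hr),
      Real.zero_rpow (by linarith), sub_zero]

lemma cJ_base {a z s : ℝ} (ha : 0 < a) (hz : 0 < z) (hs1 : 1 < s) (hs3 : s < 3) :
    HasSum (kap a z s) (cH s * z ^ (s - 1) - cJ a z s) := by
  obtain ⟨hI, hV⟩ := cos_mellin hs1 hs3 hz
  have hexp : ∀ k : ℕ, (-1 : ℝ) < 2 * ((k : ℝ) + 1) - s := fun k => by
    have := Nat.cast_nonneg (α := ℝ) k; linarith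
  -- the integral over `(0, a]`
  have h0 : HasSum (fun k => kap a z s (k + 1))
      (-∫ t in Ioc 0 a, (1 - Real.cos (z * t)) * t ^ (-s)) := by
    have h := hasSum_integral_of_summable_integral_norm (μ := volume.restrict (Ioc 0 a))
      (F := fun (k : ℕ) t => (-1) ^ (k + 1) * z ^ (2 * (k + 1)) / ((2 * (k + 1)).factorial : ℝ)
        * t ^ (2 * ((k : ℝ) + 1) - s))
      (fun k => (setIntegral_rpow_Ioc ha (hexp k)).1.const_mul _) (by
        have hsum := ((summable_nat_add_iff 1).2 (summable_even_pow_div (z * a))).mul_left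
          (a ^ (1 - s) / (3 - s))
        refine Summable.of_nonneg_of_le (fun k => integral_nonneg fun t => norm_nonneg _)
          (fun k => ?_) hsum
        have e : ∫ t in Ioc 0 a, ‖(-1) ^ (k + 1) * z ^ (2 * (k + 1))
            / ((2 * (k + 1)).factorial : ℝ) * t ^ (2 * ((k : ℝ) + 1) - s)‖
            = z ^ (2 * (k + 1)) / ((2 * (k + 1)).factorial : ℝ)
              * (a ^ (2 * ((k : ℝ) + 1) - s + 1) / (2 * ((k : ℝ) + 1) - s + 1)) := by
          rw [← (setIntegral_rpow_Ioc ha (hexp k)).2, ← integral_const_mul]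
          refine setIntegral_congr_fun measurableSet_Ioc fun t ht => ?_
          have h3 := Real.rpow_pos_of_pos ht.1 (2 * ((k : ℝ) + 1) - s)
          simp only [norm_mul, norm_div, norm_pow, norm_neg, norm_one, one_pow, one_mul,
            Real.norm_eq_abs, abs_of_pos hz, abs_of_pos h3, Nat.abs_cast]
        have e2 : a ^ (2 * ((k : ℝ) + 1) - s + 1) = a ^ (1 - s) * a ^ (2 * (k + 1)) := by
          rw [← Real.rpow_natCast, ← Real.rpow_add ha]
          congr 1; push_cast; ring
        rw [e, e2]
        calc _ ≤ z ^ (2 * (k + 1)) / ((2 * (k + 1)).factorial : ℝ)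
              * (a ^ (1 - s) * a ^ (2 * (k + 1)) / (3 - s)) := by
              gcongr
              · have := Nat.cast_nonneg (α := ℝ) k; linarith
          _ = _ := by rw [mul_pow]; ring)
    have e1 : (fun k => kap a z s (k + 1)) = fun k : ℕ => ∫ t in Ioc 0 a,
        (-1) ^ (k + 1) * z ^ (2 * (k + 1)) / ((2 * (k + 1)).factorial : ℝ)
        * t ^ (2 * ((k : ℝ) + 1) - s) := by
      ext k
      rw [integral_const_mul, (setIntegral_rpow_Ioc ha (hexp k)).2, kap]
      push_cast
      rw [show 2 * ((k : ℝ) + 1) + 1 - s = 2 * ((k : ℝ) + 1) - s + 1 by ring]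
    rw [e1]
    have e2 : -∫ t in Ioc 0 a, (1 - Real.cos (z * t)) * t ^ (-s) = ∫ t in Ioc 0 a, ∑' k : ℕ,
        (-1) ^ (k + 1) * z ^ (2 * (k + 1)) / ((2 * (k + 1)).factorial : ℝ)
        * t ^ (2 * ((k : ℝ) + 1) - s) := by
      rw [← integral_neg]
      refine setIntegral_congr_fun measurableSet_Ioc fun t ht => ?_
      have hc := (((hasSum_nat_add_iff' 1).2 (Real.hasSum_cos (z * t))).mul_right
        (t ^ (-s)))
      simp only [Finset.sum_range_one] at hc
      have : -((1 - Real.cos (z * t)) * t ^ (-s)) =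
        (Real.cos (z * t) - (-1) ^ 0 * (z * t) ^ (2 * 0) / ((2 * 0).factorial : ℝ)) * t ^ (-s) := by
        simp
        ring
      rw [this, ← hc.tsum_eq]
      congr 1; ext k
      rw [sub_eq_add_neg (2 * ((k : ℝ) + 1)), Real.rpow_add ht.1, mul_pow,
        show t ^ (2 * ((k : ℝ) + 1)) = t ^ (2 * (k + 1)) by
          rw [← Real.rpow_natCast]; congr 1; push_cast; ring]
      ring
    rw [e2]
    exact h
  -- the tail
  have hsub : ∫ t in Ioi a, (1 - Real.cos (z * t)) * t ^ (-s)
      = a ^ (1 - s) / (s - 1) - cJ a z s := by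
    have e : ∫ t in Ioi a, t ^ (-s) = a ^ (1 - s) / (s - 1) := by
      rw [integral_Ioi_rpow_of_lt (by linarith) ha, show -s + 1 = 1 - s by ring,
        ← neg_div_neg_eq, neg_neg, neg_sub]
    rw [cJ, ← e, ← integral_sub (integrableOn_Ioi_rpow_of_lt (by linarith) ha)
      (integrableOn_cJ z ha hs1)]
    congr 1; ext t; ring
  have hsplit : ∫ t in Ioi (0 : ℝ), (1 - Real.cos (z * t)) * t ^ (-s)
      = (∫ t in Ioc 0 a, (1 - Real.cos (z * t)) * t ^ (-s))
        + ∫ t in Ioi a, (1 - Real.cos (z * t)) * t ^ (-s) := by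
    rw [← Ioc_union_Ioi_eq_Ioi ha.le]
    apply setIntegral_union Ioc_disjoint_Ioi_same measurableSet_Ioi
    · exact hI.mono_set Ioc_subset_Ioi_self
    · exact hI.mono_set (Ioi_subset_Ioi ha.le)
  have hfin := (hasSum_nat_add_iff 1).1 h0
  refine hasSum_val hfin ?_
  rw [Finset.sum_range_one, kap]
  simp only [Nat.cast_zero, mul_zero, pow_zero, Nat.factorial_zero, Nat.cast_one, zero_add]
  have hs : a ^ (1 - s) / (1 - s) = -(a ^ (1 - s) / (s - 1)) := by
    rw [← neg_sub s 1, div_neg]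
  rw [hs]
  linarith

lemma cJ_rec {a z s : ℝ} (ha : 0 < a) (hs1 : 1 < s) :
    (s + 1) * cJ a z (s + 2) + z ^ 2 / s * cJ a z s
      = Real.cos (z * a) * a ^ (-1 - s) - z / s * (Real.sin (z * a) * a ^ (-s)) := by
  have hs0 : s ≠ 0 := by linarith
  set E : ℝ → ℝ := fun t => Real.cos (z * t) * t ^ (-1 - s) - z / s * (Real.sin (z * t) * t ^ (-s))
    with hE
  set E' : ℝ → ℝ := fun t => -(s + 1) * (Real.cos (z * t) * t ^ (-(s + 2)))
    - z ^ 2 / s * (Real.cos (z * t) * t ^ (-s)) with hE'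
  have i1 := integrableOn_cJ z ha (show 1 < s + 2 by linarith)
  have i2 := integrableOn_cJ z ha hs1
  have hd : ∀ t ∈ Ici a, HasDerivAt E (E' t) t := by
    intro t ht
    have ht0 : 0 < t := lt_of_lt_of_le ha ht
    have hzt : HasDerivAt (fun t : ℝ => z * t) (z * 1) t := (hasDerivAt_id t).const_mul z
    have h1 := hzt.cos.mul (Real.hasDerivAt_rpow_const (p := -1 - s) (Or.inl ht0.ne'))
    have h2 := (hzt.sin.mul (Real.hasDerivAt_rpow_const (p := -s) (Or.inl ht0.ne'))).const_mul (z / s)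
    refine (h1.sub h2).congr_deriv ?_
    simp only [hE']
    rw [show -1 - s - 1 = -(s + 2) by ring, show -s - 1 = -1 - s by ring]
    field_simp
    ring
  have hintg : IntegrableOn E' (Ioi a) := (i1.const_mul _).sub (i2.const_mul _)
  have hl : Filter.Tendsto E Filter.atTop (nhds 0) := by
    have g1 : Filter.Tendsto (fun t : ℝ => t ^ (-1 - s)) Filter.atTop (nhds 0) := by
      have := tendsto_rpow_neg_atTop (show 0 < 1 + s by linarith)
      rwa [show -(1 + s) = -1 - s by ring] at this
    have g2 : Filter.Tendsto (fun t : ℝ => t ^ (-s)) Filter.atTop (nhds 0) :=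
      tendsto_rpow_neg_atTop (show 0 < s by linarith)
    have k1 : Filter.Tendsto (fun t : ℝ => Real.cos (z * t) * t ^ (-1 - s)) Filter.atTop (nhds 0) :=
      Filter.isBoundedUnder_le_mul_tendsto_zero (Filter.isBoundedUnder_of
        ⟨1, fun t => by simpa using Real.abs_cos_le_one (z * t)⟩) g1
    have k2 : Filter.Tendsto (fun t : ℝ => Real.sin (z * t) * t ^ (-s)) Filter.atTop (nhds 0) :=
      Filter.isBoundedUnder_le_mul_tendsto_zero (Filter.isBoundedUnder_of
        ⟨1, fun t => by simpa using Real.abs_sin_le_one (z * t)⟩) g2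
    simpa using k1.sub (k2.const_mul (z / s))
  have h := integral_Ioi_of_hasDerivAt_of_tendsto' hd hintg hl
  rw [integral_sub (i1.const_mul _) (i2.const_mul _), integral_const_mul, integral_const_mul] at h
  simp only [cJ]
  simp only [hE] at h
  linarith

lemma kap_succ {a z s : ℝ} (ha : 0 < a) (hs1 : 1 < s) (hs : ∀ k : ℕ, s ≠ 2 * k + 1) (j : ℕ) :
    (s + 1) * kap a z (s + 2) (j + 1) =
      -(a ^ (-1 - s) * ((-1) ^ (j + 1) * (z * a) ^ (2 * (j + 1)) / ((2 * (j + 1)).factorial : ℝ)))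
      - z ^ 2 / s * kap a z s j
      + z / s * a ^ (-s) * ((-1) ^ j * (z * a) ^ (2 * j + 1) / ((2 * j + 1).factorial : ℝ)) := by
  have hne : 2 * (j : ℝ) + 1 - s ≠ 0 := fun h => hs j (by linarith)
  have hs0 : s ≠ 0 := by linarith
  have e1 : a ^ (2 * ((j : ℝ) + 1) + 1 - (s + 2)) = a ^ (-1 - s) * a ^ (2 * j + 2) := by
    rw [← Real.rpow_natCast, ← Real.rpow_add ha]; congr 1; push_cast; ring
  have e2 : a ^ (2 * (j : ℝ) + 1 - s) = a ^ (-1 - s) * a ^ (2 * j + 2) := by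
    rw [← Real.rpow_natCast, ← Real.rpow_add ha]; congr 1; push_cast; ring
  have e3 : a ^ (-s) = a ^ (-1 - s) * a := by
    rw [← Real.rpow_add_one ha.ne']; congr 1; ring
  have e4 : 2 * ((j : ℝ) + 1) + 1 - (s + 2) = 2 * (j : ℝ) + 1 - s := by ring
  have f1 : ((2 * (j + 1)).factorial : ℝ) = (2 * j + 2) * ((2 * j + 1) * ((2 * j).factorial : ℝ)) := by
    rw [show 2 * (j + 1) = (2 * j + 1) + 1 by ring, Nat.factorial_succ, Nat.factorial_succ]
    push_cast; ring
  have f2 : ((2 * j + 1).factorial : ℝ) = (2 * j + 1) * ((2 * j).factorial : ℝ) := by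
    rw [Nat.factorial_succ]; push_cast; ring
  have f3 : ((2 * j).factorial : ℝ) ≠ 0 := by positivity
  have f4 : 2 * (j : ℝ) + 1 ≠ 0 := by positivity
  have f5 : 2 * (j : ℝ) + 2 ≠ 0 := by positivity
  unfold kap
  push_cast
  rw [e4, e2, e3, f1, f2]
  rw [mul_pow, mul_pow, show 2 * (j + 1) = 2 * j + 2 by ring, pow_succ (-1 : ℝ) j]
  generalize a ^ (-1 - s) = A
  generalize (-1 : ℝ) ^ j = σ
  generalize ((2 * j).factorial : ℝ) = φ at *
  generalize (j : ℝ) = J at *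
  rw [pow_add z, pow_add z, pow_add a, pow_add a]
  generalize z ^ (2 * j) = Z
  generalize a ^ (2 * j) = B
  have f6 : J + 1 ≠ 0 := by intro h; apply f5; linarith
  field_simp
  ring

lemma cJ_hasSum_aux {a z : ℝ} (ha : 0 < a) (hz : 0 < z) (m : ℕ) : ∀ s : ℝ, 1 < s →
    (∀ k : ℕ, s ≠ 2 * k + 1) → s < 2 * m + 3 →
    HasSum (kap a z s) (cH s * z ^ (s - 1) - cJ a z s) := by
  induction m with
  | zero => intro s hs1 _ hs3; exact cJ_base ha hz hs1 (by simpa using hs3)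
  | succ m ih =>
    intro s' hs1' hodd' hs3'
    by_cases hlt : s' < 3
    · exact cJ_base ha hz hs1' hlt
    have h3 : s' ≠ 3 := by have := hodd' 1; norm_num at this; exact this
    have hgt : 3 < s' := lt_of_le_of_ne (not_lt.1 hlt) h3.symm
    obtain ⟨s, rfl⟩ : ∃ s, s' = s + 2 := ⟨s' - 2, by ring⟩
    have hs1 : 1 < s := by linarith
    have hodd : ∀ k : ℕ, s ≠ 2 * k + 1 := fun k h => hodd' (k + 1) (by push_cast; linarith)
    have hI := ih s hs1 hodd (by push_cast at hs3'; linarith)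
    have hc := ((hasSum_nat_add_iff' 1).2 (Real.hasSum_cos (z * a))).mul_left (a ^ (-1 - s))
    have hsn := (Real.hasSum_sin (z * a)).mul_left (z / s * a ^ (-s))
    have htot := ((hc.neg.sub (hI.mul_left (z ^ 2 / s))).add hsn).congr_fun
      (fun j => kap_succ ha hs1 hodd j)
    have hs0 : s ≠ 0 := by linarith
    have hsp : s + 1 ≠ 0 := by linarith
    have hdiv := htot.div_const (s + 1)
    simp only [mul_div_cancel_left₀ _ hsp] at hdiv
    have hfin := (hasSum_nat_add_iff 1).1 hdiv
    refine hasSum_val hfin ?_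
    have hr := cJ_rec (z := z) ha hs1
    have hH := cH_add_two (show 0 < s by linarith)
    have hk : kap a z (s + 2) 0 = -(a ^ (-1 - s) / (s + 1)) := by
      simp only [kap, Nat.cast_zero, mul_zero, pow_zero, Nat.factorial_zero, Nat.cast_one, zero_add]
      rw [show 1 - (s + 2) = -(s + 1) by ring, show -(s + 1) = -1 - s by ring,
        show (-1 - s) = -(s + 1) by ring, div_neg]
      ring
    have hzp : z ^ (s + 2 - 1) = z ^ 2 * z ^ (s - 1) := by
      rw [← Real.rpow_natCast, ← Real.rpow_add hz]; congr 1; push_cast; ring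
    simp only [Finset.sum_range_one]
    rw [hk, hzp]
    simp only [mul_zero, pow_zero, Nat.factorial_zero, Nat.cast_one, div_one]
    have hH' : cH (s + 2) = -cH s / s / (s + 1) := by rw [← hH]; field_simp
    have hJ' : cJ a z (s + 2) = (Real.cos (z * a) * a ^ (-1 - s)
        - z / s * (Real.sin (z * a) * a ^ (-s)) - z ^ 2 / s * cJ a z s) / (s + 1) := by
      rw [← hr]; field_simp; ring
    rw [hH', hJ']
    field_simp
    ring

lemma cJ_hasSum {a z s : ℝ} (ha : 0 < a) (hz : 0 < z) (hs1 : 1 < s)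
    (hs : ∀ k : ℕ, s ≠ 2 * k + 1) :
    HasSum (kap a z s) (cH s * z ^ (s - 1) - cJ a z s) := by
  obtain ⟨m, hm⟩ := exists_nat_gt s
  exact cJ_hasSum_aux ha hz m s hs1 hs (by have := Nat.cast_nonneg (α := ℝ) m; linarith)

lemma dagum_one_eq (lam u : ℝ) : dagum lam 1 u = 1 - (u / (1 + u)) ^ lam := by
  simp [dagum]

lemma hasDerivAt_dagum_one {lam u : ℝ} (hu : 0 < u) :
    HasDerivAt (dagum lam 1) (-lam * (1 - dagum lam 1 u) / (u * (1 + u))) u := by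
  have hu1 : 0 < 1 + u := by linarith
  have e : dagum lam 1 = fun u => 1 - (u / (1 + u)) ^ lam := by
    ext u; exact dagum_one_eq lam u
  have hq : 0 < u / (1 + u) := by positivity
  have h1 : HasDerivAt (fun u : ℝ => u / (1 + u)) (1 / (1 + u) ^ 2) u := by
    refine ((hasDerivAt_id u).div ((hasDerivAt_id u).const_add 1) hu1.ne').congr_deriv ?_
    simp
  have h2 := (h1.rpow_const (p := lam) (Or.inl hq.ne')).const_sub 1
  rw [e]
  refine h2.congr_deriv ?_
  simp only [sub_sub_cancel]
  rw [Real.rpow_sub_one hq.ne']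
  field_simp

lemma continuousOn_dagum_one {lam : ℝ} (hlam : 0 < lam) : ContinuousOn (dagum lam 1) (Ici 0) := by
  have e : dagum lam 1 = fun u => 1 - (u / (1 + u)) ^ lam := by
    ext u; exact dagum_one_eq lam u
  rw [e]
  refine continuousOn_const.sub (ContinuousOn.rpow_const ?_ (fun _ _ => Or.inr hlam.le))
  refine continuousOn_id.div (continuousOn_const.add continuousOn_id) fun u hu => ?_
  have : (0 : ℝ) ≤ u := hu
  positivity

lemma integrableOn_Ioc_rpow_dagum {lam δ x b : ℝ} (hlam : 0 < lam) (hx : 0 < x) (hb : 0 < b) :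
    IntegrableOn (fun u => u ^ (x - 1) * dagum lam δ u) (Ioc 0 b) := by
  refine Integrable.mono' (setIntegral_rpow_Ioc hb (show -1 < x - 1 by linarith)).1
    ((by fun_prop : Measurable fun t : ℝ => t ^ (x - 1)).mul
      (measurable_dagum lam δ)).aestronglyMeasurable ?_
  refine ae_restrict_of_forall_mem measurableSet_Ioc fun t ht => ?_
  have h0 := dagum_nonneg (δ := δ) hlam ht.1
  have h2 := dagum_le_one (lam := lam) (δ := δ) ht.1
  have h3 := Real.rpow_pos_of_pos ht.1 (x - 1)
  rw [Real.norm_eq_abs, abs_of_nonneg (by positivity)]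
  nlinarith

/-- Truncated Mellin transform. -/
noncomputable def cI (lam b x : ℝ) : ℝ := ∫ u in Ioc 0 b, u ^ (x - 1) * dagum lam 1 u

/-- Analytically continued Mellin transform. -/
noncomputable def cP (lam x : ℝ) : ℝ := -(Real.Gamma (lam + x) * Real.Gamma (-x) / Real.Gamma lam)

/-- Tail terms for the truncated Mellin transform. -/
noncomputable def sig (lam b x : ℝ) (n : ℕ) : ℝ :=
  dc lam (n + 1) * (b ^ (x - (n + 1)) / (x - (n + 1)))

lemma cP_add_one {lam x : ℝ} (hlam : 0 < lam) (hx : 0 < x) :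
    (x + 1) * cP lam (x + 1) = -(lam + x) * cP lam x := by
  have h1 : Real.Gamma (lam + (x + 1)) = (lam + x) * Real.Gamma (lam + x) := by
    rw [← Real.Gamma_add_one (by positivity)]; congr 1; ring
  have h2 : Real.Gamma (-x) = -(x + 1) * Real.Gamma (-(x + 1)) := by
    rw [← Real.Gamma_add_one (by linarith)]; congr 1; ring
  unfold cP
  rw [h1, h2]
  ring

lemma mellin_dagum_one {lam x : ℝ} (hlam : 0 < lam) (hx0 : 0 < x) (hx1 : x < 1) :
    ∫ u in Ioi (0 : ℝ), u ^ (x - 1) * dagum lam 1 u = cP lam x := by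
  have i1 := integrableOn_rpow_mul_dagum hlam hx0 hx1
  have i2 := integrableOn_betaPrime (p := lam + x) (q := 1 - x) (by linarith) (by linarith)
  have v2 := integral_betaPrime (p := lam + x) (q := 1 - x) (by linarith) (by linarith)
  rw [show lam + x + (1 - x) = lam + 1 by ring] at i2 v2
  set F : ℝ → ℝ := fun u => u ^ x * dagum lam 1 u with hF
  have hd : ∀ u ∈ Ioi (0 : ℝ), HasDerivAt F (x * (u ^ (x - 1) * dagum lam 1 u)
      - lam * (u ^ (lam + x - 1) * (1 + u) ^ (-(lam + 1)))) u := by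
    intro u hu
    have hu0 : (0 : ℝ) < u := hu
    have hu1 : (0 : ℝ) < 1 + u := by positivity
    refine ((Real.hasDerivAt_rpow_const (p := x) (Or.inl hu0.ne')).mul
      (hasDerivAt_dagum_one hu0)).congr_deriv ?_
    have e : 1 - dagum lam 1 u = u ^ lam * (1 + u) ^ (-lam) := by
      rw [dagum_one_eq, sub_sub_cancel, Real.div_rpow hu0.le hu1.le, Real.rpow_neg hu1.le]
      rfl
    have e2 : u ^ (lam + x - 1) = u ^ x * u ^ lam / u := by
      rw [show lam + x - 1 = x + lam - 1 by ring, Real.rpow_sub_one hu0.ne', Real.rpow_add hu0]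
    have e3 : (1 + u) ^ (-(lam + 1)) = (1 + u) ^ (-lam) / (1 + u) := by
      rw [neg_add, ← sub_eq_add_neg (-lam), Real.rpow_sub_one hu1.ne' (-lam)]
    rw [e, e2, e3, Real.rpow_sub_one hu0.ne' x]
    field_simp
    ring
  have hcont : ContinuousWithinAt F (Ici 0) 0 := by
    apply ContinuousWithinAt.mul
    · exact (Real.continuousAt_rpow_const 0 x (Or.inr hx0.le)).continuousWithinAt
    · exact continuousOn_dagum_one hlam 0 self_mem_Ici
  have hl : Filter.Tendsto F Filter.atTop (nhds 0) := by
    have g : Filter.Tendsto (fun u : ℝ => lam * u ^ (-(1 - x))) Filter.atTop (nhds 0) := by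
      simpa using (tendsto_rpow_neg_atTop (show 0 < 1 - x by linarith)).const_mul lam
    refine squeeze_zero' ?_ ?_ g
    · filter_upwards [Filter.eventually_gt_atTop 0] with u hu
      exact mul_nonneg (by positivity) (dagum_nonneg hlam hu)
    · filter_upwards [Filter.eventually_gt_atTop 0] with u hu
      have h1 := dagum_le (δ := 1) hlam hu
      have h2 := Real.rpow_pos_of_pos hu x
      rw [show -(1 - x) = x + -1 by ring, Real.rpow_add hu]
      simp only [hF]
      nlinarith
  have h := integral_Ioi_of_hasDerivAt_of_tendsto hcont hd
    ((i1.const_mul x).sub (i2.const_mul lam)) hl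
  rw [integral_sub (i1.const_mul x) (i2.const_mul lam), integral_const_mul, integral_const_mul,
    v2] at h
  have hF0 : F 0 = 0 := by simp [hF, Real.zero_rpow hx0.ne']
  rw [hF0, Real.Gamma_add_one hlam.ne'] at h
  have hG : Real.Gamma (1 - x) = -x * Real.Gamma (-x) := by
    rw [← Real.Gamma_add_one (by linarith)]; congr 1; ring
  rw [hG] at h
  have hΓ := (Real.Gamma_pos_of_pos hlam).ne'
  have : lam * (Real.Gamma (lam + x) * (-x * Real.Gamma (-x)) / (lam * Real.Gamma lam))
      = x * cP lam x := by
    unfold cP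
    field_simp
  rw [this, ← mul_sub] at h
  have h5 : x ≠ 0 := hx0.ne'
  have := (mul_eq_zero.1 (h.trans (sub_zero 0))).resolve_left h5
  linarith

lemma sig_base {lam b x : ℝ} (hlam : 0 < lam) (hb : 1 < b) (hx0 : 0 < x) (hx1 : x < 1) :
    HasSum (sig lam b x) (cP lam x - cI lam b x) := by
  have hb0 : 0 < b := by linarith
  have h := (hasSum_tail (w := fun u => u ^ (x - 1)) hlam hb hx1 one_pos (by fun_prop)
    (fun t ht => by rw [abs_of_pos (Real.rpow_pos_of_pos ht _)])).neg
  rw [neg_neg] at h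
  have hI := integrableOn_rpow_mul_dagum hlam hx0 hx1
  have hsplit : ∫ u in Ioi (0 : ℝ), u ^ (x - 1) * dagum lam 1 u
      = (∫ u in Ioc 0 b, u ^ (x - 1) * dagum lam 1 u)
        + ∫ u in Ioi b, u ^ (x - 1) * dagum lam 1 u := by
    rw [← Ioc_union_Ioi_eq_Ioi hb0.le]
    apply setIntegral_union Ioc_disjoint_Ioi_same measurableSet_Ioi
    · exact hI.mono_set Ioc_subset_Ioi_self
    · exact hI.mono_set (Ioi_subset_Ioi hb0.le)
  rw [mellin_dagum_one hlam hx0 hx1] at hsplit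
  refine hasSum_val (h.congr_fun fun n => ?_) (by rw [hsplit, cI]; ring)
  have hn := Nat.cast_nonneg (α := ℝ) n
  have e : ∫ t in Ioi b, t ^ (x - 1) * t ^ (-(((n : ℝ) + 1) * 1))
      = ∫ t in Ioi b, t ^ (x - 1 - (n + 1)) := by
    refine setIntegral_congr_fun measurableSet_Ioi fun t ht => ?_
    have ht0 : 0 < t := lt_trans hb0 ht
    rw [← Real.rpow_add ht0]; congr 1; ring
  rw [e, integral_Ioi_rpow_of_lt (by linarith) hb0, sig]
  rw [show x - 1 - ((n : ℝ) + 1) + 1 = x - (n + 1) by ring]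
  ring

lemma cI_rec {lam b x : ℝ} (hlam : 0 < lam) (hb : 0 < b) (hx : 0 < x) :
    (x + 1) * cI lam b (x + 1) + (lam + x) * cI lam b x
      = (b ^ (x + 1) + b ^ x) * dagum lam 1 b + lam * b ^ x / x := by
  have i1 := integrableOn_Ioc_rpow_dagum (δ := 1) hlam (show 0 < x + 1 by linarith) hb
  have i2 := integrableOn_Ioc_rpow_dagum (δ := 1) hlam hx hb
  obtain ⟨i3, v3⟩ := setIntegral_rpow_Ioc hb (show -1 < x - 1 by linarith)
  set F : ℝ → ℝ := fun u => (u ^ (x + 1) + u ^ x) * dagum lam 1 u with hF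
  set F' : ℝ → ℝ := fun u => (x + 1) * (u ^ (x + 1 - 1) * dagum lam 1 u)
    + (lam + x) * (u ^ (x - 1) * dagum lam 1 u) - lam * u ^ (x - 1) with hF'
  have hd : ∀ u ∈ Ioo 0 b, HasDerivAt F (F' u) u := by
    intro u hu
    have hu0 : (0 : ℝ) < u := hu.1
    refine (((Real.hasDerivAt_rpow_const (p := x + 1) (Or.inl hu0.ne')).add
      (Real.hasDerivAt_rpow_const (p := x) (Or.inl hu0.ne'))).mul
      (hasDerivAt_dagum_one hu0)).congr_deriv ?_
    simp only [hF', Pi.add_apply, add_sub_cancel_right]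
    rw [Real.rpow_sub_one hu0.ne', Real.rpow_add_one hu0.ne']
    have hu1 : 1 + u ≠ 0 := by positivity
    field_simp
    ring
  have hc : ContinuousOn F (Icc 0 b) := by
    refine ContinuousOn.mul (ContinuousOn.add ?_ ?_)
      ((continuousOn_dagum_one hlam).mono Icc_subset_Ici_self)
    · exact continuousOn_id.rpow_const fun _ _ => Or.inr (by linarith)
    · exact continuousOn_id.rpow_const fun _ _ => Or.inr (by linarith)
  have hintg : IntegrableOn F' (Ioc 0 b) :=
    ((i1.const_mul _).add (i2.const_mul _)).sub (i3.const_mul _)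
  have h := intervalIntegral.integral_eq_sub_of_hasDerivAt_of_le hb.le hc hd
    ((intervalIntegrable_iff_integrableOn_Ioc_of_le hb.le).2 hintg)
  rw [intervalIntegral.integral_of_le hb.le] at h
  have e : ∫ u in Ioc 0 b, F' u = (x + 1) * cI lam b (x + 1) + (lam + x) * cI lam b x
      - lam * (b ^ (x - 1 + 1) / (x - 1 + 1)) := by
    have i12 : IntegrableOn (fun u => (x + 1) * (u ^ (x + 1 - 1) * dagum lam 1 u)
        + (lam + x) * (u ^ (x - 1) * dagum lam 1 u)) (Ioc 0 b) :=
      (i1.const_mul _).add (i2.const_mul _)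
    simp only [hF', cI]
    rw [integral_sub i12 (i3.const_mul _),
      integral_add (i1.const_mul _) (i2.const_mul _), integral_const_mul, integral_const_mul,
      integral_const_mul, v3]
  rw [e] at h
  have hF0 : F 0 = 0 := by
    simp [hF, Real.zero_rpow hx.ne', Real.zero_rpow (show x + 1 ≠ 0 by linarith)]
  rw [hF0] at h
  simp only [hF, sub_add_cancel] at h
  have e3 : lam * b ^ x / x = lam * (b ^ x / x) := by ring
  rw [e3]
  linarith

lemma sig_succ {lam b x : ℝ} (hlam : 0 < lam) (hb : 0 < b) (hxn : ∀ n : ℕ, x ≠ n)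
    (n : ℕ) : (x + 1) * sig lam b (x + 1) (n + 1) =
      b ^ (x + 1) * (dc lam (n + 1 + 1) * b ^ (-((((n + 1 : ℕ) : ℝ) + 1) * 1)))
      - (lam + x) * sig lam b x n
      + b ^ x * (dc lam (n + 1) * b ^ (-(((n : ℝ) + 1) * 1))) := by
  have hne : x - (n + 1) ≠ 0 := fun h => hxn (n + 1) (by push_cast; linarith)
  have hrec := dc_succ hlam (n + 1)
  push_cast at hrec
  have e1 : b ^ (x + 1) * b ^ (-((((n + 1 : ℕ) : ℝ) + 1) * 1)) = b ^ (x - (n + 1)) := by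
    rw [← Real.rpow_add hb]; congr 1; push_cast; ring
  have e2 : b ^ x * b ^ (-(((n : ℝ) + 1) * 1)) = b ^ (x - (n + 1)) := by
    rw [← Real.rpow_add hb]; congr 1; ring
  have e3 : x + 1 - (((n + 1 : ℕ) : ℝ) + 1) = x - (n + 1) := by push_cast; ring
  rw [mul_left_comm, e1, mul_left_comm (b ^ x), e2, sig, sig, e3]
  generalize b ^ (x - ((n : ℝ) + 1)) = B
  generalize dc lam (n + 1 + 1) = c2 at *
  generalize dc lam (n + 1) = c1 at *
  field_simp
  linear_combination B * hrec

lemma sig_hasSum_aux {lam b : ℝ} (hlam : 0 < lam) (hb : 1 < b) (m : ℕ) : ∀ x : ℝ, 0 < x →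
    (∀ n : ℕ, x ≠ n) → x < m + 1 → HasSum (sig lam b x) (cP lam x - cI lam b x) := by
  have hb0 : 0 < b := by linarith
  induction m with
  | zero => intro x hx _ hx1; exact sig_base hlam hb hx (by simpa using hx1)
  | succ m ih =>
    intro x' hx' hxn' hxm'
    by_cases hlt : x' < 1
    · exact sig_base hlam hb hx' hlt
    have h1 : x' ≠ 1 := by have := hxn' 1; simpa using this
    have hgt : 1 < x' := lt_of_le_of_ne (not_lt.1 hlt) h1.symm
    obtain ⟨x, rfl⟩ : ∃ x, x' = x + 1 := ⟨x' - 1, by ring⟩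
    have hx : 0 < x := by linarith
    have hxn : ∀ n : ℕ, x ≠ n := fun n h => hxn' (n + 1) (by push_cast; linarith)
    have hI := ih x hx hxn (by push_cast at hxm'; linarith)
    have hD := hasSum_dc_dagum hlam one_pos hb
    have hD1 := ((hasSum_nat_add_iff' 1).2 hD).mul_left (b ^ (x + 1))
    have htot := ((hD1.sub (hI.mul_left (lam + x))).add (hD.mul_left (b ^ x))).congr_fun
      (fun j => sig_succ hlam hb0 hxn j)
    have hxp : x + 1 ≠ 0 := by linarith
    have hdiv := htot.div_const (x + 1)
    simp only [mul_div_cancel_left₀ _ hxp] at hdiv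
    have hfin := (hasSum_nat_add_iff 1).1 hdiv
    refine hasSum_val hfin ?_
    have hd1 : dc lam 1 = -lam := by
      have := dc_succ hlam 0
      simpa [dc_zero hlam] using this
    have hr := cI_rec hlam hb0 hx
    have hP := cP_add_one hlam hx
    have hk : (x + 1) * sig lam b (x + 1) 0 = -lam * b ^ x * (1 + 1 / x) := by
      simp only [sig, Nat.cast_zero, zero_add, hd1, add_sub_cancel_right]
      field_simp
    simp only [Finset.sum_range_one, Nat.cast_zero, zero_add, mul_one, hd1]
    have hbb : b ^ (x + 1) * (-lam * b ^ (-1 : ℝ)) = -lam * b ^ x := by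
      rw [Real.rpow_add_one hb0.ne', Real.rpow_neg_one]; field_simp
    apply mul_left_cancel₀ hxp
    rw [mul_add, hk, mul_div_cancel₀ _ hxp]
    rw [mul_sub (b ^ (x + 1)), hbb]
    have e3 : lam * b ^ x / x = lam * b ^ x * (1 / x) := by ring
    rw [e3] at hr
    linear_combination hP - hr

lemma sig_hasSum {lam b x : ℝ} (hlam : 0 < lam) (hb : 1 < b) (hx : 0 < x)
    (hxn : ∀ n : ℕ, x ≠ n) : HasSum (sig lam b x) (cP lam x - cI lam b x) := by
  obtain ⟨m, hm⟩ := exists_nat_gt x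
  exact sig_hasSum_aux hlam hb m x hx hxn (by linarith)

lemma double_sum_swap {f : ℕ × ℕ → ℝ} (hf : Summable f) {r c : ℕ → ℝ}
    (hr : ∀ n, HasSum (fun k => f (n, k)) (r n)) (hc : ∀ k, HasSum (fun n => f (n, k)) (c k)) :
    ∃ S, HasSum r S ∧ HasSum c S := by
  refine ⟨∑' p, f p, hf.hasSum.prod_fiberwise hr, ?_⟩
  have h : HasSum (fun p : ℕ × ℕ => f (p.2, p.1)) (∑' p, f p) :=
    (Equiv.prodComm ℕ ℕ).hasSum_iff.2 hf.hasSum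
  exact h.prod_fiberwise hc

lemma factorial_two_mul_gamma (k : ℕ) : ((2 * k).factorial : ℝ) * Real.sqrt Real.pi
    = 4 ^ k * k.factorial * Real.Gamma (k + 1 / 2) := by
  induction k with
  | zero => simp [-one_div, Real.Gamma_one_half_eq]
  | succ k ih =>
    have h1 : Real.Gamma (((k + 1 : ℕ) : ℝ) + 1 / 2)
        = ((k : ℝ) + 1 / 2) * Real.Gamma (k + 1 / 2) := by
      rw [← Real.Gamma_add_one (by positivity)]; congr 1; push_cast; ring
    rw [h1, show 2 * (k + 1) = 2 * k + 1 + 1 by ring, Nat.factorial_succ, Nat.factorial_succ,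
      Nat.factorial_succ]
    push_cast
    linear_combination ((2 * (k : ℝ) + 1 + 1) * (2 * k + 1)) * ih

lemma ioc_change_var {lam δ a : ℝ} (hδ : 0 < δ) (ha : 0 < a) (k : ℕ) :
    ∫ t in Ioc 0 a, t ^ (2 * k) * dagum lam δ t
      = cI lam (a ^ δ) ((1 + 2 * k) / δ) / δ := by
  set x : ℝ := (1 + 2 * k) / δ with hx
  have hxδ : δ * x = 1 + 2 * k := by rw [hx]; field_simp
  have h := integral_comp_rpow_Ioi_of_pos
    (g := (Ioc 0 (a ^ δ)).indicator fun u => u ^ (x - 1) * dagum lam 1 u) hδ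
  have e1 : ∫ y in Ioi (0 : ℝ), (Ioc 0 (a ^ δ)).indicator
      (fun u => u ^ (x - 1) * dagum lam 1 u) y = cI lam (a ^ δ) x := by
    rw [setIntegral_indicator measurableSet_Ioc, inter_eq_right.2 Ioc_subset_Ioi_self, cI]
  have e2 : ∫ t in Ioi (0 : ℝ), (δ * t ^ (δ - 1)) • (Ioc 0 (a ^ δ)).indicator
      (fun u => u ^ (x - 1) * dagum lam 1 u) (t ^ δ)
      = ∫ t in Ioi (0 : ℝ), (Ioc 0 a).indicator (fun t => δ * (t ^ (2 * k) * dagum lam δ t)) t := by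
    refine setIntegral_congr_fun measurableSet_Ioi fun t ht => ?_
    have ht0 : (0 : ℝ) < t := ht
    by_cases hta : t ≤ a
    · rw [indicator_of_mem (show t ∈ Ioc 0 a from ⟨ht0, hta⟩), indicator_of_mem
        (show t ^ δ ∈ Ioc 0 (a ^ δ) from
          ⟨Real.rpow_pos_of_pos ht0 _, Real.rpow_le_rpow ht0.le hta hδ.le⟩)]
      have e3 : dagum lam 1 (t ^ δ) = dagum lam δ t := by simp [dagum]
      have e4 : t ^ (δ - 1) * (t ^ δ) ^ (x - 1) = t ^ (2 * k) := by
        rw [← Real.rpow_mul ht0.le, ← Real.rpow_add ht0, ← Real.rpow_natCast]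
        congr 1
        push_cast
        linear_combination hxδ
      rw [e3, smul_eq_mul, ← e4]
      ring
    · have : ¬ t ^ δ ≤ a ^ δ := by
        rw [Real.rpow_le_rpow_iff ht0.le ha.le hδ]; exact hta
      rw [indicator_of_notMem (fun h => this h.2), indicator_of_notMem (fun h => hta h.2), smul_zero]
  rw [e1, e2, setIntegral_indicator measurableSet_Ioc, inter_eq_right.2 Ioc_subset_Ioi_self,
    integral_const_mul] at h
  rw [← h]
  field_simp

lemma integrableOn_pow_dagum {lam δ a : ℝ} (hlam : 0 < lam) (ha : 0 < a) (k : ℕ) :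
    IntegrableOn (fun t => t ^ (2 * k) * dagum lam δ t) (Ioc 0 a) := by
  have h := integrableOn_Ioc_rpow_dagum (δ := δ) (x := 2 * k + 1) hlam (by positivity) ha
  refine h.congr_fun (fun t ht => ?_) measurableSet_Ioc
  have : (2 : ℝ) * k + 1 - 1 = ((2 * k : ℕ) : ℝ) := by push_cast; ring
  simp only [this, Real.rpow_natCast]

lemma cos_ioc_hasSum {lam δ a : ℝ} (hlam : 0 < lam) (hδ : 0 < δ) (ha : 0 < a) (z : ℝ) :
    HasSum (fun k : ℕ => (-1) ^ k * z ^ (2 * k) / ((2 * k).factorial : ℝ)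
      * (cI lam (a ^ δ) ((1 + 2 * k) / δ) / δ))
      (∫ t in Ioc 0 a, Real.cos (z * t) * dagum lam δ t) := by
  have h := hasSum_integral_of_summable_integral_norm (μ := volume.restrict (Ioc 0 a))
    (F := fun (k : ℕ) t => (-1) ^ k * z ^ (2 * k) / ((2 * k).factorial : ℝ)
      * (t ^ (2 * k) * dagum lam δ t))
    (fun k => (integrableOn_pow_dagum hlam ha k).const_mul _) (by
      have hs := (summable_even_pow_div (z * a)).mul_left a
      refine Summable.of_nonneg_of_le (fun k => integral_nonneg fun t => norm_nonneg _)
        (fun k => ?_) hs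
      have hb : ∀ t ∈ Ioc 0 a, ‖(-1) ^ k * z ^ (2 * k) / ((2 * k).factorial : ℝ)
          * (t ^ (2 * k) * dagum lam δ t)‖ ≤ (z * a) ^ (2 * k) / ((2 * k).factorial : ℝ) := by
        intro t ht
        have h0 := dagum_nonneg (δ := δ) hlam ht.1
        have h1 := dagum_le_one (lam := lam) (δ := δ) ht.1
        have h2 : t ^ (2 * k) ≤ a ^ (2 * k) := pow_le_pow_left₀ ht.1.le ht.2 _
        have h3 : 0 ≤ t ^ (2 * k) := pow_nonneg ht.1.le _
        have h4 : 0 ≤ z ^ (2 * k) := by rw [pow_mul]; positivity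
        rw [Real.norm_eq_abs, abs_mul, abs_div, abs_mul, abs_pow, abs_neg, abs_one, one_pow, one_mul,
          abs_of_nonneg h4, Nat.abs_cast, abs_of_nonneg (mul_nonneg h3 h0), mul_pow, mul_div_right_comm]
        gcongr
        nlinarith
      have hn := norm_setIntegral_le_of_norm_le_const (μ := volume) (s := Ioc 0 a)
        (f := fun t => ‖(-1) ^ k * z ^ (2 * k) / ((2 * k).factorial : ℝ)
          * (t ^ (2 * k) * dagum lam δ t)‖) (by simp) (fun t ht => by
          rw [norm_norm]; exact hb t ht)
      rw [Real.volume_real_Ioc_of_le ha.le, sub_zero, mul_comm _ a] at hn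
      exact (le_abs_self _).trans hn)
  simp only [integral_const_mul, ioc_change_var hδ ha] at h
  refine hasSum_val h (setIntegral_congr_fun measurableSet_Ioc fun t _ => ?_)
  have hc := (Real.hasSum_cos (z * t)).mul_right (dagum lam δ t)
  refine hc.tsum_eq.symm.trans (tsum_congr fun k => ?_)
  rw [mul_pow]; ring

lemma dist_bound {δ C τ : ℝ} (hδ : 0 < δ)
    (hdio : ∀ m : ℕ, C * (1 + (m : ℝ)) ^ (-τ)
      ≤ |(1 + 2 * (m : ℝ)) / δ - round ((1 + 2 * (m : ℝ)) / δ)|) (k n : ℕ) :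
    δ * (C * (1 + (k : ℝ)) ^ (-τ)) ≤ |2 * (k : ℝ) + 1 - ((n : ℝ) + 1) * δ| := by
  have h1 := hdio k
  have h2 := round_le ((1 + 2 * (k : ℝ)) / δ) ((n : ℤ) + 1)
  have e : 2 * (k : ℝ) + 1 - ((n : ℝ) + 1) * δ
      = δ * ((1 + 2 * (k : ℝ)) / δ - (((n : ℤ) + 1 : ℤ) : ℝ)) := by
    push_cast; field_simp; ring
  rw [e, abs_mul, abs_of_pos hδ]
  exact mul_le_mul_of_nonneg_left (h1.trans h2) hδ.le

lemma double_summable {lam δ C τ a z : ℝ} (hlam : 0 < lam) (hδ : 0 < δ) (hC : 0 < C) (hτ : 0 < τ)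
    (hdio : ∀ m : ℕ, C * (1 + (m : ℝ)) ^ (-τ)
      ≤ |(1 + 2 * (m : ℝ)) / δ - round ((1 + 2 * (m : ℝ)) / δ)|) (ha : 1 < a) (hz : 0 < z) :
    Summable (fun p : ℕ × ℕ => dc lam (p.1 + 1) * kap a z (((p.1 : ℝ) + 1) * δ) p.2) := by
  have ha0 : 0 < a := by linarith
  have hn := summable_dc_succ hlam (Real.rpow_pos_of_pos ha0 (-δ)).le (rpow_neg_lt_one ha hδ)
  have hk := (summable_even_pow_div (Real.exp τ * z * a)).mul_left (a / (δ * C))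
  have hp := hn.mul_of_nonneg hk (fun n => by positivity) (fun k => by positivity)
  refine Summable.of_norm_bounded hp ?_
  rintro ⟨n, k⟩
  have hd := dist_bound hδ hdio k n
  have hk1 : (0 : ℝ) < 1 + k := by positivity
  have hpos : 0 < (1 + (k : ℝ)) ^ (-τ) := Real.rpow_pos_of_pos hk1 _
  have hpos2 : 0 < δ * (C * (1 + (k : ℝ)) ^ (-τ)) := by positivity
  have hexp : (1 + (k : ℝ)) ^ τ ≤ Real.exp τ ^ (2 * k) := by
    rw [← Real.exp_nat_mul, Real.rpow_def_of_pos hk1, Real.exp_le_exp]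
    have h1 := Real.log_le_sub_one_of_pos hk1
    have h2 : (0 : ℝ) ≤ k := by positivity
    push_cast
    nlinarith
  have hA : a ^ (2 * (k : ℝ) + 1 - ((n : ℝ) + 1) * δ) = a * a ^ (2 * k) * (a ^ (-δ)) ^ (n + 1) := by
    rw [← rpow_neg_mul_nat ha0, sub_eq_add_neg, Real.rpow_add ha0, Real.rpow_add_one ha0.ne',
      show (2 : ℝ) * k = ((2 * k : ℕ) : ℝ) by push_cast; ring, Real.rpow_natCast]
    ring
  have hinv : |2 * (k : ℝ) + 1 - ((n : ℝ) + 1) * δ|⁻¹ ≤ Real.exp τ ^ (2 * k) / (δ * C) := by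
    refine (inv_anti₀ hpos2 hd).trans ?_
    rw [Real.rpow_neg hk1.le]
    have : 0 < (1 + (k : ℝ)) ^ τ := Real.rpow_pos_of_pos hk1 _
    rw [show (δ * (C * ((1 + (k : ℝ)) ^ τ)⁻¹))⁻¹ = (1 + (k : ℝ)) ^ τ / (δ * C) by field_simp]
    gcongr
  have hadpos := Real.rpow_pos_of_pos ha0 (-δ)
  simp only [kap]
  rw [Real.norm_eq_abs, hA, abs_mul, abs_mul, abs_div, abs_mul, abs_pow, abs_neg, abs_one, one_pow,
    one_mul, abs_div, Nat.abs_cast, abs_of_pos (pow_pos hz _),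
    abs_of_pos (show 0 < a * a ^ (2 * k) * (a ^ (-δ)) ^ (n + 1) by positivity)]
  calc |dc lam (n + 1)| * (z ^ (2 * k) / ((2 * k).factorial : ℝ)
        * (a * a ^ (2 * k) * (a ^ (-δ)) ^ (n + 1) / |2 * (k : ℝ) + 1 - ((n : ℝ) + 1) * δ|))
      = |dc lam (n + 1)| * (z ^ (2 * k) / ((2 * k).factorial : ℝ)
        * (a * a ^ (2 * k) * (a ^ (-δ)) ^ (n + 1) * |2 * (k : ℝ) + 1 - ((n : ℝ) + 1) * δ|⁻¹)) := by
        rw [div_eq_mul_inv (a * a ^ (2 * k) * (a ^ (-δ)) ^ (n + 1))]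
    _ ≤ |dc lam (n + 1)| * (z ^ (2 * k) / ((2 * k).factorial : ℝ)
        * (a * a ^ (2 * k) * (a ^ (-δ)) ^ (n + 1) * (Real.exp τ ^ (2 * k) / (δ * C)))) := by
        gcongr
    _ = _ := by
        rw [mul_pow, mul_pow]; ring

lemma kap_eq_sig {lam δ a z : ℝ} (hδ : 0 < δ) (ha : 0 < a) (n k : ℕ) :
    dc lam (n + 1) * kap a z (((n : ℝ) + 1) * δ) k
      = (-1) ^ k * z ^ (2 * k) / ((2 * k).factorial : ℝ) / δ
        * sig lam (a ^ δ) ((1 + 2 * k) / δ) n := by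
  set x : ℝ := (1 + 2 * k) / δ with hx
  have hxδ : δ * x = 1 + 2 * k := by rw [hx]; field_simp
  have e1 : (a ^ δ) ^ (x - ((n : ℝ) + 1)) = a ^ (2 * (k : ℝ) + 1 - ((n : ℝ) + 1) * δ) := by
    rw [← Real.rpow_mul ha.le]; congr 1; linear_combination hxδ
  have e2 : 2 * (k : ℝ) + 1 - ((n : ℝ) + 1) * δ = δ * (x - (n + 1)) := by
    linear_combination -hxδ
  rw [kap, sig, e1, e2, div_mul_eq_div_div (a ^ _) δ]
  ring

lemma termA_eq {lam δ z : ℝ} (hlam : 0 < lam) (hz : 0 < z) (n : ℕ) :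
    dagumTermA lam δ z (n + 1) = Real.Gamma lam * z / Real.sqrt Real.pi
      * (dc lam (n + 1) * (cH (((n : ℝ) + 1) * δ) * z ^ (((n : ℝ) + 1) * δ - 1))) := by
  have hΓ := (Real.Gamma_pos_of_pos hlam).ne'
  have hπ : Real.sqrt Real.pi ≠ 0 := by positivity
  have hf : ((n + 1).factorial : ℝ) ≠ 0 := by positivity
  have e : (z / 2) ^ (((n : ℝ) + 1) * δ) = z ^ (((n : ℝ) + 1) * δ) * 2 ^ (-(((n : ℝ) + 1) * δ)) := by
    rw [Real.div_rpow hz.le two_pos.le, Real.rpow_neg two_pos.le]; rfl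
  rw [dagumTermA, dc, cH, Real.rpow_sub_one hz.ne']
  push_cast
  rw [e]
  field_simp

lemma termB_eq {lam δ z : ℝ} (hlam : 0 < lam) (hδ : 0 < δ) (k : ℕ) :
    dagumTermB lam δ z k = -(Real.Gamma lam * δ / Real.sqrt Real.pi)
      * ((-1) ^ k * z ^ (2 * k) / ((2 * k).factorial : ℝ) / δ * cP lam ((1 + 2 * k) / δ)) := by
  have hΓ := (Real.Gamma_pos_of_pos hlam).ne'
  have hπ : Real.sqrt Real.pi ≠ 0 := by positivity
  have hf : (k.factorial : ℝ) ≠ 0 := by positivity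
  have hg : Real.Gamma ((k : ℝ) + 1 / 2) ≠ 0 := (Real.Gamma_pos_of_pos (by positivity)).ne'
  have h2 : ((2 * k).factorial : ℝ)
      = 4 ^ k * k.factorial * Real.Gamma (k + 1 / 2) / Real.sqrt Real.pi := by
    rw [← factorial_two_mul_gamma]; field_simp
  have h4 : (z / 2) ^ (2 * k) = z ^ (2 * k) / 4 ^ k := by
    rw [div_pow, pow_mul 2 2 k]; norm_num
  rw [dagumTermB, cP, h2, h4]
  generalize Real.Gamma ((k : ℝ) + 1 / 2) = G at *
  field_simp

theorem dagum_spectral_density_series (δ lam : ℝ) (hδ1 : 1 < δ) (hδ2 : δ < 2)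
    (hlam : 0 < lam) (hdl0 : 0 < δ * lam) (hdl2 : δ * lam < 2)
    (C τ : ℝ) (hC : 0 < C) (hτ : 0 < τ)
    (hdio : ∀ m : ℕ, C * (1 + (m : ℝ)) ^ (-τ)
      ≤ |(1 + 2 * (m : ℝ)) / δ - round ((1 + 2 * (m : ℝ)) / δ)|)
    (z : ℝ) (hz : 0 < z) :
    Summable (fun n : ℕ => |dagumTermA lam δ z (n + 1)|) ∧
    Summable (fun n : ℕ => |dagumTermB lam δ z n|) ∧
    (1 / Real.pi) * ∫ t in Ioi (0 : ℝ), Real.cos (z * t) * dagum lam δ t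
      = -(z⁻¹ / (Real.sqrt Real.pi * Real.Gamma lam)) * (∑' n : ℕ, dagumTermA lam δ z (n + 1))
        - (1 / (Real.sqrt Real.pi * Real.Gamma lam * δ)) * (∑' n : ℕ, dagumTermB lam δ z n) := by
  have hδ : 0 < δ := by linarith
  obtain ⟨a, ha⟩ : ∃ a : ℝ, 1 < a := ⟨2, by norm_num⟩
  have ha0 : 0 < a := by linarith
  have hb : 1 < a ^ δ := Real.one_lt_rpow ha hδ
  have hne : ∀ k n : ℕ, 2 * (k : ℝ) + 1 - ((n : ℝ) + 1) * δ ≠ 0 := by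
    intro k n h
    have h1 := dist_bound hδ hdio k n
    rw [h, abs_zero] at h1
    have : 0 < δ * (C * (1 + (k : ℝ)) ^ (-τ)) := by positivity
    linarith
  have hxn : ∀ k n : ℕ, (1 + 2 * (k : ℝ)) / δ ≠ n := by
    intro k n h
    have h1 := hdio k
    rw [h, round_natCast] at h1
    have : 0 < C * (1 + (k : ℝ)) ^ (-τ) := by positivity
    simp at h1
    linarith
  -- row and column sums of the double series
  have hrow : ∀ n : ℕ, HasSum (fun k => dc lam (n + 1) * kap a z (((n : ℝ) + 1) * δ) k)
      (dc lam (n + 1) * (cH (((n : ℝ) + 1) * δ) * z ^ (((n : ℝ) + 1) * δ - 1)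
        - cJ a z (((n : ℝ) + 1) * δ))) := by
    intro n
    have hn := Nat.cast_nonneg (α := ℝ) n
    refine (cJ_hasSum ha0 hz (by nlinarith) fun k h => hne k n ?_).mul_left _
    linarith
  have hcol : ∀ k : ℕ, HasSum (fun n : ℕ => dc lam (n + 1) * kap a z (((n : ℝ) + 1) * δ) k)
      ((-1) ^ k * z ^ (2 * k) / ((2 * k).factorial : ℝ) / δ
        * (cP lam ((1 + 2 * k) / δ) - cI lam (a ^ δ) ((1 + 2 * k) / δ))) := by
    intro k
    exact ((sig_hasSum hlam hb (by positivity) (hxn k)).mul_left _).congr_fun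
      fun n => kap_eq_sig hδ ha0 n k
  obtain ⟨S, hS1, hS2⟩ := double_sum_swap
    (double_summable hlam hδ hC hτ hdio ha hz) hrow hcol
  have htail := hasSum_tail (w := fun t => Real.cos (z * t)) (s := 1) hlam ha hδ1 hδ (by fun_prop)
    (fun t ht => by simpa using Real.abs_cos_le_one (z * t))
  have hioc := cos_ioc_hasSum hlam hδ ha0 z
  -- the two series
  have hA : HasSum (fun n : ℕ => dc lam (n + 1)
      * (cH (((n : ℝ) + 1) * δ) * z ^ (((n : ℝ) + 1) * δ - 1)))
      (S + -∫ t in Ioi a, Real.cos (z * t) * dagum lam δ t) :=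
    (hS1.add htail).congr_fun fun n => by rw [cJ]; ring
  have hB : HasSum (fun k : ℕ => (-1) ^ k * z ^ (2 * k) / ((2 * k).factorial : ℝ) / δ
      * cP lam ((1 + 2 * k) / δ))
      (S + ∫ t in Ioc 0 a, Real.cos (z * t) * dagum lam δ t) :=
    (hS2.add hioc).congr_fun fun k => by ring
  have hA2 := (hA.mul_left (Real.Gamma lam * z / Real.sqrt Real.pi)).congr_fun
    fun n => termA_eq (δ := δ) hlam hz n
  have hB2 := (hB.mul_left (-(Real.Gamma lam * δ / Real.sqrt Real.pi))).congr_fun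
    fun k => termB_eq (z := z) hlam hδ k
  refine ⟨hA2.summable.abs, hB2.summable.abs, ?_⟩
  have hD : IntegrableOn (fun t => Real.cos (z * t) * dagum lam δ t) (Ioi 0) := by
    have h1 := integrableOn_rpow_mul_dagum (δ := δ) hlam one_pos hδ1
    refine Integrable.mono' h1 ((by fun_prop : Measurable fun t : ℝ => Real.cos (z * t)).mul
      (measurable_dagum lam δ)).aestronglyMeasurable ?_
    refine ae_restrict_of_forall_mem measurableSet_Ioi fun t ht => ?_
    have h0 := dagum_nonneg (δ := δ) hlam ht
    rw [Real.norm_eq_abs, abs_mul, abs_of_nonneg h0, sub_self, Real.rpow_zero]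
    exact mul_le_mul_of_nonneg_right (Real.abs_cos_le_one _) h0
  have hsplit : ∫ t in Ioi (0 : ℝ), Real.cos (z * t) * dagum lam δ t
      = (∫ t in Ioc 0 a, Real.cos (z * t) * dagum lam δ t)
        + ∫ t in Ioi a, Real.cos (z * t) * dagum lam δ t := by
    rw [← Ioc_union_Ioi_eq_Ioi ha0.le]
    apply setIntegral_union Ioc_disjoint_Ioi_same measurableSet_Ioi
    · exact hD.mono_set Ioc_subset_Ioi_self
    · exact hD.mono_set (Ioi_subset_Ioi ha0.le)
  rw [hsplit, hA2.tsum_eq, hB2.tsum_eq]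
  have hΓ := (Real.Gamma_pos_of_pos hlam).ne'
  have hπ : Real.sqrt Real.pi ≠ 0 := by positivity
  have hπ2 : Real.pi = Real.sqrt Real.pi * Real.sqrt Real.pi :=
    (Real.mul_self_sqrt Real.pi_pos.le).symm
  generalize (∫ t in Ioc 0 a, Real.cos (z * t) * dagum lam δ t) = I1
  generalize (∫ t in Ioi a, Real.cos (z * t) * dagum lam δ t) = I2
  have e1 : 1 / Real.pi = 1 / (Real.sqrt Real.pi * Real.sqrt Real.pi) := by rw [← hπ2]
  rw [e1]
  field_simp
  ring
end

section
/- Let d = 1, δ ∈ (0,1), λ > 0 with δλ ∈ (0,2]. Then for every z > 0 the improper integral \widehat{D}(z) = (1/π) lim_{T→∞} ∫₀^T cos(z t) D_{λ,δ}(t) dt exists, and z^{1−δ} \widehat{D}(z) → 2^{−δ} λ Γ((1−δ)/2) / ( √π Γ(δ/2) ) as z → 0⁺. -/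
open MeasureTheory Set Filter intervalIntegral

lemma aux_beta (δ : ℝ) (h0 : 0 < δ) (h1 : δ < 1) :
    ∫ x in Ioi (0:ℝ), x ^ δ * (1 + x ^ 2)⁻¹ =
      1 / 2 * Real.Gamma ((1 + δ) / 2) * Real.Gamma ((1 - δ) / 2) := by
  have hx : ∀ y ∈ Ioi (0:ℝ), ∫ x in Ioi (0:ℝ), x ^ δ * Real.exp (-((1 + x ^ 2) * y)) =
      (1 / 2 * Real.Gamma ((1 + δ) / 2)) * (Real.exp (-y) * y ^ ((1 - δ) / 2 - 1)) := by
    intro y hy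
    have h := integral_rpow_mul_exp_neg_mul_rpow (p := 2) (q := δ) (b := y) (by norm_num)
      (by linarith) hy
    have e : ∀ x : ℝ, x ^ δ * Real.exp (-((1 + x ^ 2) * y)) =
        Real.exp (-y) * (x ^ δ * Real.exp (-y * x ^ (2:ℝ))) := by
      intro x
      rw [Real.rpow_two, mul_left_comm, ← Real.exp_add]
      ring_nf
    simp_rw [e]
    rw [MeasureTheory.integral_const_mul, h]
    rw [show (1 - δ) / 2 - 1 = -(δ + 1) / 2 by ring, add_comm δ 1]
    ring
  have hy : ∀ x ∈ Ioi (0:ℝ), ∫ y in Ioi (0:ℝ), x ^ δ * Real.exp (-((1 + x ^ 2) * y)) =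
      x ^ δ * (1 + x ^ 2)⁻¹ := by
    intro x hx
    rw [MeasureTheory.integral_const_mul]
    congr 1
    have := integral_exp_mul_Ioi (a := -(1 + x ^ 2)) (by nlinarith [sq_nonneg x]) 0
    simp_rw [← neg_mul]
    rw [this]
    rw [mul_zero, Real.exp_zero, neg_div_neg_eq, one_div]
  rw [← setIntegral_congr_fun measurableSet_Ioi hy, integral_integral_swap,
    setIntegral_congr_fun measurableSet_Ioi hx, MeasureTheory.integral_const_mul,
    ← Real.Gamma_eq_integral (by linarith)]
  rw [integrable_prod_iff' (by
    apply Measurable.aestronglyMeasurable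
    unfold Function.uncurry
    fun_prop)]
  constructor
  · filter_upwards [ae_restrict_mem measurableSet_Ioi] with y hy
    apply Integrable.of_integral_ne_zero
    simp only [Function.uncurry]
    rw [hx y hy]
    have : (0:ℝ) < y := hy
    have := Real.Gamma_pos_of_pos (s := (1 + δ) / 2) (by linarith)
    positivity
  · have : IntegrableOn (fun y : ℝ => (1 / 2 * Real.Gamma ((1 + δ) / 2)) * (Real.exp (-y) * y ^ ((1 - δ) / 2 - 1))) (Ioi 0) :=
      (Real.GammaIntegral_convergent (by linarith)).const_mul _
    refine IntegrableOn.congr_fun this ?_ measurableSet_Ioi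
    intro y hy
    dsimp only
    rw [← hx y hy]
    apply setIntegral_congr_fun measurableSet_Ioi
    intro x hx
    have : (0:ℝ) < x := hx
    simp only [Function.uncurry, Real.norm_eq_abs]
    rw [abs_of_nonneg (by positivity)]

lemma aux_laplace (x : ℝ) (hx : 0 < x) :
    ∫ s in Ioi (0:ℝ), Real.sin s * Real.exp (-(s * x)) = (1 + x ^ 2)⁻¹ := by
  have hpos : 0 < 1 + x ^ 2 := by positivity
  have hexp : Tendsto (fun s : ℝ => Real.exp (-(s * x))) atTop (nhds 0) :=
    Real.tendsto_exp_neg_atTop_nhds_zero.comp (tendsto_id.atTop_mul_const hx)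
  have hexpint : IntegrableOn (fun s : ℝ => Real.exp (-(s * x))) (Ioi 0) := by
    have := integrableOn_exp_mul_Ioi (a := -x) (by linarith) 0
    refine this.congr_fun (fun s _ => ?_) measurableSet_Ioi
    dsimp only; ring_nf
  have hd : ∀ s ∈ Ici (0:ℝ), HasDerivAt
      (fun s => -(1 + x ^ 2)⁻¹ * ((x * Real.sin s + Real.cos s) * Real.exp (-(s * x))))
      (Real.sin s * Real.exp (-(s * x))) s := by
    intro s _
    have h1 : HasDerivAt (fun s => Real.exp (-(s * x))) (Real.exp (-(s * x)) * -(1 * x)) s :=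
      (((hasDerivAt_id s).mul_const x).neg).exp
    have h2 := ((((Real.hasDerivAt_sin s).const_mul x).add (Real.hasDerivAt_cos s)).mul h1).const_mul
      (-(1 + x ^ 2)⁻¹)
    refine h2.congr_deriv ?_
    simp only [Pi.add_apply]
    field_simp
    ring
  rw [integral_Ioi_of_hasDerivAt_of_tendsto' hd ?_ (m := 0) ?_]
  · simp
  · refine hexpint.mono' (by fun_prop) (ae_of_all _ fun s => ?_)
    rw [norm_mul, Real.norm_eq_abs, Real.norm_eq_abs, Real.abs_exp]
    exact mul_le_of_le_one_left (Real.exp_pos _).le (Real.abs_sin_le_one s)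
  · rw [show (0:ℝ) = -(1 + x ^ 2)⁻¹ * 0 by simp]
    refine Tendsto.const_mul _ ?_
    refine squeeze_zero_norm (a := fun s => (x + 1) * Real.exp (-(s * x))) (fun s => ?_)
      (by simpa using hexp.const_mul (x + 1))
    rw [norm_mul, Real.norm_eq_abs, Real.norm_eq_abs, Real.abs_exp]
    gcongr
    rw [abs_le]
    have := Real.sin_le_one s
    have := Real.neg_one_le_sin s
    have := Real.cos_le_one s
    have := Real.neg_one_le_cos s
    constructor <;> nlinarith

lemma aux_sin_int (δ : ℝ) (h0 : 0 < δ) (h1 : δ < 1) :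
    IntegrableOn (fun s : ℝ => |Real.sin s| * s ^ (-1 - δ)) (Ioi 0) := by
  rw [← Ioc_union_Ioi_eq_Ioi zero_le_one]
  refine IntegrableOn.union ?_ ?_
  · have : IntegrableOn (fun s : ℝ => s ^ (-δ)) (Ioc 0 1) := by
      rw [← intervalIntegrable_iff_integrableOn_Ioc_of_le zero_le_one]
      exact intervalIntegrable_rpow' (by linarith)
    refine Integrable.mono' this ?_ ?_
    · apply Measurable.aestronglyMeasurable; fun_prop
    · filter_upwards [ae_restrict_mem measurableSet_Ioc] with s hs
      have hs0 : 0 < s := hs.1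
      rw [Real.norm_eq_abs, abs_of_nonneg (by positivity)]
      calc |Real.sin s| * s ^ (-1 - δ) ≤ s * s ^ (-1 - δ) := by
            gcongr
            calc |Real.sin s| ≤ |s| := Real.abs_sin_le_abs
              _ = s := abs_of_pos hs0
        _ = s ^ (-δ) := by
            rw [← Real.rpow_one_add' hs0.le (by linarith)]; ring_nf
  · have := integrableOn_Ioi_rpow_of_lt (a := -1 - δ) (by linarith) zero_lt_one
    refine Integrable.mono' this ?_ ?_
    · apply Measurable.aestronglyMeasurable; fun_prop
    · filter_upwards [ae_restrict_mem measurableSet_Ioi] with s hs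
      have hs0 : 0 < s := zero_lt_one.trans hs
      rw [Real.norm_eq_abs, abs_of_nonneg (by positivity)]
      exact mul_le_of_le_one_left (by positivity) (Real.abs_sin_le_one s)

lemma aux_sin_val (δ : ℝ) (h0 : 0 < δ) (h1 : δ < 1) :
    Real.Gamma (1 + δ) * ∫ s in Ioi (0:ℝ), Real.sin s * s ^ (-1 - δ) =
      1 / 2 * Real.Gamma ((1 + δ) / 2) * Real.Gamma ((1 - δ) / 2) := by
  have hG := Real.Gamma_pos_of_pos (s := 1 + δ) (by linarith)
  have hk : ∀ s ∈ Ioi (0:ℝ), ∫ x in Ioi (0:ℝ), x ^ δ * Real.exp (-(s * x)) =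
      Real.Gamma (1 + δ) * s ^ (-1 - δ) := by
    intro s hs
    have hs0 : 0 < s := hs
    have := Real.integral_rpow_mul_exp_neg_mul_Ioi (a := 1 + δ) (r := s) (by linarith) hs
    rw [show 1 + δ - 1 = δ by ring] at this
    rw [this, one_div, Real.inv_rpow hs0.le, ← Real.rpow_neg hs0.le, mul_comm]
    ring_nf
  have hki : ∀ s ∈ Ioi (0:ℝ), IntegrableOn (fun x => x ^ δ * Real.exp (-(s * x))) (Ioi 0) := by
    intro s hs
    have hs0 : 0 < s := hs
    apply Integrable.of_integral_ne_zero
    rw [hk s hs]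
    positivity
  have hx : ∀ x ∈ Ioi (0:ℝ), ∫ s in Ioi (0:ℝ), Real.sin s * (x ^ δ * Real.exp (-(s * x))) =
      x ^ δ * (1 + x ^ 2)⁻¹ := by
    intro x hx
    rw [← aux_laplace x hx, ← MeasureTheory.integral_const_mul]
    congr 1; ext s; ring
  have hs : ∀ s ∈ Ioi (0:ℝ), ∫ x in Ioi (0:ℝ), Real.sin s * (x ^ δ * Real.exp (-(s * x))) =
      Real.Gamma (1 + δ) * (Real.sin s * s ^ (-1 - δ)) := by
    intro s hs
    rw [MeasureTheory.integral_const_mul, hk s hs]; ring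
  rw [← aux_beta δ h0 h1, ← setIntegral_congr_fun measurableSet_Ioi hx, ← MeasureTheory.integral_const_mul,
    ← setIntegral_congr_fun measurableSet_Ioi hs, integral_integral_swap]
  rw [integrable_prod_iff (by
    apply Measurable.aestronglyMeasurable
    unfold Function.uncurry
    fun_prop)]
  constructor
  · filter_upwards [ae_restrict_mem measurableSet_Ioi] with s hs
    have h := (hki s hs).const_mul (Real.sin s)
    exact h
  · have : IntegrableOn (fun s : ℝ => Real.Gamma (1 + δ) * (|Real.sin s| * s ^ (-1 - δ))) (Ioi 0) :=
      (aux_sin_int δ h0 h1).const_mul _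
    refine IntegrableOn.congr_fun this ?_ measurableSet_Ioi
    intro s hs
    dsimp only
    rw [mul_left_comm, ← hk s hs, ← MeasureTheory.integral_const_mul]
    apply setIntegral_congr_fun measurableSet_Ioi
    intro x hx
    have : (0:ℝ) < x := hx
    simp only [Function.uncurry, Real.norm_eq_abs]
    rw [abs_mul, abs_of_nonneg (by positivity : 0 ≤ x ^ δ * Real.exp (-(s * x)))]

lemma aux_w_nonneg (δ t : ℝ) (ht : 0 ≤ t) : 0 ≤ t ^ δ / (1 + t ^ δ) := by positivity

lemma aux_w_le_one (δ t : ℝ) (ht : 0 ≤ t) : t ^ δ / (1 + t ^ δ) ≤ 1 := by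
  have : 0 ≤ t ^ δ := by positivity
  rw [div_le_one (by linarith)]; linarith

lemma aux_w_tendsto (δ : ℝ) (h0 : 0 < δ) :
    Tendsto (fun t : ℝ => t ^ δ / (1 + t ^ δ)) atTop (nhds 1) := by
  have h1 : Tendsto (fun t : ℝ => 1 - (1 + t ^ δ)⁻¹) atTop (nhds (1 - 0)) :=
    (tendsto_inv_atTop_zero.comp
      (tendsto_atTop_add_const_left _ 1 (tendsto_rpow_atTop h0))).const_sub 1
  rw [sub_zero] at h1
  refine h1.congr' ?_
  filter_upwards [eventually_ge_atTop 0] with t ht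
  have : 0 ≤ t ^ δ := by positivity
  field_simp
  ring

lemma aux_w_cont (δ lam : ℝ) (h0 : 0 < δ) (hl : 0 < lam) :
    ContinuousOn (fun t : ℝ => (t ^ δ / (1 + t ^ δ)) ^ lam) (Ici 0) := by
  have hc : Continuous (fun t : ℝ => t ^ δ) := Real.continuous_rpow_const h0.le
  refine ContinuousOn.rpow_const ?_ (fun x _ => Or.inr hl.le)
  refine hc.continuousOn.div (by fun_prop) ?_
  intro x hx
  have : 0 ≤ x ^ δ := Real.rpow_nonneg hx _
  positivity

lemma aux_w_deriv (δ lam t : ℝ) (ht : 0 < t) :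
    HasDerivAt (fun t : ℝ => (t ^ δ / (1 + t ^ δ)) ^ lam)
      (lam * δ * (t ^ (-1 - δ) * (t ^ δ / (1 + t ^ δ)) ^ (lam + 1))) t := by
  have hp : 0 < t ^ δ := by positivity
  have h1 : HasDerivAt (fun t : ℝ => t ^ δ) (δ * t ^ (δ - 1)) t :=
    Real.hasDerivAt_rpow_const (Or.inl ht.ne')
  have hw : 0 < t ^ δ / (1 + t ^ δ) := by positivity
  have h2 := (h1.div (h1.const_add 1) (by positivity)).rpow_const (p := lam) (Or.inl hw.ne')
  refine h2.congr_deriv ?_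
  simp only [Pi.div_apply]
  rw [show lam + 1 = (lam - 1) + 2 by ring, Real.rpow_add hw, Real.rpow_two,
    show -1 - δ = (δ - 1) - δ - δ by ring, Real.rpow_sub ht _ δ, Real.rpow_sub ht _ δ]
  field_simp
  ring

lemma aux_exists (δ lam : ℝ) (h0 : 0 < δ) (hl : 0 < lam) (z : ℝ) (hz : 0 < z) :
    Tendsto (fun T : ℝ => (1 / Real.pi) * ∫ t in (0 : ℝ)..T, Real.cos (z * t) * dagum lam δ t)
      atTop (nhds ((1 / Real.pi) * (z⁻¹ * ∫ t in Ioi (0:ℝ), Real.sin (z * t) *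
        (lam * δ * (t ^ (-1 - δ) * (t ^ δ / (1 + t ^ δ)) ^ (lam + 1)))))) := by
  set g : ℝ → ℝ := fun t => lam * δ * (t ^ (-1 - δ) * (t ^ δ / (1 + t ^ δ)) ^ (lam + 1)) with hg
  refine Tendsto.const_mul _ ?_
  have hw1 : Tendsto (fun t : ℝ => (t ^ δ / (1 + t ^ δ)) ^ lam) atTop (nhds 1) := by
    simpa using (aux_w_tendsto δ h0).rpow_const (p := lam) (Or.inl one_ne_zero)
  have hgi : IntegrableOn g (Ioi 0) := by
    refine integrableOn_Ioi_deriv_of_nonneg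
      ((aux_w_cont δ lam h0 hl) 0 self_mem_Ici) (fun t ht => aux_w_deriv δ lam t ht) ?_ hw1
    intro t ht
    have : (0:ℝ) < t := ht
    positivity
  have hsgi : IntegrableOn (fun t => Real.sin (z * t) * g t) (Ioi 0) := by
    refine hgi.bdd_mul (c := 1) (by fun_prop) (ae_of_all _ fun t => ?_)
    exact Real.abs_sin_le_one _
  have hparts : ∀ T : ℝ, 0 < T → ∫ t in (0 : ℝ)..T, Real.cos (z * t) * dagum lam δ t =
      z⁻¹ * (Real.sin (z * T) * dagum lam δ T) + z⁻¹ * ∫ t in (0:ℝ)..T, Real.sin (z * t) * g t := by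
    intro T hT
    have h := integral_mul_deriv_eq_deriv_mul_of_hasDerivAt (a := 0) (b := T)
      (u := dagum lam δ) (u' := fun t => - g t) (v := fun t => z⁻¹ * Real.sin (z * t))
      (v' := fun t => Real.cos (z * t)) ?_ (by fun_prop) ?_ ?_ ?_
      ((by fun_prop : Continuous fun t => Real.cos (z * t)).intervalIntegrable _ _)
    · simp_rw [mul_comm (Real.cos _)]
      rw [h]
      have : ∀ x, -g x * (z⁻¹ * Real.sin (z * x)) = -(z⁻¹ * (Real.sin (z * x) * g x)) := by
        intro x; ring
      simp_rw [this]
      rw [intervalIntegral.integral_neg, intervalIntegral.integral_const_mul]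
      simp
      ring
    · rw [uIcc_of_le hT.le]
      exact (continuousOn_const.sub (aux_w_cont δ lam h0 hl)).mono Icc_subset_Ici_self
    · intro x hx
      rw [min_eq_left hT.le] at hx
      exact (aux_w_deriv δ lam x hx.1).const_sub 1
    · intro x hx
      have := (((hasDerivAt_id x).const_mul z).sin).const_mul z⁻¹
      refine this.congr_deriv ?_
      simp only [id]
      field_simp
    · rw [intervalIntegrable_iff_integrableOn_Ioc_of_le hT.le]
      exact (hgi.mono_set Ioc_subset_Ioi_self).neg
  have hlim : Tendsto (fun T : ℝ => z⁻¹ * (Real.sin (z * T) * dagum lam δ T) +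
      z⁻¹ * ∫ t in (0:ℝ)..T, Real.sin (z * t) * g t) atTop
      (nhds (z⁻¹ * 0 + z⁻¹ * ∫ t in Ioi (0:ℝ), Real.sin (z * t) * g t)) := by
    refine (Tendsto.const_mul _ ?_).add
      ((intervalIntegral_tendsto_integral_Ioi 0 hsgi tendsto_id).const_mul _)
    have hd : Tendsto (dagum lam δ) atTop (nhds 0) := by
      have h := hw1.const_sub 1
      rw [sub_self] at h
      exact h
    refine squeeze_zero_norm (a := fun T => ‖dagum lam δ T‖) (fun T => ?_) (by simpa using hd.norm)
    rw [norm_mul]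
    exact mul_le_of_le_one_left (norm_nonneg _) (Real.abs_sin_le_one _)
  rw [mul_zero, zero_add] at hlim
  refine hlim.congr' ?_
  filter_upwards [eventually_gt_atTop 0] with T hT
  exact (hparts T hT).symm

lemma aux_scale (δ lam : ℝ) (z : ℝ) (hz : 0 < z) :
    z ^ (1 - δ) * ((1 / Real.pi) * (z⁻¹ * ∫ t in Ioi (0:ℝ), Real.sin (z * t) *
        (lam * δ * (t ^ (-1 - δ) * (t ^ δ / (1 + t ^ δ)) ^ (lam + 1))))) =
    (1 / Real.pi) * (lam * δ) * ∫ s in Ioi (0:ℝ), Real.sin s * s ^ (-1 - δ) *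
        ((s / z) ^ δ / (1 + (s / z) ^ δ)) ^ (lam + 1) := by
  have h := integral_comp_mul_left_Ioi (fun s => Real.sin s *
        (lam * δ * ((s / z) ^ (-1 - δ) * ((s / z) ^ δ / (1 + (s / z) ^ δ)) ^ (lam + 1)))) 0 hz
  simp only [mul_div_cancel_left₀ _ hz.ne', mul_zero] at h
  rw [h]
  have e : ∀ s ∈ Ioi (0:ℝ), Real.sin s *
        (lam * δ * ((s / z) ^ (-1 - δ) * ((s / z) ^ δ / (1 + (s / z) ^ δ)) ^ (lam + 1))) =
      lam * δ * z ^ (1 + δ) * (Real.sin s * s ^ (-1 - δ) *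
        ((s / z) ^ δ / (1 + (s / z) ^ δ)) ^ (lam + 1)) := by
    intro s hs
    have hs0 : 0 < s := hs
    rw [Real.div_rpow hs0.le hz.le (-1 - δ), show -1 - δ = -(1 + δ) by ring,
      Real.rpow_neg hz.le, div_inv_eq_mul]
    ring
  rw [setIntegral_congr_fun measurableSet_Ioi e, MeasureTheory.integral_const_mul, smul_eq_mul]
  have hzz : z ^ (1 - δ) * z ^ (1 + δ) = z ^ 2 := by
    rw [← Real.rpow_add hz, ← Real.rpow_two]; ring_nf
  generalize (∫ s in Ioi (0:ℝ), Real.sin s * s ^ (-1 - δ) *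
        ((s / z) ^ δ / (1 + (s / z) ^ δ)) ^ (lam + 1)) = I
  have : z ^ (1 - δ) * (1 / Real.pi * (z⁻¹ * (z⁻¹ * (lam * δ * z ^ (1 + δ) * I)))) =
    (z ^ (1 - δ) * z ^ (1 + δ)) * (z⁻¹) ^ 2 * (1 / Real.pi * (lam * δ) * I) := by ring
  rw [this, hzz]
  field_simp

lemma aux_lim (δ lam : ℝ) (h0 : 0 < δ) (h1 : δ < 1) (hl : 0 < lam) :
    Tendsto (fun z : ℝ => ∫ s in Ioi (0:ℝ), Real.sin s * s ^ (-1 - δ) *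
        ((s / z) ^ δ / (1 + (s / z) ^ δ)) ^ (lam + 1)) (nhdsWithin 0 (Ioi 0))
      (nhds (∫ s in Ioi (0:ℝ), Real.sin s * s ^ (-1 - δ))) := by
  refine tendsto_integral_filter_of_dominated_convergence
    (fun s => |Real.sin s| * s ^ (-1 - δ)) ?_ ?_ (aux_sin_int δ h0 h1) ?_
  · refine Eventually.of_forall fun z => ?_
    apply Measurable.aestronglyMeasurable; fun_prop
  · filter_upwards [self_mem_nhdsWithin] with z hz
    filter_upwards [ae_restrict_mem measurableSet_Ioi] with s hs
    have hz0 : (0:ℝ) < z := hz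
    have hs0 : (0:ℝ) < s := hs
    have hq : 0 ≤ s / z := by positivity
    rw [norm_mul, norm_mul, Real.norm_eq_abs, Real.norm_eq_abs, Real.norm_eq_abs,
      abs_of_nonneg (Real.rpow_nonneg hs0.le (-1 - δ)),
      abs_of_nonneg (Real.rpow_nonneg (aux_w_nonneg δ _ hq) (lam + 1))]
    refine mul_le_of_le_one_right
      (mul_nonneg (abs_nonneg _) (Real.rpow_nonneg hs0.le _)) ?_
    exact Real.rpow_le_one (aux_w_nonneg δ _ hq) (aux_w_le_one δ _ hq) (by linarith)
  · filter_upwards [ae_restrict_mem measurableSet_Ioi] with s hs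
    have hs0 : (0:ℝ) < s := hs
    have ht : Tendsto (fun z : ℝ => s / z) (nhdsWithin 0 (Ioi 0)) atTop := by
      simp_rw [div_eq_mul_inv]
      exact tendsto_inv_nhdsGT_zero.const_mul_atTop hs0
    have := (((aux_w_tendsto δ h0).comp ht).rpow_const (p := lam + 1)
      (Or.inl one_ne_zero)).const_mul (Real.sin s * s ^ (-1 - δ))
    simpa using this

lemma aux_const (δ lam : ℝ) (h0 : 0 < δ) (h1 : δ < 1) :
    (1 / Real.pi) * (lam * δ) * (∫ s in Ioi (0:ℝ), Real.sin s * s ^ (-1 - δ)) =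
      2 ^ (-δ) * lam * Real.Gamma ((1 - δ) / 2) / (Real.sqrt Real.pi * Real.Gamma (δ / 2)) := by
  have hv := aux_sin_val δ h0 h1
  have hG := Real.Gamma_pos_of_pos (s := δ) h0
  have hG2 := Real.Gamma_pos_of_pos (s := δ / 2) (by linarith)
  have hd := Real.Gamma_mul_Gamma_add_half (δ / 2)
  rw [show 2 * (δ / 2) = δ by ring, show δ / 2 + 1 / 2 = (1 + δ) / 2 by ring,
    show 1 - δ = -δ + 1 by ring, Real.rpow_add_one two_ne_zero] at hd
  rw [add_comm 1 δ, Real.Gamma_add_one h0.ne', add_comm δ 1] at hv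
  have hs : Real.sqrt Real.pi ^ 2 = Real.pi := Real.sq_sqrt Real.pi_pos.le
  have hsp : 0 < Real.sqrt Real.pi := Real.sqrt_pos.mpr Real.pi_pos
  generalize (∫ s in Ioi (0:ℝ), Real.sin s * s ^ (-1 - δ)) = I at *
  have key : lam * δ * I * Real.Gamma (δ / 2) =
      lam * 2 ^ (-δ) * Real.Gamma ((1 - δ) / 2) * Real.sqrt Real.pi := by
    apply mul_left_cancel₀ hG.ne'
    linear_combination lam * Real.Gamma (δ / 2) * hv +
      lam * Real.Gamma ((1 - δ) / 2) / 2 * hd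
  have hpi : Real.pi ≠ 0 := Real.pi_ne_zero
  rw [eq_div_iff (by positivity)]
  calc 1 / Real.pi * (lam * δ) * I * (Real.sqrt Real.pi * Real.Gamma (δ / 2))
      = 1 / Real.pi * Real.sqrt Real.pi * (lam * δ * I * Real.Gamma (δ / 2)) := by ring
    _ = 1 / Real.pi * Real.sqrt Real.pi ^ 2 * (2 ^ (-δ) * lam * Real.Gamma ((1 - δ) / 2)) := by
        rw [key]; ring
    _ = _ := by rw [hs, one_div, inv_mul_cancel₀ hpi, one_mul]

theorem dagum_low_frequency_dim_one (δ lam : ℝ) (hδ0 : 0 < δ) (hδ1 : δ < 1)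
    (hlam : 0 < lam) (hdl0 : 0 < δ * lam) (hdl2 : δ * lam ≤ 2) :
    ∃ Dh : ℝ → ℝ,
      (∀ z : ℝ, 0 < z →
        Tendsto (fun T : ℝ => (1 / Real.pi) * ∫ t in (0 : ℝ)..T, Real.cos (z * t) * dagum lam δ t)
          atTop (nhds (Dh z))) ∧
      Tendsto (fun z : ℝ => z ^ (1 - δ) * Dh z) (nhdsWithin 0 (Ioi 0))
        (nhds (2 ^ (-δ) * lam * Real.Gamma ((1 - δ) / 2) /
          (Real.sqrt Real.pi * Real.Gamma (δ / 2)))) := by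
  refine ⟨_, fun z hz => aux_exists δ lam hδ0 hlam z hz, ?_⟩
  rw [← aux_const δ lam hδ0 hδ1]
  refine ((aux_lim δ lam hδ0 hδ1 hlam).const_mul _).congr' ?_
  filter_upwards [self_mem_nhdsWithin] with z hz
  exact (aux_scale δ lam z hz).symm
end

section
/- Let d = 3, δ ∈ (1,2), λ > 0 with δλ ∈ (0,2]. Then for every z > 0 the improper integral \widehat{D}_3(z) = (1/(2π² z)) lim_{T→∞} ∫₀^T r sin(z r) D_{λ,δ}(r) dr exists, and z^{3−δ} \widehat{D}_3(z) → 2^{−δ} λ Γ((3−δ)/2) / ( π^{3/2} Γ(δ/2) ) as z → 0⁺. -/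
open MeasureTheory Set Filter intervalIntegral

lemma lint_of {h : ℝ → ℝ} {c : ℝ} (h0 : ∀ x ∈ Ioi (0:ℝ), 0 ≤ h x)
    (hc : ∫ x in Ioi (0:ℝ), h x = c) (hc0 : 0 < c) :
    ∫⁻ x in Ioi (0:ℝ), ENNReal.ofReal (h x) = ENNReal.ofReal c := by
  have hi : Integrable h (volume.restrict (Ioi 0)) := by
    by_contra hn
    rw [integral_undef hn] at hc
    linarith
  rw [← hc, ofReal_integral_eq_lintegral_ofReal hi]
  filter_upwards [ae_restrict_mem measurableSet_Ioi] with x hx using h0 x hx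

lemma int_one_sub_cos (t : ℝ) (ht : 0 < t) :
    ∫ s in Ioi (0:ℝ), (1 - Real.cos s) * Real.exp (-(s * t)) = 1 / (t * (1 + t ^ 2)) := by
  have hlim : Tendsto (fun s : ℝ => Real.exp (-(s * t))) atTop (nhds 0) := by
    apply Real.tendsto_exp_neg_atTop_nhds_zero.comp
    exact tendsto_id.atTop_mul_const ht
  have key := integral_Ioi_of_hasDerivAt_of_nonneg' (a := (0:ℝ)) (l := 0)
    (g := fun s => Real.exp (-(s * t)) * (-(1/t) - (Real.sin s - t * Real.cos s) / (1 + t ^ 2)))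
    (g' := fun s => (1 - Real.cos s) * Real.exp (-(s * t))) ?_ ?_ ?_
  · rw [key]
    simp
    field_simp
    ring
  · intro s _
    have h1 : HasDerivAt (fun s : ℝ => Real.exp (-(s * t))) (Real.exp (-(s * t)) * (-(1 * t))) s :=
      ((hasDerivAt_id s).mul_const t).neg.exp
    have h2 : HasDerivAt (fun s : ℝ => (-(1/t) - (Real.sin s - t * Real.cos s) / (1 + t ^ 2)))
      (-((Real.cos s - t * (-Real.sin s)) / (1 + t ^ 2))) s := by
      have := (((Real.hasDerivAt_sin s).sub ((Real.hasDerivAt_cos s).const_mul t)).div_const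
        (1 + t ^ 2)).const_sub (-(1/t))
      exact this
    refine (h1.mul h2).congr_deriv ?_
    field_simp
    ring
  · intro s _
    have := Real.cos_le_one s
    have := Real.exp_pos (-(s * t))
    exact mul_nonneg (by linarith) this.le
  · refine hlim.zero_mul_isBoundedUnder_le ?_
    refine isBoundedUnder_of ⟨1 / t + (1 + t) / (1 + t ^ 2), fun s => ?_⟩
    simp only [Function.comp, Real.norm_eq_abs]
    have h1 : |Real.sin s - t * Real.cos s| ≤ 1 + t := by
      have := Real.abs_sin_le_one s
      have := Real.abs_cos_le_one s
      calc _ ≤ |Real.sin s| + |t * Real.cos s| := abs_sub _ _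
        _ ≤ _ := by rw [abs_mul, abs_of_pos ht]; nlinarith
    calc _ ≤ |-(1/t)| + |(Real.sin s - t * Real.cos s) / (1 + t ^ 2)| := abs_sub _ _
      _ ≤ _ := by
        rw [abs_neg, abs_of_pos (by positivity : 0 < 1 / t), abs_div,
          abs_of_pos (by positivity : 0 < 1 + t ^ 2)]
        gcongr

lemma lint_key (δ : ℝ) (h1 : 1 < δ) (h2 : δ < 3) :
    ENNReal.ofReal (Real.Gamma δ) *
      ∫⁻ s in Ioi (0:ℝ), ENNReal.ofReal (s ^ (-δ) * (1 - Real.cos s)) =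
    ENNReal.ofReal (1 / 2 * Real.Gamma ((δ - 1) / 2) * Real.Gamma ((3 - δ) / 2)) := by
  have hG := Real.Gamma_pos_of_pos (by linarith : 0 < δ)
  have hG1 := Real.Gamma_pos_of_pos (by linarith : 0 < (δ - 1) / 2)
  have hG2 := Real.Gamma_pos_of_pos (by linarith : 0 < (3 - δ) / 2)
  have e1 : ENNReal.ofReal (Real.Gamma δ) *
      ∫⁻ s in Ioi (0:ℝ), ENNReal.ofReal (s ^ (-δ) * (1 - Real.cos s)) =
      ∫⁻ s in Ioi (0:ℝ), ∫⁻ t in Ioi (0:ℝ),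
        ENNReal.ofReal ((1 - Real.cos s) * (t ^ (δ - 1) * Real.exp (-(s * t)))) := by
    rw [← lintegral_const_mul' _ _ ENNReal.ofReal_ne_top]
    refine setLIntegral_congr_fun measurableSet_Ioi fun s hs => ?_
    have hs : 0 < s := hs
    have hc : 0 ≤ 1 - Real.cos s := by linarith [Real.cos_le_one s]
    have := lint_of (h := fun t => t ^ (δ - 1) * Real.exp (-(s * t))) 
      (fun t ht => mul_nonneg (Real.rpow_nonneg (le_of_lt ht) _) (Real.exp_pos _).le)
      (Real.integral_rpow_mul_exp_neg_mul_Ioi (by linarith : 0 < δ) hs) (by positivity)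
    simp only [ENNReal.ofReal_mul hc]
    rw [lintegral_const_mul' _ _ ENNReal.ofReal_ne_top, this, ← ENNReal.ofReal_mul hG.le,
      ← ENNReal.ofReal_mul hc]
    congr 1
    rw [one_div, Real.inv_rpow hs.le, Real.rpow_neg hs.le]
    ring
  have e2 : ∫⁻ s in Ioi (0:ℝ), ∫⁻ t in Ioi (0:ℝ),
        ENNReal.ofReal ((1 - Real.cos s) * (t ^ (δ - 1) * Real.exp (-(s * t)))) =
      ∫⁻ t in Ioi (0:ℝ), ∫⁻ s in Ioi (0:ℝ),
        ENNReal.ofReal ((1 - Real.cos s) * (t ^ (δ - 1) * Real.exp (-(s * t)))) := by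
    refine lintegral_lintegral_swap ?_
    unfold Function.uncurry
    fun_prop
  have e3 : ∫⁻ t in Ioi (0:ℝ), ∫⁻ s in Ioi (0:ℝ),
        ENNReal.ofReal ((1 - Real.cos s) * (t ^ (δ - 1) * Real.exp (-(s * t)))) =
      ∫⁻ t in Ioi (0:ℝ), ∫⁻ u in Ioi (0:ℝ),
        ENNReal.ofReal (t ^ (δ - 2) * Real.exp (-(1 + t ^ 2) * u)) := by
    refine setLIntegral_congr_fun measurableSet_Ioi fun t ht => ?_
    have ht : 0 < t := ht
    have ha := lint_of (h := fun s => (1 - Real.cos s) * Real.exp (-(s * t)))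
      (fun s hs => mul_nonneg (by linarith [Real.cos_le_one s]) (Real.exp_pos _).le)
      (int_one_sub_cos t ht) (by positivity)
    have hb := lint_of (h := fun u => Real.exp (-(1 + t ^ 2) * u)) (c := 1 / (1 + t ^ 2))
      (fun u hu => (Real.exp_pos _).le)
      (by 
        rw [integral_exp_mul_Ioi (by nlinarith [sq_nonneg t])]
        simp only [mul_zero, Real.exp_zero]
        rw [neg_div_neg_eq]) (by positivity)
    have hp1 : 0 ≤ t ^ (δ - 1) := by positivity
    have hp2 : 0 ≤ t ^ (δ - 2) := by positivity
    simp only [mul_left_comm _ (t ^ (δ - 1)), ENNReal.ofReal_mul hp1, ENNReal.ofReal_mul hp2]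
    rw [lintegral_const_mul' _ _ ENNReal.ofReal_ne_top,
      lintegral_const_mul' _ _ ENNReal.ofReal_ne_top, ha, hb, ← ENNReal.ofReal_mul hp1,
      ← ENNReal.ofReal_mul hp2]
    congr 1
    rw [show δ - 1 = (δ - 2) + 1 by ring, Real.rpow_add_one ht.ne']
    field_simp
  have e4 : ∫⁻ t in Ioi (0:ℝ), ∫⁻ u in Ioi (0:ℝ),
        ENNReal.ofReal (t ^ (δ - 2) * Real.exp (-(1 + t ^ 2) * u)) =
      ∫⁻ u in Ioi (0:ℝ), ∫⁻ t in Ioi (0:ℝ),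
        ENNReal.ofReal (t ^ (δ - 2) * Real.exp (-(1 + t ^ 2) * u)) := by
    refine lintegral_lintegral_swap ?_
    unfold Function.uncurry
    fun_prop
  have e5 : ∫⁻ u in Ioi (0:ℝ), ∫⁻ t in Ioi (0:ℝ),
        ENNReal.ofReal (t ^ (δ - 2) * Real.exp (-(1 + t ^ 2) * u)) =
      ∫⁻ u in Ioi (0:ℝ), ENNReal.ofReal (1 / 2 * Real.Gamma ((δ - 1) / 2)) *
        ENNReal.ofReal (u ^ ((3 - δ) / 2 - 1) * Real.exp (-(1 * u))) := by
    refine setLIntegral_congr_fun measurableSet_Ioi fun u hu => ?_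
    have hu : 0 < u := hu
    have ha := lint_of (h := fun t => t ^ (δ - 2) * Real.exp (-u * t ^ (2:ℝ)))
      (fun t ht => mul_nonneg (Real.rpow_nonneg (le_of_lt ht) _) (Real.exp_pos _).le)
      (integral_rpow_mul_exp_neg_mul_rpow (by norm_num : (0:ℝ) < 2) (by linarith) hu)
      (by rw [show (δ - 2 + 1) / 2 = (δ - 1) / 2 by ring]; positivity)
    have hE := (Real.exp_pos (-u)).le
    have : ∀ t : ℝ, t ^ (δ - 2) * Real.exp (-(1 + t ^ 2) * u) =
        Real.exp (-u) * (t ^ (δ - 2) * Real.exp (-u * t ^ (2:ℝ))) := by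
      intro t
      rw [Real.rpow_two, mul_left_comm, ← Real.exp_add]
      ring_nf
    simp only [this, ENNReal.ofReal_mul hE]
    rw [lintegral_const_mul' _ _ ENNReal.ofReal_ne_top, ha, ← ENNReal.ofReal_mul hE,
      ← ENNReal.ofReal_mul (by positivity)]
    congr 1
    rw [show (δ - 2 + 1) / 2 = (δ - 1) / 2 by ring, 
      show -(δ - 2 + 1) / 2 = (3 - δ) / 2 - 1 by ring, one_mul]
    ring
  have ha := lint_of (h := fun u => u ^ ((3 - δ) / 2 - 1) * Real.exp (-(1 * u)))
      (fun t ht => mul_nonneg (Real.rpow_nonneg (le_of_lt ht) _) (Real.exp_pos _).le)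
      (Real.integral_rpow_mul_exp_neg_mul_Ioi (by linarith : 0 < (3 - δ) / 2) one_pos)
      (by positivity)
  rw [e1, e2, e3, e4, e5, lintegral_const_mul' _ _ ENNReal.ofReal_ne_top, ha,
    ← ENNReal.ofReal_mul (by positivity)]
  simp

lemma J_int (δ : ℝ) (h1 : 1 < δ) (h2 : δ < 3) :
    IntegrableOn (fun s : ℝ => s ^ (-δ) * (1 - Real.cos s)) (Ioi 0) ∧
    (δ - 1) * ∫ s in Ioi (0:ℝ), s ^ (-δ) * (1 - Real.cos s) =
      2 ^ (1 - δ) * √Real.pi * Real.Gamma ((3 - δ) / 2) / Real.Gamma (δ / 2) := by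
  have hG := Real.Gamma_pos_of_pos (by linarith : 0 < δ)
  have hG1 := Real.Gamma_pos_of_pos (by linarith : 0 < (δ - 1) / 2)
  have hG2 := Real.Gamma_pos_of_pos (by linarith : 0 < (3 - δ) / 2)
  have hG3 := Real.Gamma_pos_of_pos (by linarith : 0 < δ / 2)
  have key := lint_key δ h1 h2
  have hm : AEStronglyMeasurable (fun s : ℝ => s ^ (-δ) * (1 - Real.cos s))
      (volume.restrict (Ioi 0)) := by
    apply Measurable.aestronglyMeasurable
    fun_prop
  have h0 : 0 ≤ᵐ[volume.restrict (Ioi 0)] (fun s : ℝ => s ^ (-δ) * (1 - Real.cos s)) := by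
    filter_upwards [ae_restrict_mem measurableSet_Ioi] with s hs
    exact mul_nonneg (Real.rpow_nonneg (le_of_lt hs) _) (by linarith [Real.cos_le_one s])
  constructor
  · refine (lintegral_ofReal_ne_top_iff_integrable hm h0).1 ?_
    intro h
    rw [h, ENNReal.mul_top (by simpa using hG)] at key
    exact ENNReal.ofReal_ne_top key.symm
  · rw [integral_eq_lintegral_of_nonneg_ae h0 hm]
    have k2 := congrArg ENNReal.toReal key
    rw [ENNReal.toReal_mul, ENNReal.toReal_ofReal hG.le, ENNReal.toReal_ofReal (by positivity)]
      at k2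
    set L := (∫⁻ s in Ioi (0:ℝ), ENNReal.ofReal (s ^ (-δ) * (1 - Real.cos s))).toReal
    have d := Real.Gamma_mul_Gamma_add_half (δ / 2)
    rw [show δ / 2 + 1 / 2 = (δ - 1) / 2 + 1 by ring, Real.Gamma_add_one (by linarith),
      show 2 * (δ / 2) = δ by ring] at d
    rw [eq_div_iff hG3.ne']
    apply mul_left_cancel₀ hG.ne'
    linear_combination (δ - 1) * Real.Gamma (δ / 2) * k2 + Real.Gamma ((3 - δ) / 2) * d

/-- derivative of `r * dagum lam δ r` -/
noncomputable def dg (lam δ r : ℝ) : ℝ :=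
  1 - (r ^ δ / (1 + r ^ δ)) ^ lam - lam * δ * (r ^ δ / (1 + r ^ δ)) ^ lam / (1 + r ^ δ)

lemma dg_deriv (lam δ r : ℝ) (hr : 0 < r) :
    HasDerivAt (fun r => r * dagum lam δ r) (dg lam δ r) r := by
  unfold dagum dg
  have hx : 0 < r ^ δ := by positivity
  have h1 : HasDerivAt (fun r : ℝ => r ^ δ) (δ * r ^ (δ - 1)) r :=
    Real.hasDerivAt_rpow_const (Or.inl hr.ne')
  have h2 := h1.div (h1.const_add 1) (by positivity)
  have h3 := h2.rpow_const (p := lam) (Or.inl (by simp only [Pi.div_apply]; positivity))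
  have h4 := (hasDerivAt_id r).mul (h3.const_sub 1)
  refine h4.congr_deriv ?_
  simp only [Pi.div_apply, id]
  rw [Real.rpow_sub_one (by positivity) lam, Real.rpow_sub_one hr.ne']
  field_simp
  ring

lemma one_sub_rpow_le (lam y : ℝ) (hl : 0 < lam) (h0 : 0 ≤ y) (h1 : y ≤ 1) :
    1 - (1 - y) ^ lam ≤ (1 + lam) * y := by
  rcases le_total 1 lam with h | h
  · have := one_add_mul_self_le_rpow_one_add (s := -y) (by linarith) h
    rw [← sub_eq_add_neg] at this
    nlinarith
  · have := Real.rpow_le_rpow_of_exponent_ge' (x := 1 - y) (by linarith) (by linarith) hl.le h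
    rw [Real.rpow_one] at this
    nlinarith

lemma dagum_bound (lam δ r : ℝ) (hl : 0 < lam) (hr : 0 < r) :
    0 ≤ dagum lam δ r ∧ dagum lam δ r ≤ (1 + lam) * r ^ (-δ) := by
  unfold dagum
  have hx : 0 < r ^ δ := by positivity
  have hq : r ^ δ / (1 + r ^ δ) = 1 - 1 / (1 + r ^ δ) := by field_simp; ring
  have hy1 : 1 / (1 + r ^ δ) ≤ 1 := by rw [div_le_one (by positivity)]; linarith
  have hy0 : 0 ≤ 1 / (1 + r ^ δ) := by positivity
  have hy2 : 1 / (1 + r ^ δ) ≤ r ^ (-δ) := by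
    rw [Real.rpow_neg hr.le, ← one_div]
    apply one_div_le_one_div_of_le hx; linarith
  constructor
  · have := Real.rpow_le_one (x := r ^ δ / (1 + r ^ δ)) (z := lam) (by positivity)
      (by rw [hq]; linarith) hl.le
    linarith
  · rw [hq]
    refine (one_sub_rpow_le lam _ hl hy0 hy1).trans ?_
    gcongr

lemma dg_bound (lam δ r : ℝ) (hl : 0 < lam) (hδ : 0 < δ) (hr : 0 < r) :
    |dg lam δ r| ≤ (1 + lam + lam * δ) * r ^ (-δ) := by
  have hb := dagum_bound lam δ r hl hr
  have e : dg lam δ r = dagum lam δ r - 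
    lam * δ * (r ^ δ / (1 + r ^ δ)) ^ lam * (1 / (1 + r ^ δ)) := by
    unfold dg dagum; ring
  have hx : 0 < r ^ δ := by positivity
  have hy2 : 1 / (1 + r ^ δ) ≤ r ^ (-δ) := by
    rw [Real.rpow_neg hr.le, ← one_div]
    apply one_div_le_one_div_of_le hx; linarith
  have hq0 : 0 ≤ (r ^ δ / (1 + r ^ δ)) ^ lam := by positivity
  have hq1 : (r ^ δ / (1 + r ^ δ)) ^ lam ≤ 1 := by
    have := hb.1
    unfold dagum at this
    linarith
  rw [e]
  refine (abs_sub _ _).trans ?_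
  rw [abs_of_nonneg hb.1, abs_of_nonneg (by positivity)]
  have : lam * δ * (r ^ δ / (1 + r ^ δ)) ^ lam * (1 / (1 + r ^ δ)) ≤ lam * δ * 1 * r ^ (-δ) := by
    gcongr
  linarith [hb.2]

lemma dg_lim (lam δ : ℝ) (hδ : 0 < δ) :
    Tendsto (fun r => r ^ δ * dg lam δ r) atTop (nhds (lam - lam * δ)) := by
  have hxT : Tendsto (fun r : ℝ => 1 + r ^ δ) atTop atTop :=
    tendsto_atTop_add_const_left _ _ (tendsto_rpow_atTop hδ)
  have hqe : ∀ r : ℝ, 0 < r → r ^ δ / (1 + r ^ δ) = 1 - (1 + r ^ δ)⁻¹ := by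
    intro r hr
    have : 0 < r ^ δ := by positivity
    field_simp; ring
  have hq : Tendsto (fun r : ℝ => r ^ δ / (1 + r ^ δ)) atTop (nhds 1) := by
    have := (tendsto_inv_atTop_zero.comp hxT).const_sub 1
    rw [sub_zero] at this
    refine this.congr' ?_
    filter_upwards [eventually_gt_atTop 0] with r hr using (hqe r hr).symm
  have hqn : Tendsto (fun r : ℝ => r ^ δ / (1 + r ^ δ)) atTop (nhdsWithin 1 {1}ᶜ) := by
    refine tendsto_nhdsWithin_iff.2 ⟨hq, ?_⟩
    filter_upwards [eventually_gt_atTop 0] with r hr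
    have : 0 < (1 + r ^ δ)⁻¹ := by positivity
    rw [hqe r hr]
    simp only [mem_compl_iff, mem_singleton_iff]
    intro h; linarith
  have hs : Tendsto (slope (fun q : ℝ => q ^ lam) 1) (nhdsWithin 1 {1}ᶜ) (nhds lam) := by
    have := Real.hasDerivAt_rpow_const (x := 1) (p := lam) (Or.inl one_ne_zero)
    rw [Real.one_rpow, mul_one] at this
    exact hasDerivAt_iff_tendsto_slope.1 this
  have hp : Tendsto (fun r : ℝ => (r ^ δ / (1 + r ^ δ)) ^ lam) atTop (nhds 1) := by
    have := hq.rpow_const (p := lam) (Or.inl one_ne_zero)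
    rwa [Real.one_rpow] at this
  have := (hq.mul (hs.comp hqn)).sub ((hp.const_mul (lam * δ)).mul hq)
  rw [one_mul, mul_one, mul_one] at this
  refine this.congr' ?_
  filter_upwards [eventually_gt_atTop 0] with r hr
  have hx : 0 < r ^ δ := by positivity
  simp only [Function.comp, slope, vsub_eq_sub, smul_eq_mul, Real.one_rpow, dg]
  rw [show r ^ δ / (1 + r ^ δ) - 1 = - (1 + r ^ δ)⁻¹ by rw [hqe r hr]; ring, inv_neg, inv_inv]
  field_simp
  ring

lemma dagum_cont (lam δ : ℝ) (hl : 0 < lam) (hδ : 0 < δ) :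
    ContinuousOn (fun r => dagum lam δ r) (Ici 0) ∧ ContinuousOn (fun r => dg lam δ r) (Ici 0) := by
  have hx : ContinuousOn (fun r : ℝ => r ^ δ) (Ici 0) :=
    (Real.continuous_rpow_const hδ.le).continuousOn
  have hn : ∀ r ∈ Ici (0:ℝ), 1 + r ^ δ ≠ 0 := by
    intro r hr
    have : 0 ≤ r ^ δ := Real.rpow_nonneg hr _
    linarith
  have hq : ContinuousOn (fun r : ℝ => (r ^ δ / (1 + r ^ δ)) ^ lam) (Ici 0) :=
    (hx.div (continuousOn_const.add hx) hn).rpow_const (fun _ _ => Or.inr hl.le)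
  refine ⟨continuousOn_const.sub hq, ?_⟩
  exact (continuousOn_const.sub hq).sub
    ((continuousOn_const.mul hq).div (continuousOn_const.add hx) hn)

lemma dg_int (lam δ z : ℝ) (hl : 0 < lam) (h1 : 1 < δ) (h2 : δ < 3) (hz : 0 < z) :
    IntegrableOn (fun r => dg lam δ r * (1 - Real.cos (z * r))) (Ioi 0) := by
  have hJ := (J_int δ h1 h2).1
  have hJ2 : IntegrableOn (fun r : ℝ => (z * r) ^ (-δ) * (1 - Real.cos (z * r))) (Ioi 0) := by
    have := (integrableOn_Ioi_comp_mul_left_iff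
      (fun s : ℝ => s ^ (-δ) * (1 - Real.cos s)) 0 hz).2 (by simpa using hJ)
    exact this
  refine Integrable.mono' (hJ2.const_mul ((1 + lam + lam * δ) * z ^ δ)) ?_ ?_
  · refine ContinuousOn.aestronglyMeasurable ?_ measurableSet_Ioi
    exact ((dagum_cont lam δ hl (by linarith)).2.mono Ioi_subset_Ici_self).mul (by fun_prop)
  · filter_upwards [ae_restrict_mem measurableSet_Ioi] with r hr
    have hr : 0 < r := hr
    have hc : 0 ≤ 1 - Real.cos (z * r) := by linarith [Real.cos_le_one (z * r)]
    rw [norm_mul, Real.norm_of_nonneg hc, Real.norm_eq_abs]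
    have hb := dg_bound lam δ r hl (by linarith) hr
    rw [Real.mul_rpow hz.le hr.le]
    have hzz : z ^ δ * z ^ (-δ) = 1 := by rw [← Real.rpow_add hz]; simp
    calc _ ≤ (1 + lam + lam * δ) * r ^ (-δ) * (1 - Real.cos (z * r)) := by gcongr
      _ = _ := by linear_combination
                    -(1 + lam + lam * δ) * r ^ (-δ) * (1 - Real.cos (z * r)) * hzz

lemma by_parts (lam δ z T : ℝ) (hl : 0 < lam) (hδ : 0 < δ) (hz : 0 < z) (hT : 0 ≤ T) :
    ∫ r in (0 : ℝ)..T, r * Real.sin (z * r) * dagum lam δ r =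
      T * dagum lam δ T * (1 - Real.cos (z * T)) / z -
        (1 / z) * ∫ r in (0:ℝ)..T, dg lam δ r * (1 - Real.cos (z * r)) := by
  obtain ⟨c1, c2⟩ := dagum_cont lam δ hl hδ
  have hs : Icc 0 T ⊆ Ici (0:ℝ) := fun x hx => hx.1
  have i1 : IntervalIntegrable (fun r => r * Real.sin (z * r) * dagum lam δ r) volume 0 T := by
    apply ContinuousOn.intervalIntegrable
    rw [uIcc_of_le hT]
    exact ContinuousOn.mul (by fun_prop) (c1.mono hs)
  have i2 : IntervalIntegrable (fun r => (1 / z) * (dg lam δ r * (1 - Real.cos (z * r))))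
      volume 0 T := by
    apply ContinuousOn.intervalIntegrable
    rw [uIcc_of_le hT]
    exact ContinuousOn.mul (by fun_prop) ((c2.mono hs).mul (by fun_prop))
  have := intervalIntegral.integral_eq_sub_of_hasDerivAt_of_le hT
    (f := fun r => r * dagum lam δ r * (1 - Real.cos (z * r)) / z)
    (f' := fun r => r * Real.sin (z * r) * dagum lam δ r +
      (1 / z) * (dg lam δ r * (1 - Real.cos (z * r)))) ?_ ?_ (i1.add i2)
  · rw [intervalIntegral.integral_add i1 i2, intervalIntegral.integral_const_mul] at this
    simp only [zero_mul, zero_div, sub_zero] at this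
    linarith
  · refine ContinuousOn.div_const (ContinuousOn.mul ?_ (by fun_prop)) _
    exact continuousOn_id.mul (c1.mono hs)
  · intro r hr
    have hd := dg_deriv lam δ r hr.1
    have hc : HasDerivAt (fun r => 1 - Real.cos (z * r)) (-(-Real.sin (z * r) * (z * 1))) r :=
      (((hasDerivAt_id r).const_mul z).cos).const_sub 1
    refine ((hd.mul hc).div_const z).congr_deriv ?_
    field_simp
    ring

lemma bdry (lam δ z : ℝ) (hl : 0 < lam) (h1 : 1 < δ) :
    Tendsto (fun T => T * dagum lam δ T * (1 - Real.cos (z * T)) / z) atTop (nhds 0) := by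
  have h0 : Tendsto (fun T => T * dagum lam δ T) atTop (nhds 0) := by
    have hp := (tendsto_rpow_neg_atTop (y := δ - 1) (by linarith)).const_mul (1 + lam)
    rw [mul_zero] at hp
    refine squeeze_zero' ?_ ?_ hp
    · filter_upwards [eventually_gt_atTop 0] with r hr
      exact mul_nonneg hr.le (dagum_bound lam δ r hl hr).1
    · filter_upwards [eventually_gt_atTop 0] with r hr
      have := mul_le_mul_of_nonneg_left (dagum_bound lam δ r hl hr).2 hr.le
      refine this.trans (le_of_eq ?_)
      rw [show -(δ - 1) = -δ + 1 by ring, Real.rpow_add_one hr.ne']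
      ring
  have hb := h0.zero_mul_isBoundedUnder_le (g := fun T => 1 - Real.cos (z * T)) ?_
  · simpa using hb.div_const z
  · refine isBoundedUnder_of ⟨2, fun s => ?_⟩
    simp only [Function.comp, Real.norm_eq_abs]
    rw [abs_le]
    constructor <;> linarith [Real.cos_le_one (z * s), Real.neg_one_le_cos (z * s)]

/-- Low-frequency behaviour in dimension `d = 3` for `δ ∈ (1,2)`, `δλ ∈ (0,2]`:
the improper integral `\widehat D_3(z) = (1/(2π²z)) lim_{T→∞} ∫₀^T r sin(zr) D_{λ,δ}(r) dr`
exists for every `z > 0`, and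
`z^{3-δ} \widehat D_3(z) → 2^{-δ} λ Γ((3-δ)/2)/(π^{3/2} Γ(δ/2))` as `z → 0⁺`. -/
theorem dagum_low_frequency_dim_three (δ lam : ℝ) (hδ1 : 1 < δ) (hδ2 : δ < 2)
    (hlam : 0 < lam) (hdl0 : 0 < δ * lam) (hdl2 : δ * lam ≤ 2) :
    ∃ Dh : ℝ → ℝ,
      (∀ z : ℝ, 0 < z →
        Tendsto (fun T : ℝ =>
            (1 / (2 * Real.pi ^ 2 * z)) * ∫ r in (0 : ℝ)..T, r * Real.sin (z * r) * dagum lam δ r)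
          atTop (nhds (Dh z))) ∧
      Tendsto (fun z : ℝ => z ^ (3 - δ) * Dh z) (nhdsWithin 0 (Ioi 0))
        (nhds (2 ^ (-δ) * lam * Real.Gamma ((3 - δ) / 2) /
          (Real.pi ^ ((3 : ℝ) / 2) * Real.Gamma (δ / 2)))) := by
  have hδ0 : 0 < δ := by linarith
  refine ⟨fun z => (1 / (2 * Real.pi ^ 2 * z)) *
    (0 - (1 / z) * ∫ r in Ioi (0:ℝ), dg lam δ r * (1 - Real.cos (z * r))), ?_, ?_⟩
  · intro z hz
    refine Tendsto.const_mul _ ?_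
    have := (bdry lam δ z hlam hδ1).sub ((intervalIntegral_tendsto_integral_Ioi 0
      (dg_int lam δ z hlam hδ1 (by linarith) hz) tendsto_id).const_mul (1 / z))
    refine this.congr' ?_
    filter_upwards [eventually_ge_atTop 0] with T hT
    exact (by_parts lam δ z T hlam hδ0 hz hT).symm
  · obtain ⟨Ji, Jv⟩ := J_int δ hδ1 (by linarith)
    have hG3 := Real.Gamma_pos_of_pos (by linarith : 0 < δ / 2)
    have hdom : Tendsto (fun z : ℝ => ∫ s in Ioi (0:ℝ),
        z ^ (-δ) * dg lam δ (z⁻¹ * s) * (1 - Real.cos s)) (nhdsWithin 0 (Ioi 0))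
        (nhds (∫ s in Ioi (0:ℝ), (lam - lam * δ) * (s ^ (-δ) * (1 - Real.cos s)))) := by
      refine MeasureTheory.tendsto_integral_filter_of_dominated_convergence
        (fun s => (1 + lam + lam * δ) * (s ^ (-δ) * (1 - Real.cos s))) ?_ ?_ 
        (Ji.const_mul _) ?_
      · filter_upwards [self_mem_nhdsWithin] with z hz
        apply Measurable.aestronglyMeasurable
        unfold dg
        fun_prop
      · filter_upwards [self_mem_nhdsWithin] with z hz
        filter_upwards [ae_restrict_mem measurableSet_Ioi] with s hs
        have hz : 0 < z := hz
        have hs : 0 < s := hs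
        have hc : 0 ≤ 1 - Real.cos s := by linarith [Real.cos_le_one s]
        have hb := dg_bound lam δ (z⁻¹ * s) hlam hδ0 (by positivity)
        rw [norm_mul, norm_mul, Real.norm_of_nonneg hc, Real.norm_eq_abs (dg _ _ _),
          Real.norm_of_nonneg (by positivity : 0 ≤ z ^ (-δ)), ← mul_assoc]
        refine mul_le_mul_of_nonneg_right ?_ hc
        calc _ ≤ z ^ (-δ) * ((1 + lam + lam * δ) * (z⁻¹ * s) ^ (-δ)) := by gcongr
          _ = _ := by
            rw [mul_left_comm, ← Real.mul_rpow hz.le (by positivity), mul_inv_cancel_left₀ hz.ne']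
      · filter_upwards [ae_restrict_mem measurableSet_Ioi] with s hs
        have hs : 0 < s := hs
        have ht : Tendsto (fun z : ℝ => z⁻¹ * s) (nhdsWithin 0 (Ioi 0)) atTop :=
          tendsto_inv_nhdsGT_zero.atTop_mul_const hs
        have := ((dg_lim lam δ hδ0).comp ht).mul_const (s ^ (-δ) * (1 - Real.cos s))
        refine this.congr' ?_
        filter_upwards [self_mem_nhdsWithin] with z hz
        have hz : 0 < z := hz
        simp only [Function.comp]
        have : (z⁻¹ * s) ^ δ * s ^ (-δ) = z ^ (-δ) := by
          rw [Real.mul_rpow (by positivity) hs.le, mul_assoc, ← Real.rpow_add hs,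
            add_neg_cancel, Real.rpow_zero, mul_one, Real.inv_rpow hz.le, Real.rpow_neg hz.le]
        rw [← this]
        ring
    have hfin := hdom.const_mul (-(1 / (2 * Real.pi ^ 2)))
    rw [MeasureTheory.integral_const_mul] at hfin
    have hval : -(1 / (2 * Real.pi ^ 2)) * ((lam - lam * δ) *
        ∫ s in Ioi (0:ℝ), s ^ (-δ) * (1 - Real.cos s)) =
        2 ^ (-δ) * lam * Real.Gamma ((3 - δ) / 2) /
          (Real.pi ^ ((3 : ℝ) / 2) * Real.Gamma (δ / 2)) := by
      have e : -(1 / (2 * Real.pi ^ 2)) * ((lam - lam * δ) *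
        ∫ s in Ioi (0:ℝ), s ^ (-δ) * (1 - Real.cos s)) = lam / (2 * Real.pi ^ 2) * ((δ - 1) *
        ∫ s in Ioi (0:ℝ), s ^ (-δ) * (1 - Real.cos s)) := by ring
      have hpi := Real.pi_pos
      have hp2 : Real.pi ^ 2 = Real.pi ^ ((3:ℝ) / 2) * √Real.pi := by
        rw [Real.sqrt_eq_rpow, ← Real.rpow_add hpi, ← Real.rpow_two]
        norm_num
      have h22 : (2:ℝ) ^ (1 - δ) = 2 * 2 ^ (-δ) := by
        rw [sub_eq_add_neg, Real.rpow_add two_pos, Real.rpow_one]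
      have : 0 < √Real.pi := Real.sqrt_pos.2 hpi
      rw [e, Jv, hp2, h22]
      field_simp
    rw [hval] at hfin
    refine hfin.congr' ?_
    filter_upwards [self_mem_nhdsWithin] with z hz
    have hz : 0 < z := hz
    have hsub := integral_comp_mul_left_Ioi
      (fun s => dg lam δ (z⁻¹ * s) * (1 - Real.cos s)) 0 hz
    simp only [inv_mul_cancel_left₀ hz.ne', mul_zero, smul_eq_mul] at hsub
    rw [hsub]
    simp only [mul_assoc (z ^ (-δ))]
    rw [MeasureTheory.integral_const_mul, show 3 - δ = -δ + 3 by ring, Real.rpow_add hz,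
      show (3:ℝ) = ((3:ℕ):ℝ) by norm_num, Real.rpow_natCast]
    field_simp
    ring
end
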